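/- arXiv:1502.06875 — 5 statements merged into one kernel-verified Lean document; each statement's English description precedes it below -/
import Mathlib

section
/- Let ⟨V,E,d⟩ be a multi-weighted game graph in which every cycle contains at least one Player-1 vertex. If Player 1 has a winning strategy σ in the first-cycle bounding game G⟨V,E,d⟩ from a vertex v₀, then Player 1 has a (finite-memory) winning strategy in the bounding game Γ⟨V,E,d⟩ from v₀ which ensures that every consistent play ρ satisfies ‖w(ρ|ₙ)‖ ≤ (4|V|·‖E‖)^{2(d+2)³} for all n. -/
/-! Multi-weighted game graphs, plays, strategies, energy and bounding games. -/

/-- A configuration: a vertex together with an accumulated weight vector. -/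
abbrev Conf (V : Type) (d : ℕ) := V × (Fin d → ℤ)

/-- A multi-weighted game graph: Player-1 vertices, a finite set of
weighted edges, such that every vertex has an outgoing edge. -/
structure MWG (V : Type) [Fintype V] [DecidableEq V] (d : ℕ) where
  P1 : Finset V
  E : Set (V × (Fin d → ℤ) × V)
  finE : E.Finite
  serial : ∀ v : V, ∃ u v', (v, u, v') ∈ E

variable {V : Type} [Fintype V] [DecidableEq V] {d : ℕ}

/-- The norm of an integer vector: max of absolute values of entries. -/
def vnorm {d : ℕ} (u : Fin d → ℤ) : ℕ := Finset.univ.sup fun i => (u i).natAbs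

/-- `‖E‖`: the maximal norm of an edge label. -/
noncomputable def enorm (G : MWG V d) : ℕ := G.finE.toFinset.sup fun e => vnorm e.2.1

/-- One step along an edge of the graph. -/
def Step (G : MWG V d) (c c' : Conf V d) : Prop := (c.1, c'.2 - c.2, c'.1) ∈ G.E

/-- A finite path, as a list of configurations. -/
def IsPathL (G : MWG V d) (π : List (Conf V d)) : Prop := π.Chain' (Step G)

/-- An infinite play from `v₀`, starting with weight `0`. -/
def IsPlay (G : MWG V d) (v₀ : V) (ρ : ℕ → Conf V d) : Prop :=
  ρ 0 = (v₀, 0) ∧ ∀ n, Step G (ρ n) (ρ (n+1))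

/-- A strategy: given the history (past configurations) and the current
configuration, choose a weighted move. -/
abbrev Strat (V : Type) (d : ℕ) := List (Conf V d) → Conf V d → (Fin d → ℤ) × V

/-- A valid strategy for the player owning the vertices in `P` always
chooses an edge of the game graph from the current vertex. -/
def ValidStrat (G : MWG V d) (P : Set V) (σ : Strat V d) : Prop :=
  ∀ h c, IsPathL G (h ++ [c]) → c.1 ∈ P → (c.1, (σ h c).1, (σ h c).2) ∈ G.E

/-- The history of a play before instant `n`. -/
def hist (ρ : ℕ → Conf V d) (n : ℕ) : List (Conf V d) := (List.range n).map ρ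

/-- A play is consistent with strategy `σ` of the player owning `P` if at
every configuration with vertex in `P` the next configuration is obtained
by playing the edge prescribed by `σ`. -/
def Consistent (P : Set V) (σ : Strat V d) (ρ : ℕ → Conf V d) : Prop :=
  ∀ n, (ρ n).1 ∈ P →
    ρ (n+1) = ((σ (hist ρ n) (ρ n)).2, (ρ n).2 + (σ (hist ρ n) (ρ n)).1)

/-- Player owning `P` wins the game with payoff `Win` from `v₀`. -/
def Wins (G : MWG V d) (P : Set V) (Win : (ℕ → Conf V d) → Prop) (v₀ : V) : Prop :=
  ∃ σ : Strat V d, ValidStrat G P σ ∧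
    ∀ ρ, IsPlay G v₀ ρ → Consistent P σ ρ → Win ρ

/-- Player 1's winning condition in the energy game with initial credit `b`. -/
def EnergyOK (b : Fin d → ℕ) (ρ : ℕ → Conf V d) : Prop :=
  ∀ n i, 0 ≤ (b i : ℤ) + (ρ n).2 i

/-- Player 1's winning condition in the bounding game: the norms of the
total weights of all the finite prefixes are bounded. -/
def BoundedPlay (ρ : ℕ → Conf V d) : Prop :=
  ∃ B : ℕ, ∀ n, vnorm ((ρ n).2) ≤ B

def P1WinsEnergy (G : MWG V d) (b : Fin d → ℕ) (v₀ : V) : Prop :=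
  Wins G (G.P1 : Set V) (EnergyOK b) v₀

def P2WinsEnergy (G : MWG V d) (b : Fin d → ℕ) (v₀ : V) : Prop :=
  Wins G {v | v ∉ G.P1} (fun ρ => ¬ EnergyOK b ρ) v₀

def P1WinsBounding (G : MWG V d) (v₀ : V) : Prop :=
  Wins G (G.P1 : Set V) BoundedPlay v₀

def P2WinsBounding (G : MWG V d) (v₀ : V) : Prop :=
  Wins G {v | v ∉ G.P1} (fun ρ => ¬ BoundedPlay ρ) v₀

/-- The negative unit vector `-e i`. -/
def negUnit (d : ℕ) (i : Fin d) : Fin d → ℤ := fun j => if j = i then -1 else 0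

/-- The lossy game graph: add a self-loop labelled `-e i` at each Player-1
vertex, for every coordinate `i`. -/
def lossy (G : MWG V d) : MWG V d where
  P1 := G.P1
  E := G.E ∪ (fun p : V × Fin d => (p.1, negUnit d p.2, p.1)) '' {p | p.1 ∈ G.P1}
  finE := G.finE.union ((Set.toFinite _).image _)
  serial := fun v => by
    obtain ⟨u, v', h⟩ := G.serial v
    exact ⟨u, v', Set.mem_union_left _ h⟩

/-- Every cycle of the game graph contains at least one Player-1 vertex. -/
def EveryCycleHasP1 (G : MWG V d) : Prop :=
  ∀ (n : ℕ) (c : ℕ → Conf V d), 0 < n → (∀ j < n, Step G (c j) (c (j+1))) →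
    (c 0).1 = (c n).1 → ∃ j < n, (c j).1 ∈ G.P1

/-! Perfect half-spaces in `ℚ^d`. -/

/-- Vectors of `ℚ^d`. -/
abbrev QVec (d : ℕ) := Fin d → ℚ

/-- The entries of `v` all have absolute value at most `M`. -/
def QNormLe (M : ℕ) {d : ℕ} (v : QVec d) : Prop := ∀ i, |v i| ≤ (M : ℚ)

/-- A subspace of `ℚ^d` is `M`-generated if it is spanned by a set of vectors
of norm at most `M`. -/
def MGenSpace (M : ℕ) {d : ℕ} (S : Submodule ℚ (QVec d)) : Prop :=
  ∃ B : Set (QVec d), (∀ v ∈ B, QNormLe M v) ∧ Submodule.span ℚ B = S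

/-- `H` is an open half-space of the subspace `S`: the set of points of `S` on
which some linear functional, not vanishing identically on `S`, is negative. -/
def IsOpenHalfOf {d : ℕ} (S : Submodule ℚ (QVec d)) (H : Set (QVec d)) : Prop :=
  ∃ f : QVec d →ₗ[ℚ] ℚ, (∃ v ∈ S, f v ≠ 0) ∧ H = {v | v ∈ S ∧ f v < 0}

/-- `H` is an `M`-generated open half-space of the subspace `S`: moreover its
boundary is the span of a set of vectors of norm at most `M`. -/
def IsMGenHalfOf (M : ℕ) {d : ℕ} (S : Submodule ℚ (QVec d)) (H : Set (QVec d)) : Prop :=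
  ∃ f : QVec d →ₗ[ℚ] ℚ, (∃ v ∈ S, f v ≠ 0) ∧ H = {v | v ∈ S ∧ f v < 0} ∧
    ∃ B : Set (QVec d), (∀ v ∈ B, QNormLe M v) ∧
      (Submodule.span ℚ B : Set (QVec d)) = {v | v ∈ S ∧ f v = 0}

/-- Auxiliary chain of subspaces: `chainAux d f i` is the subspace obtained
from `ℚ^d` by intersecting with the kernels of `f d, f (d-1), …, f (d-i+1)`. -/
def chainAux (d : ℕ) (f : ℕ → (QVec d →ₗ[ℚ] ℚ)) : ℕ → Submodule ℚ (QVec d)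
  | 0 => ⊤
  | (i+1) => chainAux d f i ⊓ LinearMap.ker (f (d - i))

/-- `chainSub d f j` is the subspace on which the component half-space `H_j`
lives: `chainSub d f d = ℚ^d` and `chainSub d f j = chainSub d f (j+1) ∩ ker (f (j+1))`. -/
def chainSub (d : ℕ) (f : ℕ → (QVec d →ₗ[ℚ] ℚ)) (j : ℕ) : Submodule ℚ (QVec d) :=
  chainAux d f (d - j)

/-- The component open half-space `H_j = {v ∈ S_j | f j v < 0}`. -/
def halfComp (d : ℕ) (f : ℕ → (QVec d →ₗ[ℚ] ℚ)) (j : ℕ) : Set (QVec d) :=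
  {v | v ∈ chainSub d f j ∧ f j v < 0}

/-- The boundary of the component half-space `H_j`. -/
def bdComp (d : ℕ) (f : ℕ → (QVec d →ₗ[ℚ] ℚ)) (j : ℕ) : Set (QVec d) :=
  {v | v ∈ chainSub d f j ∧ f j v = 0}

/-- The chain condition: for `k ≤ j ≤ d`, the functional `f j` does not vanish
identically on `S_j`, so that each `H_j` is a `j`-dimensional open half-space
of `S_j`. -/
def ChainCond (d k : ℕ) (f : ℕ → (QVec d →ₗ[ℚ] ℚ)) : Prop :=
  ∀ j, k ≤ j → j ≤ d → ∃ v ∈ chainSub d f j, f j v ≠ 0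

/-- The union `H_d ∪ ⋯ ∪ H_k`. -/
def PPHSSet (d k : ℕ) (f : ℕ → (QVec d →ₗ[ℚ] ℚ)) : Set (QVec d) :=
  ⋃ j ∈ Set.Icc k d, halfComp d f j

/-- `A` is a `k`-perfect half-space of `ℚ^d` (for `k = d+1`, the empty set). -/
def IsPPHS (d k : ℕ) (A : Set (QVec d)) : Prop :=
  1 ≤ k ∧ k ≤ d + 1 ∧ ∃ f, ChainCond d k f ∧ A = PPHSSet d k f

/-- `A` is a partially-perfect half-space of `ℚ^d`. -/
def IsPartialPHS (d : ℕ) (A : Set (QVec d)) : Prop := ∃ k, IsPPHS d k A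

/-- `A` is an `M`-generated `k`-perfect half-space of `ℚ^d`: each component
open half-space has an `M`-generated boundary. -/
def IsMGenPPHS (M d k : ℕ) (A : Set (QVec d)) : Prop :=
  1 ≤ k ∧ k ≤ d + 1 ∧ ∃ f, ChainCond d k f ∧
    (∀ j, k ≤ j → j ≤ d → ∃ B : Set (QVec d), (∀ v ∈ B, QNormLe M v) ∧
      (Submodule.span ℚ B : Set (QVec d)) = bdComp d f j) ∧
    A = PPHSSet d k f

/-- `A` is an `M`-generated perfect half-space of `ℚ^d`. -/
def IsMGenPerfectHS (M d : ℕ) (A : Set (QVec d)) : Prop := IsMGenPPHS M d 1 A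

/-! The first-cycle bounding game `G⟨V,E,d⟩`. -/

/-- A colour: a set of vectors of `ℚ^d` (intended: a perfect half-space). -/
abbrev Colour (d : ℕ) := Set (QVec d)

/-- A coloured history: past configurations, each together with the colour
chosen by Player 2 at it if it is a Player-1 vertex. -/
abbrev CHist (V : Type) (d : ℕ) := List (Conf V d × Option (Colour d))

variable {V : Type} [Fintype V] [DecidableEq V] {d : ℕ}

/-- Record a colour at a configuration: only Player-1 vertices are coloured. -/
def colOpt (G : MWG V d) (c : Conf V d) (H : Colour d) : Option (Colour d) :=
  if c.1 ∈ G.P1 then some H else none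

/-- The coloured history before instant `n` of a play `ρ` with colour
choices `χ`. -/
def chist (G : MWG V d) (ρ : ℕ → Conf V d) (χ : ℕ → Colour d) (n : ℕ) : CHist V d :=
  (List.range n).map fun j => (ρ j, colOpt G (ρ j) (χ j))

/-- A strategy of Player 2 in the first-cycle bounding game: at Player-1
vertices choose a colour, at Player-2 vertices choose a move. -/
structure FCStratP2 (V : Type) (d : ℕ) where
  col : CHist V d → Conf V d → Colour d
  edge : CHist V d → Conf V d → (Fin d → ℤ) × V

/-- A strategy of Player 1 in the first-cycle bounding game: at Player-1
vertices, given moreover the colour just chosen by Player 2, choose a move. -/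
abbrev FCStratP1 (V : Type) (d : ℕ) :=
  CHist V d → Conf V d → Colour d → (Fin d → ℤ) × V

/-- Validity of a Player 2 first-cycle strategy: colours are
`|V|·‖E‖`-generated perfect half-spaces of `ℚ^d`, and moves at Player-2
vertices follow edges of the graph. -/
def ValidFCP2 (G : MWG V d) (σ : FCStratP2 V d) : Prop :=
  (∀ h c, c.1 ∈ G.P1 →
    IsMGenPerfectHS (Fintype.card V * enorm G) d (σ.col h c)) ∧
  (∀ h c, c.1 ∉ G.P1 → (c.1, (σ.edge h c).1, (σ.edge h c).2) ∈ G.E)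

/-- Validity of a Player 1 first-cycle strategy: moves at Player-1 vertices
follow edges of the graph. -/
def ValidFCP1 (G : MWG V d) (τ : FCStratP1 V d) : Prop :=
  ∀ h c H, c.1 ∈ G.P1 → (c.1, (τ h c H).1, (τ h c H).2) ∈ G.E

/-- The colours chosen along a play are legal moves of the first-cycle game:
at every Player-1 vertex, a `|V|·‖E‖`-generated perfect half-space. -/
def LegalCols (G : MWG V d) (ρ : ℕ → Conf V d) (χ : ℕ → Colour d) : Prop :=
  ∀ n, (ρ n).1 ∈ G.P1 → IsMGenPerfectHS (Fintype.card V * enorm G) d (χ n)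

/-- Consistency of a coloured play with a Player 2 first-cycle strategy. -/
def FCConsistentP2 (G : MWG V d) (σ : FCStratP2 V d)
    (ρ : ℕ → Conf V d) (χ : ℕ → Colour d) : Prop :=
  ∀ n, ((ρ n).1 ∈ G.P1 → χ n = σ.col (chist G ρ χ n) (ρ n)) ∧
    ((ρ n).1 ∉ G.P1 →
      ρ (n+1) = ((σ.edge (chist G ρ χ n) (ρ n)).2,
                 (ρ n).2 + (σ.edge (chist G ρ χ n) (ρ n)).1))

/-- Consistency of a coloured play with a Player 1 first-cycle strategy. -/
def FCConsistentP1 (G : MWG V d) (τ : FCStratP1 V d)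
    (ρ : ℕ → Conf V d) (χ : ℕ → Colour d) : Prop :=
  ∀ n, (ρ n).1 ∈ G.P1 →
    ρ (n+1) = ((τ (chist G ρ χ n) (ρ n) (χ n)).2,
               (ρ n).2 + (τ (chist G ρ χ n) (ρ n) (χ n)).1)

/-- `n₀ < n₁` witness the first time a vertex is visited twice along `ρ`,
producing the first (simple) cycle of the play. -/
def FirstRepeat (ρ : ℕ → Conf V d) (n₀ n₁ : ℕ) : Prop :=
  n₀ < n₁ ∧ (ρ n₀).1 = (ρ n₁).1 ∧ ∀ i j, i < j → j < n₁ → (ρ i).1 ≠ (ρ j).1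

/-- Cast an integer vector into `ℚ^d`. -/
def intQ {d : ℕ} (u : Fin d → ℤ) : QVec d := fun i => (u i : ℚ)

/-- Player 2 wins the first cycle (from `n₀` to `n₁`): its total weight lies
in the largest partially-perfect half-space of `ℚ^d` contained in all the
colours occurring in the cycle. -/
def CycleWinP2 (G : MWG V d) (ρ : ℕ → Conf V d) (χ : ℕ → Colour d)
    (n₀ n₁ : ℕ) : Prop :=
  ∃ A : Colour d, IsPartialPHS d A ∧
    (∀ j, n₀ ≤ j → j < n₁ → (ρ j).1 ∈ G.P1 → A ⊆ χ j) ∧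
    (∀ B : Colour d, IsPartialPHS d B →
      (∀ j, n₀ ≤ j → j < n₁ → (ρ j).1 ∈ G.P1 → B ⊆ χ j) → B ⊆ A) ∧
    intQ ((ρ n₁).2 - (ρ n₀).2) ∈ A

/-- Player 2 wins the first-cycle bounding game from `v₀`. -/
def P2WinsFC (G : MWG V d) (v₀ : V) : Prop :=
  ∃ σ : FCStratP2 V d, ValidFCP2 G σ ∧
    ∀ ρ χ, IsPlay G v₀ ρ → LegalCols G ρ χ → FCConsistentP2 G σ ρ χ →
      ∀ n₀ n₁, FirstRepeat ρ n₀ n₁ → CycleWinP2 G ρ χ n₀ n₁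

/-- Player 1 wins the first-cycle bounding game from `v₀`. -/
def P1WinsFC (G : MWG V d) (v₀ : V) : Prop :=
  ∃ τ : FCStratP1 V d, ValidFCP1 G τ ∧
    ∀ ρ χ, IsPlay G v₀ ρ → LegalCols G ρ χ → FCConsistentP1 G τ ρ χ →
      ∀ n₀ n₁, FirstRepeat ρ n₀ n₁ → ¬ CycleWinP2 G ρ χ n₀ n₁

/-- Integer vectors of norm at most `M`, seen in `ℚ^d`. -/
def SmallW (M d : ℕ) : Set (QVec d) :=
  {w | ∃ u : Fin d → ℤ, (∀ i, |u i| ≤ (M : ℤ)) ∧ w = intQ u}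

lemma smallW_finite (M d : ℕ) : (SmallW M d).Finite := by
  have : SmallW M d = intQ '' {u : Fin d → ℤ | ∀ i, |u i| ≤ (M : ℤ)} := by
    ext w; constructor
    · rintro ⟨u, hu, rfl⟩; exact ⟨u, hu, rfl⟩
    · rintro ⟨u, hu, rfl⟩; exact ⟨u, hu, rfl⟩
  rw [this]
  apply Set.Finite.image
  have h : (Set.univ.pi fun _ : Fin d => Set.Icc (-(M:ℤ)) M).Finite :=
    Set.Finite.pi' (fun _ => Set.finite_Icc _ _) |>.subset (by intro f hf i; exact hf i trivial)
  exact h.subset (fun u hu i _ => abs_le.mp (hu i))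

lemma smallW_bd {M d : ℕ} {w : QVec d} (hw : w ∈ SmallW M d) (i : Fin d) : |w i| ≤ (M : ℚ) := by
  obtain ⟨u, hu, rfl⟩ := hw
  have := hu i
  simp only [intQ]
  exact_mod_cast this

lemma smallW_span {M d : ℕ} (hM : 1 ≤ M) : Submodule.span ℚ (SmallW M d) = ⊤ := by
  rw [eq_top_iff, ← (Pi.basisFun ℚ (Fin d)).span_eq]
  apply Submodule.span_mono
  rintro _ ⟨i, rfl⟩
  refine ⟨Pi.single i 1, ?_, ?_⟩
  · intro j
    by_cases h : j = i
    · subst h; simp; omega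
    · simp [h]
  · ext j
    by_cases h : j = i
    · subst h; simp [intQ]
    · simp [h, intQ]

/-- The constant `d! M^d`. -/
def KK (M d : ℕ) : ℚ := (d.factorial : ℚ) * (M : ℚ) ^ d

lemma KK_pos {M d : ℕ} (hM : 1 ≤ M) : 0 < KK M d := by
  unfold KK
  have : (0:ℚ) < M := by exact_mod_cast hM
  have : (0:ℚ) < d.factorial := by exact_mod_cast d.factorial_pos
  positivity

lemma cramer_fin {M d : ℕ} (b : Module.Basis (Fin d) ℚ (QVec d))
    (hb : ∀ j, b j ∈ SmallW M d) (x : QVec d) (hx : ∀ i, |x i| ≤ (M : ℚ)) (j : Fin d) :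
    |b.repr x j| ≤ KK M d := by
  choose u hu hbu using hb
  let A : Matrix (Fin d) (Fin d) ℤ := Matrix.of fun i j => u j i
  let B : Matrix (Fin d) (Fin d) ℚ := Matrix.of fun i j => b j i
  have hAB : B = A.map (Int.cast) := by
    ext i j
    simp [A, B, hbu, intQ]
  have hli : IsUnit B := by
    have := b.linearIndependent
    rw [← Matrix.linearIndependent_cols_iff_isUnit]
    exact this
  have hdet : B.det ≠ 0 := by
    rw [Matrix.isUnit_iff_isUnit_det] at hli
    exact hli.ne_zero
  have hdB : B.det = (A.det : ℚ) := by
    rw [hAB]; exact (Int.cast_det A).symm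
  have h1 : 1 ≤ |B.det| := by
    rw [hdB] at hdet ⊢
    have : A.det ≠ 0 := by exact_mod_cast hdet
    exact_mod_cast Int.one_le_abs this
  have hBc : B.mulVec (fun j => b.repr x j) = x := by
    conv_rhs => rw [← b.sum_repr x]
    ext i
    simp [Matrix.mulVec, dotProduct, B, mul_comm]
  have hc : B.cramer x = B.det • (fun j => b.repr x j) := by
    rw [Matrix.cramer_eq_adjugate_mulVec]
    conv_lhs => rw [← hBc]
    rw [Matrix.mulVec_mulVec, Matrix.adjugate_mul, Matrix.smul_mulVec, Matrix.one_mulVec]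
  have h2 : (B.updateCol j x).det = B.det * b.repr x j := by
    rw [← Matrix.cramer_apply, hc]; simp
  have h3 : |(B.updateCol j x).det| ≤ KK M d := by
    have := @Matrix.det_le ℚ ℚ _ _ _ _ _ (Fin d) _ _ (B.updateCol j x) AbsoluteValue.abs (M : ℚ) ?_
    · simpa [KK] using this
    · intro i k
      by_cases hk : k = j
      · subst hk; simpa using hx i
      · have : |b k i| ≤ (M:ℚ) := smallW_bd ⟨u k, hu k, hbu k⟩ i
        simpa [Matrix.updateCol_apply, hk, B] using this
  rw [h2, abs_mul] at h3
  nlinarith [abs_nonneg (b.repr x j)]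

lemma cramer_bd {M d : ℕ} {ι : Type*} (b : Module.Basis ι ℚ (QVec d))
    (hb : ∀ j, b j ∈ SmallW M d) (x : QVec d) (hx : ∀ i, |x i| ≤ (M : ℚ)) (j : ι) :
    |b.repr x j| ≤ KK M d := by
  classical
  let e : ι ≃ Fin d := b.indexEquiv (Pi.basisFun ℚ (Fin d))
  have := cramer_fin (b.reindex e) (fun j => by simpa using hb _) x hx (e j)
  simpa using this

/-- ratio bound -/
lemma ratio_bd {M d : ℕ} (hM : 1 ≤ M) (S : Submodule ℚ (QVec d)) (A : QVec d →ₗ[ℚ] ℚ)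
    (hA : Submodule.span ℚ (SmallW M d ∩ (S ⊓ LinearMap.ker A : Submodule ℚ (QVec d)))
      = S ⊓ LinearMap.ker A)
    {w w0 : QVec d} (hw : w ∈ SmallW M d) (hwS : w ∈ S) (hw0 : w0 ∈ SmallW M d) (hw0S : w0 ∈ S)
    (hAw : A w ≠ 0) : |A w0| ≤ KK M d * |A w| := by
  obtain ⟨U, hUs, hUspan, hUli⟩ := exists_linearIndependent ℚ
    (SmallW M d ∩ (S ⊓ LinearMap.ker A : Submodule ℚ (QVec d)))
  have hli : LinearIndepOn ℚ id U := hUli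
  have hwn : w ∉ Submodule.span ℚ U := by
    rw [hUspan, hA]
    rintro ⟨-, h⟩
    exact hAw h
  have hli2 := hli.id_insert hwn
  have hsub : insert w U ⊆ SmallW M d := by
    apply Set.insert_subset hw
    exact hUs.trans Set.inter_subset_left
  let b := Module.Basis.extendLe hli2 hsub (smallW_span hM).ge
  have hb : ∀ j, b j = j.1 := fun j => by
    simp only [b, Module.Basis.coe_extendLe]
  have hwm : w ∈ hli2.extend hsub := hli2.subset_extend hsub (Set.mem_insert _ _)
  have hcr := cramer_bd b (M := M) (fun j => by rw [hb]; exact hli2.extend_subset hsub j.2) w0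
    (smallW_bd hw0) ⟨w, hwm⟩
  have hdec : w0 = (A w0 / A w) • w + (w0 - (A w0 / A w) • w) := by abel
  have hy : w0 - (A w0 / A w) • w ∈ Submodule.span ℚ U := by
    rw [hUspan, hA]
    refine ⟨S.sub_mem hw0S (S.smul_mem _ hwS), ?_⟩
    simp [hAw]
  have h0 : b.repr (w0 - (A w0 / A w) • w) ⟨w, hwm⟩ = 0 := by
    have him : U ⊆ b '' {j | j.1 ∈ U} := by
      intro u hu
      exact ⟨⟨u, hli2.subset_extend hsub (Set.mem_insert_of_mem _ hu)⟩, hu, hb _⟩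
    have := b.repr_support_subset_of_mem_span {j | j.1 ∈ U} (Submodule.span_mono him hy)
    by_contra hne
    have h := this (Finsupp.mem_support_iff.mpr hne)
    exact hwn (Submodule.subset_span h)
  have h1 : b.repr w ⟨w, hwm⟩ = 1 := by
    have : b.repr (b ⟨w, hwm⟩) ⟨w, hwm⟩ = 1 := by simp
    rwa [hb] at this
  have h2 : b.repr w0 ⟨w, hwm⟩ = A w0 / A w := by
    rw [hdec]
    simp only [map_add, map_smul, Finsupp.add_apply, Finsupp.smul_apply, h0, h1]
    simp [hAw]
  rw [h2, abs_div, div_le_iff₀ (abs_pos.mpr hAw)] at hcr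
  exact hcr

/-- some small vector of `S` has a large inner product with `s`. -/
lemma big_ip {M d : ℕ} (hM : 1 ≤ M) (S : Submodule ℚ (QVec d))
    (hS : Submodule.span ℚ (SmallW M d ∩ S) = S) (s : QVec d) (hs : s ∈ S) (i0 : Fin d)
    (hi0 : ∀ i, |s i| ≤ |s i0|) (hpos : 0 < |s i0|) :
    ∃ w ∈ SmallW M d, w ∈ S ∧ |s i0| ≤ d * KK M d * |s ⬝ᵥ w| := by
  classical
  obtain ⟨U, hUs, hUspan, hUli⟩ := exists_linearIndependent ℚ (SmallW M d ∩ S)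
  have hli : LinearIndepOn ℚ id U := hUli
  have hsub : U ⊆ SmallW M d := hUs.trans Set.inter_subset_left
  let b0 := Module.Basis.extendLe hli hsub (smallW_span hM).ge
  have hb0 : ∀ j, b0 j = j.1 := fun j => by simp only [b0, Module.Basis.coe_extendLe]
  let e := b0.indexEquiv (Pi.basisFun ℚ (Fin d))
  let b := b0.reindex e
  have hb : ∀ j, b j = (e.symm j).1 := fun j => by simp [b, hb0]
  have hbW : ∀ j, b j ∈ SmallW M d := fun j => by
    rw [hb]; exact hli.extend_subset hsub (e.symm j).2
  have hsU : s ∈ Submodule.span ℚ U := by rw [hUspan, hS]; exact hs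
  have him : U ⊆ b '' {j | b j ∈ U} := by
    intro u hu
    refine ⟨e ⟨u, hli.subset_extend hsub hu⟩, ?_, ?_⟩ <;> simp [hb, hu]
  have hsupp := b.repr_support_subset_of_mem_span {j | b j ∈ U} (Submodule.span_mono him hsU)
  have hc : ∀ j, |b.repr s j| ≤ KK M d * |s i0| := by
    intro j
    have := cramer_bd b hbW ((1 / |s i0|) • s) (fun i => by
      simp only [Pi.smul_apply, smul_eq_mul, abs_mul, abs_div, abs_one, abs_abs]
      have h1 : (1:ℚ) ≤ M := by exact_mod_cast hM
      refine le_trans ?_ h1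
      rw [one_div, inv_mul_le_iff₀ hpos]
      simpa using hi0 i) j
    simp only [map_smul, Finsupp.smul_apply, smul_eq_mul, abs_mul, abs_div, abs_one, abs_abs] at this
    rw [one_div, inv_mul_le_iff₀ hpos] at this
    linarith
  by_contra hcon
  push Not at hcon
  have hKp := KK_pos (d := d) hM
  have hterm : ∀ j, |b.repr s j| * |s ⬝ᵥ b j| * d ≤ |s i0| * |s i0| ∧
      (b.repr s j ≠ 0 → |b.repr s j| * |s ⬝ᵥ b j| * d < |s i0| * |s i0|) := by
    intro j
    by_cases h0 : b.repr s j = 0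
    · simp [h0, mul_self_nonneg]
    · have hU : b j ∈ U := hsupp (Finsupp.mem_support_iff.mpr h0)
      have h1 := hcon (b j) (hbW j) (hUs hU).2
      have h2 := hc j
      have h3 : |b.repr s j| * |s ⬝ᵥ b j| * d < |s i0| * |s i0| := by
        calc |b.repr s j| * |s ⬝ᵥ b j| * d ≤ (KK M d * |s i0|) * |s ⬝ᵥ b j| * d := by gcongr
          _ = |s i0| * (d * KK M d * |s ⬝ᵥ b j|) := by ring
          _ < _ := by gcongr
      exact ⟨h3.le, fun _ => h3⟩
  have hss : s ⬝ᵥ s = ∑ j, b.repr s j * (s ⬝ᵥ b j) := by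
    conv_lhs => rw [← b.sum_repr s]
    rw [dotProduct_sum]
    simp only [b.sum_repr, dotProduct_smul, smul_eq_mul]
  have hlow : |s i0| * |s i0| ≤ s ⬝ᵥ s := by
    rw [abs_mul_abs_self]
    exact Finset.single_le_sum (f := fun i => s i * s i) (fun i _ => mul_self_nonneg _)
      (Finset.mem_univ i0)
  have hex : ∃ j, b.repr s j ≠ 0 := by
    by_contra hall
    push Not at hall
    have : s = 0 := by rw [← b.sum_repr s]; simp [hall]
    rw [this] at hpos; simp at hpos
  have hd : (0:ℚ) < d := by exact_mod_cast i0.pos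
  have hup : (s ⬝ᵥ s) * d < d * (|s i0| * |s i0|) := by
    rw [hss, Finset.sum_mul]
    calc ∑ j, b.repr s j * (s ⬝ᵥ b j) * d ≤ ∑ j, |b.repr s j| * |s ⬝ᵥ b j| * d := by
          refine Finset.sum_le_sum fun j _ => mul_le_mul_of_nonneg_right ?_ hd.le
          rw [← abs_mul]; exact le_abs_self _
      _ < ∑ j : Fin d, |s i0| * |s i0| := by
          obtain ⟨j, hj⟩ := hex
          exact Finset.sum_lt_sum (fun j _ => (hterm j).1) ⟨j, Finset.mem_univ _, (hterm j).2 hj⟩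
      _ = _ := by simp
  nlinarith

lemma rounding {M d : ℕ} (S : Submodule ℚ (QVec d))
    (hS : Submodule.span ℚ (SmallW M d ∩ S) = S) (w0 : QVec d)
    (hw0 : w0 ∈ SmallW M d) (hw0S : w0 ∈ S) (n : ℕ) : ∀ (x : QVec d →ₗ[ℚ] ℚ), x w0 ≠ 0 →
    d ≤ Module.finrank ℚ (Submodule.span ℚ
      (SmallW M d ∩ (S ⊓ LinearMap.ker x : Submodule ℚ (QVec d)))) + n →
    ∃ A : QVec d →ₗ[ℚ] ℚ, A w0 = x w0 ∧
      Submodule.span ℚ (SmallW M d ∩ (S ⊓ LinearMap.ker A : Submodule ℚ (QVec d)))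
        = S ⊓ LinearMap.ker A ∧
      ∀ w ∈ SmallW M d, w ∈ S → 0 ≤ A w * x w ∧ |A w| ≤ 2 ^ n * |x w| := by
  induction n with
  | zero =>
    intro x hx hfr
    exfalso
    have htop : Submodule.span ℚ
      (SmallW M d ∩ (S ⊓ LinearMap.ker x : Submodule ℚ (QVec d))) = ⊤ := by
      apply Submodule.eq_top_of_finrank_eq
      apply le_antisymm (Submodule.finrank_le _)
      simpa using hfr
    have hle : Submodule.span ℚ
      (SmallW M d ∩ (S ⊓ LinearMap.ker x : Submodule ℚ (QVec d))) ≤ LinearMap.ker x := by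
      rw [Submodule.span_le]
      rintro v ⟨-, -, h⟩; exact h
    rw [htop] at hle
    exact hx (hle (Submodule.mem_top (x := w0)))
  | succ n ih =>
    intro x hx hfr
    set Z : Submodule ℚ (QVec d) := Submodule.span ℚ
      (SmallW M d ∩ (S ⊓ LinearMap.ker x : Submodule ℚ (QVec d))) with hZ
    have hZle : Z ≤ S ⊓ LinearMap.ker x := by
      rw [hZ, Submodule.span_le]; exact Set.inter_subset_right
    by_cases hcase : ∀ w ∈ SmallW M d, w ∈ S → w ∈ Z ⊔ Submodule.span ℚ {w0}
    · refine ⟨x, rfl, ?_, ?_⟩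
      · apply le_antisymm hZle
        intro v hv
        have hSle : S ≤ Z ⊔ Submodule.span ℚ {w0} := by
          rw [← hS, Submodule.span_le]
          rintro w ⟨h1, h2⟩; exact hcase w h1 h2
        obtain ⟨z, hz, y, hy, hzy⟩ := Submodule.mem_sup.mp (hSle hv.1)
        obtain ⟨c, rfl⟩ := Submodule.mem_span_singleton.mp hy
        have h1 : x v = 0 := hv.2
        have h2 : x z = 0 := (hZle hz).2
        rw [← hzy, map_add, map_smul, h2] at h1
        have : c = 0 := by simpa [hx] using h1
        rw [← hzy, this]; simpa using hz
      · intro w _ _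
        refine ⟨mul_self_nonneg _, ?_⟩
        have : (1:ℚ) ≤ 2 ^ (n+1) := one_le_pow₀ (by norm_num)
        nlinarith [abs_nonneg (x w)]
    · push Not at hcase
      obtain ⟨w1, hw1, hw1S, hw1n⟩ := hcase
      obtain ⟨y, hy1, hy⟩ := Submodule.exists_le_ker_of_notMem hw1n
      have hfin : (SmallW M d ∩ {w | w ∈ S ∧ y w ≠ 0}).Finite :=
        (smallW_finite M d).subset Set.inter_subset_left
      obtain ⟨ws, ⟨hws, hwsS, hyws⟩, hmin⟩ := Set.exists_min_image _ (fun w => |x w| / |y w|) hfin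
        ⟨w1, hw1, hw1S, hy1⟩
      have hyZ : ∀ z ∈ Z, y z = 0 := fun z hz => hy (Submodule.mem_sup_left hz)
      have hyw0 : y w0 = 0 :=
        hy (Submodule.mem_sup_right (Submodule.mem_span_singleton_self w0))
      have hxws : x ws ≠ 0 := by
        intro h
        exact hyws (hyZ _ (Submodule.subset_span ⟨hws, hwsS, h⟩))
      let x' : QVec d →ₗ[ℚ] ℚ := x - (x ws / y ws) • y
      have hx' : ∀ v, x' v = x v - (x ws / y ws) * y v := fun v => by simp [x']
      have hx'w0 : x' w0 = x w0 := by simp [hx', hyw0]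
      have hdom : ∀ w ∈ SmallW M d, w ∈ S → |(x ws / y ws) * y w| ≤ |x w| := by
        intro w hw hwS
        by_cases h : y w = 0
        · simp [h]
        · have := hmin w ⟨hw, hwS, h⟩
          rw [abs_mul, abs_div]
          rwa [le_div_iff₀ (abs_pos.mpr h)] at this
      have hlt : Z < Submodule.span ℚ
          (SmallW M d ∩ (S ⊓ LinearMap.ker x' : Submodule ℚ (QVec d))) := by
        have hmem : ws ∈ SmallW M d ∩ (S ⊓ LinearMap.ker x' : Submodule ℚ (QVec d)) := by
          refine ⟨hws, hwsS, ?_⟩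
          show x' ws = 0
          rw [hx']; field_simp; ring
        refine lt_of_le_of_ne ?_ ?_
        · rw [hZ]
          apply Submodule.span_mono
          rintro v ⟨h1, h2, h3⟩
          refine ⟨h1, h2, ?_⟩
          show x' v = 0
          have h3' : x v = 0 := h3
          rw [hx', h3', hyZ v (Submodule.subset_span ⟨h1, h2, h3⟩)]; simp
        · intro heq
          have : ws ∈ Z := by rw [heq]; exact Submodule.subset_span hmem
          exact hxws (hZle this).2
      have hrk := Submodule.finrank_lt_finrank_of_lt hlt
      obtain ⟨A, hA1, hA2, hA3⟩ := ih x' (by rwa [hx'w0]) (by omega)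
      refine ⟨A, by rw [hA1, hx'w0], hA2, ?_⟩
      intro w hw hwS
      obtain ⟨h1, h2⟩ := hA3 w hw hwS
      have h3 := hdom w hw hwS
      rw [hx'] at h1 h2
      have h4 : |x w - x ws / y ws * y w| ≤ 2 * |x w| := by
        have := abs_sub (x w) (x ws / y ws * y w)
        linarith
      refine ⟨?_, ?_⟩
      · have hsg : 0 ≤ (x w - x ws / y ws * y w) * x w := by
          rcases le_total 0 (x w) with h | h
          · rw [abs_of_nonneg h] at h3
            have := (abs_le.mp h3).2
            exact mul_nonneg (by linarith) h
          · rw [abs_of_nonpos h] at h3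
            have := (abs_le.mp h3).1
            exact mul_nonneg_of_nonpos_of_nonpos (by linarith) h
        by_cases hz : x w - x ws / y ws * y w = 0
        · rw [hz] at h2
          simp at h2
          simp [h2]
        · set a := x w - x ws / y ws * y w
          by_contra hneg
          push Not at hneg
          have h5 : 0 < a * a := mul_self_pos.mpr hz
          have : 0 ≤ (A w * a) * (a * x w) := mul_nonneg h1 hsg
          nlinarith
      · calc |A w| ≤ 2 ^ n * |x w - x ws / y ws * y w| := h2
          _ ≤ 2 ^ n * (2 * |x w|) := by gcongr
          _ = _ := by ring

/-- The constant `2 d² 2^d K²`. -/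
def LL (M d : ℕ) : ℚ := 2 * d * (d * 2 ^ d * KK M d ^ 2)

lemma pick {M d : ℕ} (hM : 1 ≤ M) (S : Submodule ℚ (QVec d))
    (hS : Submodule.span ℚ (SmallW M d ∩ S) = S) (hne : S ≠ ⊥) (s : QVec d) (hs : s ∈ S) :
    ∃ A : QVec d →ₗ[ℚ] ℚ, (∃ v ∈ S, A v ≠ 0) ∧
      Submodule.span ℚ (SmallW M d ∩ (S ⊓ LinearMap.ker A : Submodule ℚ (QVec d)))
        = S ⊓ LinearMap.ker A ∧
      ∀ w ∈ SmallW M d, w ∈ S → 0 < A w → ∀ i, LL M d * (s ⬝ᵥ w) ≤ - (2 * d * |s i|) := by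
  by_cases hs0 : s = 0
  · obtain ⟨w0, hw0, hw0S, hw0n⟩ : ∃ w ∈ SmallW M d, w ∈ S ∧ w ≠ 0 := by
      by_contra hcon
      push Not at hcon
      apply hne
      rw [← hS, Submodule.span_eq_bot]
      rintro w ⟨h1, h2⟩
      exact hcon w h1 h2
    obtain ⟨x, hx⟩ : ∃ x : QVec d →ₗ[ℚ] ℚ, x w0 ≠ 0 := by
      obtain ⟨f, hf, -⟩ := Submodule.exists_le_ker_of_notMem (p := (⊥ : Submodule ℚ (QVec d)))
        (v := w0) (by simpa using hw0n)
      exact ⟨f, hf⟩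
    obtain ⟨A, h1, h2, -⟩ := rounding S hS w0 hw0 hw0S d x hx (by omega)
    refine ⟨A, ⟨w0, hw0S, by rwa [h1]⟩, h2, ?_⟩
    intro w _ _ _ i
    simp [hs0]
  · obtain ⟨i, hi⟩ : ∃ i, s i ≠ 0 := by
      by_contra hcon; push Not at hcon; exact hs0 (funext hcon)
    have : Nonempty (Fin d) := ⟨i⟩
    obtain ⟨i0, hi0⟩ := Finite.exists_max (fun i => |s i|)
    have hpos : 0 < |s i0| := lt_of_lt_of_le (abs_pos.mpr hi) (hi0 i)
    obtain ⟨w0, hw0, hw0S, hbig⟩ := big_ip hM S hS s hs i0 hi0 hpos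
    let x : QVec d →ₗ[ℚ] ℚ := - dotProductBilin ℚ ℚ s
    have hx : ∀ v, x v = - (s ⬝ᵥ v) := fun v => rfl
    have hxw0 : x w0 ≠ 0 := by
      rw [hx]
      intro h
      have : s ⬝ᵥ w0 = 0 := by linarith
      rw [this] at hbig; simp at hbig; exact hpos.ne' (by simp [hbig])
    obtain ⟨A, h1, h2, h3⟩ := rounding S hS w0 hw0 hw0S d x hxw0 (by omega)
    refine ⟨A, ⟨w0, hw0S, by rwa [h1]⟩, h2, ?_⟩
    intro w hw hwS hAw j
    obtain ⟨h4, h5⟩ := h3 w hw hwS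
    have h6 := ratio_bd hM S A h2 hw hwS hw0 hw0S hAw.ne'
    have h7 : 0 ≤ x w := nonneg_of_mul_nonneg_right h4 hAw
    rw [h1] at h6
    have h8 : |x w0| = |s ⬝ᵥ w0| := by rw [hx, abs_neg]
    rw [h8] at h6
    rw [abs_of_nonneg h7] at h5
    have hKp := KK_pos (d := d) hM
    have h9 : |s i0| ≤ d * KK M d * (KK M d * (2 ^ d * x w)) := by
      refine hbig.trans ?_
      gcongr
      refine h6.trans ?_
      gcongr
    have h10 := hi0 j
    have h11 : |s j| ≤ d * KK M d * (KK M d * (2 ^ d * - (s ⬝ᵥ w))) := by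
      rw [← hx]; exact le_trans h10 h9
    have hd : (0:ℚ) ≤ d := by positivity
    unfold LL
    have := mul_le_mul_of_nonneg_left h11 (show (0:ℚ) ≤ 2 * d by positivity)
    linarith

/-- Bounds of the levels. -/
def BB (M N d : ℕ) : ℕ → ℚ
  | 0 => 0
  | k + 1 => 11 * d * LL M d ^ 2 * M ^ 2 * (BB M N d k + N * M)

/-- `C_k`. -/
def CC (M N d k : ℕ) : ℚ := BB M N d k + N * M

/-- One level of the memory of the strategy. -/
structure Lev (d : ℕ) where
  A : QVec d →ₗ[ℚ] ℚ
  s0 : QVec d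
  wv : QVec d
  dv : QVec d
  r : ℕ
  o : ℕ

/-- Sum recorded by the levels. -/
def totL {d : ℕ} : List (Lev d) → QVec d
  | [] => 0
  | l :: L => l.s0 + (l.dv + (l.wv + totL L))

/-- Invariant of one level. -/
structure LevOK (M N : ℕ) {d : ℕ} (S : Submodule ℚ (QVec d)) (C : ℚ) (l : Lev d) : Prop where
  hS : Submodule.span ℚ (SmallW M d ∩ S) = S
  hA : ∃ v ∈ S, l.A v ≠ 0
  hs0 : l.s0 ∈ S
  hwv : l.wv ∈ S
  hdv : l.dv ∈ S
  ho : l.o ≤ N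
  hwb : ∀ i, |l.wv i| ≤ ((N : ℚ) - l.o) * M
  hdb : ∀ i, |l.dv i| ≤ (l.r : ℚ) * M
  hdd : ∀ i, LL M d * (l.s0 ⬝ᵥ l.dv) ≤ - (2 * d * (l.r * |l.s0 i|))
  hr : (l.r : ℚ) < LL M d * C
  hq : l.s0 ⬝ᵥ l.s0 ≤ d * (8 * LL M d ^ 2 * M ^ 2 * C) ^ 2
  hp : ∀ w ∈ SmallW M d, w ∈ S → 0 < l.A w →
    ∀ i, LL M d * (l.s0 ⬝ᵥ w) ≤ - (2 * d * |l.s0 i|)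

/-- Invariant of the memory. -/
def LInv (M N : ℕ) {d : ℕ} : Submodule ℚ (QVec d) → List (Lev d) → Prop
  | S, [] => S = ⊥
  | S, l :: L => LevOK M N S (CC M N d L.length) l ∧ LInv M N (S ⊓ LinearMap.ker l.A) L

/-- A flag of functionals. -/
abbrev FFlag (d : ℕ) := List (QVec d →ₗ[ℚ] ℚ)

/-- The flag of entry `i` of the stack agrees with the levels not started after it. -/
def Agree {d : ℕ} (i : ℕ) : List (Lev d) → FFlag d → Prop
  | [], _ => True
  | l :: L, F => i < l.o ∨ ∃ F', F = l.A :: F' ∧ Agree i L F'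

/-- Lexicographic negativity. -/
def LexNeg {d : ℕ} (w : QVec d) : FFlag d → Prop
  | [] => False
  | f :: P => f w < 0 ∨ (f w = 0 ∧ LexNeg w P)

lemma agree_self {d : ℕ} (i : ℕ) (L : List (Lev d)) : Agree i L (L.map Lev.A) := by
  induction L with
  | nil => trivial
  | cons l L ih => exact Or.inr ⟨_, rfl, ih⟩

lemma LL_ge {M d : ℕ} (hM : 1 ≤ M) (hd : 1 ≤ d) : 1 ≤ LL M d := by
  have h1 : (1:ℚ) ≤ M := by exact_mod_cast hM
  have h2 : (1:ℚ) ≤ d := by exact_mod_cast hd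
  have h3 : (1:ℚ) ≤ d.factorial := by exact_mod_cast d.factorial_pos
  have h4 : 1 ≤ KK M d := one_le_mul_of_one_le_of_one_le h3 (one_le_pow₀ h1)
  have h5 : (1:ℚ) ≤ 2 ^ d := one_le_pow₀ (by norm_num)
  unfold LL
  apply one_le_mul_of_one_le_of_one_le
  · linarith
  · exact one_le_mul_of_one_le_of_one_le (one_le_mul_of_one_le_of_one_le h2 h5) (one_le_pow₀ h4)

lemma BB_nonneg (M N d k : ℕ) : 0 ≤ BB M N d k := by
  induction k with
  | zero => exact le_rfl
  | succ k ih => unfold BB; positivity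

lemma CC_ge {M N : ℕ} (hM : 1 ≤ M) (hN : 1 ≤ N) (d k : ℕ) : 1 ≤ CC M N d k := by
  have h1 : (1:ℚ) ≤ M := by exact_mod_cast hM
  have h2 : (1:ℚ) ≤ N := by exact_mod_cast hN
  have := BB_nonneg M N d k
  unfold CC
  nlinarith

lemma dot_le {d : ℕ} (s t : QVec d) (m C : ℚ) (hs : ∀ i, |s i| ≤ m) (ht : ∀ i, |t i| ≤ C) :
    s ⬝ᵥ t ≤ d * (m * C) := by
  calc s ⬝ᵥ t ≤ ∑ _i : Fin d, m * C := by
        refine Finset.sum_le_sum fun i _ => ?_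
        refine (le_abs_self _).trans ?_
        rw [abs_mul]
        exact mul_le_mul (hs i) (ht i) (abs_nonneg _) ((abs_nonneg _).trans (hs i))
    _ = _ := by simp

lemma phase_end {d : ℕ} (hd : 1 ≤ d) (L M C r : ℚ) (hL : 1 ≤ L) (hM : 1 ≤ M) (hC : 1 ≤ C)
    (s D T : QVec d) (hD : ∀ i, |D i| ≤ r * M) (hT : ∀ i, |T i| ≤ C)
    (hsD : ∀ i, L * (s ⬝ᵥ D) ≤ - (2 * d * (r * |s i|)))
    (hr1 : L * C ≤ r) (hr2 : r ≤ L * C + 1)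
    (hq : s ⬝ᵥ s ≤ d * (8 * L ^ 2 * M ^ 2 * C) ^ 2) :
    (s + (D + T)) ⬝ᵥ (s + (D + T)) ≤ d * (8 * L ^ 2 * M ^ 2 * C) ^ 2 := by
  have : Nonempty (Fin d) := ⟨⟨0, hd⟩⟩
  obtain ⟨i0, hi0⟩ := Finite.exists_max (fun i => |s i|)
  set m := |s i0| with hm
  have hm0 : 0 ≤ m := abs_nonneg _
  have hdq : (1:ℚ) ≤ d := by exact_mod_cast hd
  have hLC : 1 ≤ L * C := one_le_mul_of_one_le_of_one_le hL hC
  have h1 := dot_le s T m C hi0 hT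
  have h2 := hsD i0
  have h3 : s ⬝ᵥ (D + T) ≤ - (d * C * m) := by
    have h4 : L * (s ⬝ᵥ (D + T)) ≤ L * (- (d * C * m)) := by
      rw [dotProduct_add]
      have h5 : (d * m) * (L * C) ≤ (d * m) * r := mul_le_mul_of_nonneg_left hr1 (by positivity)
      have h6 := mul_le_mul_of_nonneg_left h1 (by linarith : (0:ℚ) ≤ L)
      linarith
    exact le_of_mul_le_mul_left h4 (by linarith)
  have hMLC : L * C ≤ L * M * C := by
    nlinarith
  have hC2 : C ≤ L * M * C := by
    have : 1 ≤ L * M := one_le_mul_of_one_le_of_one_le hL hM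
    nlinarith
  have hM2 : M ≤ L * M * C := by
    nlinarith
  have h7 : ∀ i, |(D + T) i| ≤ 3 * (L * M * C) := by
    intro i
    have := abs_add_le (D i) (T i)
    have h8 := hD i
    have h9 := hT i
    have h10 : r * M ≤ (L * C + 1) * M := mul_le_mul_of_nonneg_right hr2 (by linarith)
    simp only [Pi.add_apply]
    linarith
  have h8 := dot_le (D + T) (D + T) _ _ h7 h7
  have hX : L * M * C ≤ L ^ 2 * M ^ 2 * C := by
    have h1 : 1 ≤ L * M := one_le_mul_of_one_le_of_one_le hL hM
    have : 0 ≤ L * M * C := by positivity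
    nlinarith
  by_cases hc : 5 * L ^ 2 * M ^ 2 * C ≤ m
  · have hexp : (s + (D + T)) ⬝ᵥ (s + (D + T)) = s ⬝ᵥ s + 2 * (s ⬝ᵥ (D + T)) + (D + T) ⬝ᵥ (D + T) := by
      rw [add_dotProduct, dotProduct_add s, dotProduct_add (D + T), dotProduct_comm (D + T) s]
      ring
    rw [hexp]
    have h9 : d * C * (5 * L ^ 2 * M ^ 2 * C) ≤ d * C * m := mul_le_mul_of_nonneg_left hc (by positivity)
    have h10 : 0 ≤ d * (L * M * C) ^ 2 := by positivity
    nlinarith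
  · push Not at hc
    have h9 : ∀ i, |(s + (D + T)) i| ≤ 8 * L ^ 2 * M ^ 2 * C := by
      intro i
      have := abs_add_le (s i) ((D + T) i)
      have h10 := h7 i
      have h11 := hi0 i
      rw [Pi.add_apply]
      linarith
    have := dot_le _ _ _ _ h9 h9
    rw [sq]; exact this

lemma finrank_ker {d k : ℕ} (S : Submodule ℚ (QVec d)) (A : QVec d →ₗ[ℚ] ℚ)
    (hA : ∃ v ∈ S, A v ≠ 0) (hk : Module.finrank ℚ S = k + 1) :
    Module.finrank ℚ (S ⊓ LinearMap.ker A : Submodule ℚ (QVec d)) = k := by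
  have h1 := LinearMap.finrank_range_add_finrank_ker (A.domRestrict S)
  have h2 : LinearMap.range (A.domRestrict S) = ⊤ := by
    obtain ⟨v, hv, hAv⟩ := hA
    rw [LinearMap.range_eq_top]
    intro c
    refine ⟨(c / A v) • ⟨v, hv⟩, ?_⟩
    simp [LinearMap.domRestrict_apply, hAv]
  have h3 : (LinearMap.ker (A.domRestrict S)).map S.subtype = S ⊓ LinearMap.ker A := by
    ext v
    simp only [Submodule.mem_map, LinearMap.mem_ker, Submodule.subtype_apply, Submodule.mem_inf,
      LinearMap.domRestrict_apply]
    constructor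
    · rintro ⟨y, h, rfl⟩; exact ⟨y.2, h⟩
    · rintro ⟨h, h'⟩; exact ⟨⟨v, h⟩, h', rfl⟩
  rw [← h3, LinearEquiv.finrank_eq (Submodule.equivMapOfInjective S.subtype S.injective_subtype _).symm]
  rw [h2, finrank_top, Module.finrank_self] at h1
  omega

lemma linv_init {M N d : ℕ} (hM : 1 ≤ M) (hN : 1 ≤ N) (p : ℕ) (hpN : p ≤ N) (k : ℕ) :
    ∀ (S : Submodule ℚ (QVec d)), Submodule.span ℚ (SmallW M d ∩ S) = S →
    Module.finrank ℚ S = k → ∀ s ∈ S,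
    s ⬝ᵥ s ≤ d * (8 * LL M d ^ 2 * M ^ 2 * CC M N d (k - 1)) ^ 2 →
    ∃ L : List (Lev d), LInv M N S L ∧ L.length = k ∧ totL L = s ∧
      ∀ i < p, ∀ F, Agree i L F := by
  induction k with
  | zero =>
    intro S hS hk s hs hq
    have : S = ⊥ := Submodule.finrank_eq_zero.mp hk
    subst this
    refine ⟨[], rfl, rfl, ?_, fun _ _ _ => trivial⟩
    simpa [totL, eq_comm] using hs
  | succ k ih =>
    intro S hS hk s hs hq
    have hne : S ≠ ⊥ := by rintro rfl; simp at hk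
    have hd : 1 ≤ d := by
      have := Submodule.finrank_le S
      simp at this; omega
    obtain ⟨A, hA1, hA2, hA3⟩ := pick hM S hS hne s hs
    obtain ⟨L, h1, h2, h3, h4⟩ := ih (S ⊓ LinearMap.ker A) hA2 (finrank_ker S A hA1 hk) 0
      (Submodule.zero_mem _) (by simp; positivity)
    have hLg := LL_ge hM hd
    have hCg := CC_ge hM hN d k
    refine ⟨⟨A, s, 0, 0, 0, p⟩ :: L, ⟨?_, h1⟩, by simp [h2], by simp [totL, h3], ?_⟩
    · rw [h2]
      refine ⟨hS, hA1, hs, S.zero_mem, S.zero_mem, hpN, ?_, ?_, ?_, ?_, hq, hA3⟩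
      · intro i
        have : (p:ℚ) ≤ N := by exact_mod_cast hpN
        simp only [Pi.zero_apply, abs_zero]
        exact mul_nonneg (by linarith) (by positivity)
      · intro i; simp
      · intro i; simp
      · simp only [Nat.cast_zero]; positivity
    · intro i hi F
      exact Or.inl hi

lemma linv_bound {M N d : ℕ} (hM : 1 ≤ M) (hN : 1 ≤ N) (L : List (Lev d)) :
    ∀ S : Submodule ℚ (QVec d), LInv M N S L → totL L ∈ S ∧
      ∀ i, |totL L i| ≤ BB M N d L.length := by
  induction L with
  | nil => intro S _; simp [totL, BB]
  | cons l L ih =>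
    rintro S ⟨h, hL⟩
    obtain ⟨h1, h2⟩ := ih _ hL
    refine ⟨S.add_mem h.hs0 (S.add_mem h.hdv (S.add_mem h.hwv h1.1)), ?_⟩
    intro i
    have hd : 1 ≤ d := i.pos
    have hLg := LL_ge hM hd
    have hCg := CC_ge hM hN d L.length
    have hMq : (1:ℚ) ≤ M := by exact_mod_cast hM
    have hdq : (1:ℚ) ≤ d := by exact_mod_cast hd
    set C := CC M N d L.length with hCdef
    have e1 : |l.s0 i| ≤ d * (8 * LL M d ^ 2 * M ^ 2 * C) := by
      apply abs_le_of_sq_le_sq _ (by positivity)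
      have : l.s0 i ^ 2 ≤ l.s0 ⬝ᵥ l.s0 := by
        rw [sq]
        exact Finset.single_le_sum (f := fun i => l.s0 i * l.s0 i) (fun i _ => mul_self_nonneg _)
          (Finset.mem_univ i)
      refine this.trans (h.hq.trans ?_)
      rw [mul_pow (d:ℚ)]
      gcongr
      nlinarith
    have e2 := h.hdb i
    have e3 := h.hwb i
    have e4 := h2 i
    have e5 : ((N:ℚ) - l.o) * M ≤ N * M := by
      have : (0:ℚ) ≤ l.o := by positivity
      nlinarith
    have e6 : |l.wv i + totL L i| ≤ C := by
      refine (abs_add_le _ _).trans ?_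
      rw [hCdef, CC]; linarith
    have e7 : (l.r : ℚ) * M ≤ LL M d * C * M := mul_le_mul_of_nonneg_right h.hr.le (by linarith)
    have e8 : LL M d * C * M ≤ LL M d ^ 2 * M ^ 2 * C := by
      have h1 : 1 ≤ LL M d * M := one_le_mul_of_one_le_of_one_le hLg hMq
      have : 0 ≤ LL M d * M * C := by positivity
      nlinarith
    have e9 : C ≤ LL M d ^ 2 * M ^ 2 * C := by
      have h1 : 1 ≤ LL M d ^ 2 * M ^ 2 :=
        one_le_mul_of_one_le_of_one_le (one_le_pow₀ hLg) (one_le_pow₀ hMq)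
      nlinarith
    have e10 : |totL (l :: L) i| ≤ |l.s0 i| + (|l.dv i| + |l.wv i + totL L i|) := by
      refine (abs_add_le _ _).trans ?_
      gcongr
      exact abs_add_le _ _
    have e11 : BB M N d (l :: L).length = 11 * d * (LL M d ^ 2 * M ^ 2 * C) := by
      simp only [List.length_cons, BB, hCdef, CC]; ring
    rw [e11]
    have e12 : 0 ≤ LL M d ^ 2 * M ^ 2 * C := by positivity
    nlinarith

/-- Forgetting entries above height `p`. -/
def freeL {d : ℕ} (p : ℕ) (L : List (Lev d)) : List (Lev d) :=
  L.map fun l => { l with o := min l.o p }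

lemma freeL_spec {M N d : ℕ} (p : ℕ) (L : List (Lev d)) :
    (freeL p L).length = L.length ∧ totL (freeL p L) = totL L ∧
    (∀ S, LInv M N S L → LInv M N S (freeL p L)) ∧
    ∀ i < p, ∀ F, Agree i L F → Agree i (freeL p L) F := by
  induction L with
  | nil => exact ⟨rfl, rfl, fun _ h => h, fun _ _ _ h => h⟩
  | cons l L ih =>
    obtain ⟨h1, h2, h3, h4⟩ := ih
    refine ⟨by simp [freeL], ?_, ?_, ?_⟩
    · show l.s0 + (l.dv + (l.wv + totL (freeL p L))) = _
      rw [h2]; rfl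
    · rintro S ⟨h, hL⟩
      refine ⟨?_, h3 _ hL⟩
      show LevOK M N S (CC M N d (freeL p L).length) _
      rw [h1]
      refine ⟨h.hS, h.hA, h.hs0, h.hwv, h.hdv, (min_le_left _ _).trans h.ho, ?_, h.hdb, h.hdd, h.hr,
        h.hq, h.hp⟩
      intro i
      refine (h.hwb i).trans ?_
      have : ((min l.o p : ℕ) : ℚ) ≤ l.o := by exact_mod_cast min_le_left _ _
      gcongr
    · intro i hi F hF
      rcases hF with h | ⟨F', rfl, h⟩
      · exact Or.inl (lt_min h hi)
      · exact Or.inr ⟨F', rfl, h4 i hi F' h⟩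

lemma linv_step {M N d : ℕ} (hM : 1 ≤ M) (hN : 1 ≤ N) (p : ℕ) (hpN : p ≤ N) (w : QVec d)
    (hw : w ∈ SmallW M d) (L : List (Lev d)) :
    ∀ (S : Submodule ℚ (QVec d)) (seg : Set (ℕ × FFlag d)), LInv M N S L →
      Module.finrank ℚ S = L.length → w ∈ S →
      (∀ x ∈ seg, p ≤ x.1 ∧ Agree x.1 L x.2) →
      (∀ P : FFlag d, (∀ x ∈ seg, P <+: x.2) → ¬ LexNeg w P) →
      ∃ L' : List (Lev d), LInv M N S L' ∧ L'.length = L.length ∧ totL L' = totL L + w ∧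
        ∀ i < p, ∀ F, Agree i L F → Agree i L' F := by
  induction L with
  | nil =>
    intro S seg hL hk hwS _ _
    have : S = ⊥ := hL
    subst this
    have : w = 0 := by simpa using hwS
    exact ⟨[], rfl, rfl, by simp [totL, this], fun _ _ _ _ => trivial⟩
  | cons l L ih =>
    rintro S seg ⟨h, hL⟩ hk hwS hseg hcond
    have hd : 1 ≤ d := by
      have := Submodule.finrank_le S
      simp at this hk; omega
    have hLg := LL_ge hM hd
    have hCg := CC_ge hM hN d L.length
    have hMq : (1:ℚ) ≤ M := by exact_mod_cast hM
    obtain ⟨f1, f2, f3, f4⟩ := freeL_spec (M := M) (N := N) p L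
    obtain ⟨b1, b2⟩ := linv_bound hM hN L _ hL
    by_cases hp : p < l.o
    · refine ⟨{ l with wv := l.wv + w, o := p } :: freeL p L, ⟨?_, f3 _ hL⟩, by simp [f1], ?_, ?_⟩
      · rw [f1]
        refine ⟨h.hS, h.hA, h.hs0, S.add_mem h.hwv hwS, h.hdv, hpN, ?_, h.hdb, h.hdd, h.hr,
          h.hq, h.hp⟩
        intro i
        have h1 := h.hwb i
        have h2 := smallW_bd hw i
        have h3 := abs_add_le (l.wv i) (w i)
        have h4 : (p:ℚ) + 1 ≤ l.o := by exact_mod_cast hp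
        simp only [Pi.add_apply]
        nlinarith
      · simp only [totL, f2]; abel
      · intro i hi F _; exact Or.inl hi
    · push Not at hp
      have hpre : ∀ x ∈ seg, ∃ F', x.2 = l.A :: F' ∧ Agree x.1 L F' := by
        intro x hx
        obtain ⟨h1, h2⟩ := hseg x hx
        rcases h2 with h2 | h2
        · omega
        · exact h2
      have hnn : 0 ≤ l.A w := by
        by_contra hneg
        push Not at hneg
        refine hcond [l.A] ?_ (Or.inl hneg)
        intro x hx
        obtain ⟨F', h1, -⟩ := hpre x hx
        rw [h1]
        exact ⟨F', rfl⟩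
      rcases hnn.eq_or_lt with hz | hpos
      · obtain ⟨L', g1, g2, g3, g4⟩ := ih (S ⊓ LinearMap.ker l.A)
          {x | (x.1, l.A :: x.2) ∈ seg} hL (finrank_ker S l.A h.hA (by simpa using hk))
          ⟨hwS, hz.symm⟩ (by
            intro x hx
            obtain ⟨F', h1, h2⟩ := hpre _ hx
            refine ⟨(hseg _ hx).1, ?_⟩
            simp only [List.cons.injEq, true_and] at h1
            rw [h1]; exact h2) (by
            intro P hP hneg
            refine hcond (l.A :: P) ?_ (Or.inr ⟨hz.symm, hneg⟩)
            intro x hx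
            obtain ⟨F', h1, -⟩ := hpre x hx
            rw [h1]
            have := hP (x.1, F') (by show (x.1, l.A :: F') ∈ seg; rw [← h1]; exact hx)
            exact List.cons_prefix_cons.mpr ⟨rfl, this⟩)
        refine ⟨l :: L', ⟨by rw [g2]; exact h, g1⟩, by simp [g2], ?_, ?_⟩
        · simp only [totL, g3]; abel
        · intro i hi F hF
          rcases hF with h | ⟨F', rfl, h⟩
          · exact Or.inl h
          · exact Or.inr ⟨F', rfl, g4 i hi F' h⟩
      · have hdb' : ∀ i, |(l.dv + w) i| ≤ ((l.r : ℚ) + 1) * M := by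
          intro i
          have h1 := h.hdb i
          have h2 := smallW_bd hw i
          have h3 := abs_add_le (l.dv i) (w i)
          simp only [Pi.add_apply]
          linarith
        have hdd' : ∀ i, LL M d * (l.s0 ⬝ᵥ (l.dv + w)) ≤ - (2 * d * (((l.r:ℚ) + 1) * |l.s0 i|)) := by
          intro i
          have h1 := h.hdd i
          have h2 := h.hp w hw hwS hpos i
          rw [dotProduct_add]
          linarith
        by_cases hr : (l.r : ℚ) + 1 < LL M d * CC M N d L.length
        · refine ⟨{ l with dv := l.dv + w, r := l.r + 1 } :: freeL p L, ⟨?_, f3 _ hL⟩,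
            by simp [f1], ?_, ?_⟩
          · rw [f1]
            refine ⟨h.hS, h.hA, h.hs0, h.hwv, S.add_mem h.hdv hwS, h.ho, h.hwb, ?_, ?_, ?_,
              h.hq, h.hp⟩
            · simpa using hdb'
            · simpa using hdd'
            · simpa using hr
          · simp only [totL, f2]; abel
          · intro i hi F hF
            rcases hF with h | ⟨F', rfl, h⟩
            · exact Or.inl h
            · exact Or.inr ⟨F', rfl, f4 i hi F' h⟩
        · push Not at hr
          have hT : ∀ i, |(l.wv + totL L) i| ≤ CC M N d L.length := by
            intro i
            have e3 := h.hwb i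
            have e4 := b2 i
            have e5 : ((N:ℚ) - l.o) * M ≤ N * M := by
              have : (0:ℚ) ≤ l.o := by positivity
              nlinarith
            refine (abs_add_le _ _).trans ?_
            rw [CC]; linarith
          have hq := phase_end hd (LL M d) M (CC M N d L.length) (l.r + 1) hLg hMq hCg l.s0
            (l.dv + w) (l.wv + totL L) hdb' hT hdd' hr (by linarith [h.hr]) h.hq
          have hmem : l.s0 + (l.dv + w + (l.wv + totL L)) ∈ S :=
            S.add_mem h.hs0 (S.add_mem (S.add_mem h.hdv hwS) (S.add_mem h.hwv b1.1))
          obtain ⟨L', g1, g2, g3, g4⟩ := linv_init hM hN p hpN (L.length + 1) S h.hS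
            (by simpa using hk) _ hmem hq
          refine ⟨L', g1, by simpa using g2, ?_, fun i hi F _ => g4 i hi F⟩
          rw [g3]; simp only [totL]; abel

/-- Functional sequence of a flag. -/
def flagFun {d : ℕ} (F : FFlag d) : ℕ → (QVec d →ₗ[ℚ] ℚ) := fun j => F.getD (d - j) 0

/-- The colour defined by a flag. -/
def colourOf {d : ℕ} (F : FFlag d) : Colour d := PPHSSet d 1 (flagFun F)

/-- Vanishing of the first `i` functionals. -/
def ZZ {d : ℕ} (a : ℕ → (QVec d →ₗ[ℚ] ℚ)) (i : ℕ) (v : QVec d) : Prop := ∀ i' < i, a i' v = 0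

/-- Lexicographic negativity within the first `n` functionals. -/
def LNeg {d : ℕ} (a : ℕ → (QVec d →ₗ[ℚ] ℚ)) (n : ℕ) : Set (QVec d) :=
  {v | ∃ i < n, ZZ a i v ∧ a i v < 0}

/-- Perfect flags. -/
def PerfF {d : ℕ} (F : FFlag d) : Prop :=
  F.length = d ∧ ∀ i < d, ∃ v, ZZ (fun i => F.getD i 0) i v ∧ F.getD i 0 v ≠ 0

lemma mem_chainAux {d : ℕ} (f : ℕ → (QVec d →ₗ[ℚ] ℚ)) (i : ℕ) (v : QVec d) :
    v ∈ chainAux d f i ↔ ZZ (fun i => f (d - i)) i v := by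
  induction i with
  | zero => simp [chainAux, ZZ]
  | succ i ih =>
    simp only [chainAux, Submodule.mem_inf, ih, LinearMap.mem_ker]
    constructor
    · rintro ⟨h1, h2⟩ i' hi'
      rcases Nat.lt_succ_iff_lt_or_eq.mp hi' with h | rfl
      · exact h1 i' h
      · exact h2
    · intro h
      exact ⟨fun i' hi' => h i' (by omega), h i (by omega)⟩

lemma pphs_eq {d k : ℕ} (hk : 1 ≤ k) (f : ℕ → (QVec d →ₗ[ℚ] ℚ)) :
    PPHSSet d k f = LNeg (fun i => f (d - i)) (d + 1 - k) := by
  ext v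
  simp only [PPHSSet, Set.mem_iUnion, halfComp, Set.mem_ofPred_eq, chainSub, mem_chainAux, LNeg,
    Set.mem_Icc, exists_prop]
  constructor
  · rintro ⟨j, ⟨h1, h2⟩, h3, h4⟩
    refine ⟨d - j, by omega, h3, ?_⟩
    have : d - (d - j) = j := by omega
    rw [this]; exact h4
  · rintro ⟨i, h1, h2, h3⟩
    refine ⟨d - i, ⟨by omega, by omega⟩, ?_, h3⟩
    have : d - (d - i) = i := by omega
    rw [this]; exact h2

lemma chainCond_iff {d k : ℕ} (hk : 1 ≤ k) (f : ℕ → (QVec d →ₗ[ℚ] ℚ)) :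
    ChainCond d k f ↔ ∀ i < d + 1 - k, ∃ v, ZZ (fun i => f (d - i)) i v ∧ f (d - i) v ≠ 0 := by
  constructor
  · intro h i hi
    obtain ⟨v, h1, h2⟩ := h (d - i) (by omega) (by omega)
    refine ⟨v, ?_, h2⟩
    rw [chainSub, mem_chainAux] at h1
    have : d - (d - i) = i := by omega
    rwa [this] at h1
  · intro h j h1 h2
    obtain ⟨v, h3, h4⟩ := h (d - j) (by omega)
    have : d - (d - j) = j := by omega
    rw [this] at h4
    refine ⟨v, ?_, h4⟩
    rw [chainSub, mem_chainAux]; exact h3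

lemma ZZ_smul {d : ℕ} {a : ℕ → (QVec d →ₗ[ℚ] ℚ)} {i : ℕ} {v : QVec d} (c : ℚ) (h : ZZ a i v) :
    ZZ a i (c • v) := fun i' hi' => by rw [map_smul, h i' hi', smul_zero]

lemma ZZ_add {d : ℕ} {a : ℕ → (QVec d →ₗ[ℚ] ℚ)} {i : ℕ} {v w : QVec d} (h : ZZ a i v)
    (h' : ZZ a i w) : ZZ a i (v + w) := fun i' hi' => by
  rw [map_add, h i' hi', h' i' hi', add_zero]

lemma neg_match {d n m : ℕ} (a b : ℕ → (QVec d →ₗ[ℚ] ℚ))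
    (ha : ∀ i < n, ∃ v, ZZ a i v ∧ a i v ≠ 0) (hb : ∀ i < n, ∃ v, ZZ b i v ∧ b i v ≠ 0)
    (hsub : LNeg a n ⊆ LNeg b m) : ∀ i ≤ n, (∀ v, ZZ a i v ↔ ZZ b i v) ∧
      ∀ i' < i, ∀ v, ZZ a i' v → (a i' v < 0 ↔ b i' v < 0) := by
  intro i
  induction i with
  | zero => intro _; exact ⟨fun v => by simp [ZZ], fun i' h => by omega⟩
  | succ i ih =>
    intro hi
    obtain ⟨q1, q2⟩ := ih (by omega)
    have weak : ∀ v, ZZ a i v → a i v < 0 → b i v ≤ 0 := by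
      intro v hv hneg
      obtain ⟨i2, -, h2, h3⟩ := hsub ⟨i, by omega, hv, hneg⟩
      rcases lt_trichotomy i i2 with h | h | h
      · exact (h2 i h).le
      · subst h; exact h3.le
      · have := (q1 v).mp hv i2 h
        linarith
    have strict : ∀ v, ZZ a i v → a i v < 0 → b i v < 0 := by
      intro v hv hneg
      refine lt_of_le_of_ne (weak v hv hneg) fun h0 => ?_
      obtain ⟨u, hu, hbu⟩ := hb i (by omega)
      have hu' := (q1 u).mpr hu
      -- choose the sign
      obtain ⟨u1, hu1, hbu1⟩ : ∃ u1, ZZ a i u1 ∧ 0 < b i u1 := by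
        rcases lt_or_gt_of_ne hbu with h | h
        · exact ⟨(-1 : ℚ) • u, ZZ_smul _ hu', by rw [map_smul]; simpa using h⟩
        · exact ⟨u, hu', h⟩
      have hpos : 0 < |a i u1| + 1 := by positivity
      have := weak (((|a i u1| + 1) / (-(a i v))) • v + u1)
        (ZZ_add (ZZ_smul _ hv) hu1) (by
          rw [map_add, map_smul, smul_eq_mul]
          have : (|a i u1| + 1) / (-(a i v)) * a i v = -(|a i u1| + 1) := by
            have := hneg.ne
            rw [div_mul_eq_mul_div, div_eq_iff (neg_ne_zero.mpr this)]; ring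
          rw [this]
          have := le_abs_self (a i u1)
          linarith)
      rw [map_add, map_smul, h0, smul_zero, zero_add] at this
      linarith
    have iff : ∀ v, ZZ a i v → (a i v < 0 ↔ b i v < 0) := by
      intro v hv
      refine ⟨strict v hv, fun hbv => ?_⟩
      rcases lt_trichotomy (a i v) 0 with h | h | h
      · exact h
      · exfalso
        obtain ⟨u, hu, hau⟩ := ha i (by omega)
        obtain ⟨u1, hu1, hau1⟩ : ∃ u1, ZZ a i u1 ∧ a i u1 < 0 := by
          rcases lt_or_gt_of_ne hau with h | h
          · exact ⟨u, hu, h⟩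
          · exact ⟨(-1 : ℚ) • u, ZZ_smul _ hu, by rw [map_smul]; simpa using h⟩
        have := strict ((-(b i u1 / b i v)) • v + u1) (ZZ_add (ZZ_smul _ hv) hu1) (by
          rw [map_add, map_smul, h, smul_zero, zero_add]; exact hau1)
        rw [map_add, map_smul, smul_eq_mul] at this
        have h2 : -(b i u1 / b i v) * b i v = - b i u1 := by
          have := hbv.ne
          rw [neg_mul, div_mul_cancel₀ _ this]
        rw [h2] at this
        linarith
      · have := strict ((-1 : ℚ) • v) (ZZ_smul _ hv) (by rw [map_smul]; simpa using h)
        rw [map_smul] at this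
        simp at this
        linarith
    have key : ∀ v, ZZ a i v → (a i v = 0 ↔ b i v = 0) := by
      intro v hv
      have h1 := iff v hv
      have h2 := iff ((-1 : ℚ) • v) (ZZ_smul _ hv)
      simp only [map_smul, smul_eq_mul] at h2
      constructor
      · intro h0
        rw [h0] at h1 h2
        simp at h1 h2; linarith
      · intro h0
        rw [h0] at h1 h2
        simp at h1 h2; linarith
    have split : ∀ (c : ℕ → (QVec d →ₗ[ℚ] ℚ)) v, ZZ c (i+1) v ↔ ZZ c i v ∧ c i v = 0 := by
      intro c v
      constructor
      · intro h; exact ⟨fun i' hi' => h i' (by omega), h i (by omega)⟩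
      · rintro ⟨h1, h2⟩ i' hi'
        rcases Nat.lt_succ_iff_lt_or_eq.mp hi' with h | rfl
        · exact h1 i' h
        · exact h2
    refine ⟨?_, ?_⟩
    · intro v
      rw [split, split, ← q1 v]
      exact and_congr_right fun h => key v h
    · intro i' hi' v hv
      rcases Nat.lt_succ_iff_lt_or_eq.mp hi' with h | rfl
      · exact q2 i' h v hv
      · exact iff v hv

lemma neg_eq {d n m : ℕ} (a b : ℕ → (QVec d →ₗ[ℚ] ℚ))
    (ha : ∀ i < n, ∃ v, ZZ a i v ∧ a i v ≠ 0) (hb : ∀ i < n, ∃ v, ZZ b i v ∧ b i v ≠ 0)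
    (hsub : LNeg a n ⊆ LNeg b m) : LNeg a n = LNeg b n := by
  have h := neg_match a b ha hb hsub
  ext v
  constructor
  · rintro ⟨i, hi, h1, h2⟩
    exact ⟨i, hi, ((h i hi.le).1 v).mp h1, ((h n le_rfl).2 i hi v h1).mp h2⟩
  · rintro ⟨i, hi, h1, h2⟩
    have h1' := ((h i hi.le).1 v).mpr h1
    exact ⟨i, hi, h1', ((h n le_rfl).2 i hi v h1').mpr h2⟩

lemma neg_mono {d n m : ℕ} (a : ℕ → (QVec d →ₗ[ℚ] ℚ)) (h : n ≤ m) : LNeg a n ⊆ LNeg a m := by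
  rintro v ⟨i, hi, h1⟩; exact ⟨i, by omega, h1⟩

lemma ZZ_congr {d i : ℕ} {a b : ℕ → (QVec d →ₗ[ℚ] ℚ)} (h : ∀ i' < i, a i' = b i') (v : QVec d) :
    ZZ a i v ↔ ZZ b i v := by
  constructor
  · intro h1 i' hi'; rw [← h i' hi']; exact h1 i' hi'
  · intro h1 i' hi'; rw [h i' hi']; exact h1 i' hi'

lemma neg_congr {d n : ℕ} {a b : ℕ → (QVec d →ₗ[ℚ] ℚ)} (h : ∀ i' < n, a i' = b i') :
    LNeg a n = LNeg b n := by
  ext v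
  constructor
  · rintro ⟨i, hi, h1, h2⟩
    exact ⟨i, hi, (ZZ_congr (fun i' hi' => h i' (by omega)) v).mp h1, by rw [← h i hi]; exact h2⟩
  · rintro ⟨i, hi, h1, h2⟩
    exact ⟨i, hi, (ZZ_congr (fun i' hi' => h i' (by omega)) v).mpr h1, by rw [h i hi]; exact h2⟩

lemma flagFun_sub {d : ℕ} (F : FFlag d) {i : ℕ} (hi : i < d) :
    flagFun F (d - i) = F.getD i 0 := by
  unfold flagFun
  have : d - (d - i) = i := by omega
  rw [this]

lemma pphs_flag {d n : ℕ} (F : FFlag d) (hn : n ≤ d) :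
    PPHSSet d (d + 1 - n) (flagFun F) = LNeg (fun i => F.getD i 0) n := by
  rw [pphs_eq (by omega)]
  have : d + 1 - (d + 1 - n) = n := by omega
  rw [this]
  exact neg_congr fun i hi => flagFun_sub F (by omega)

lemma colourOf_eq {d : ℕ} (F : FFlag d) : colourOf F = LNeg (fun i => F.getD i 0) d := by
  rw [← pphs_flag F le_rfl]
  have : d + 1 - d = 1 := by omega
  rw [this]; rfl

lemma lexNeg_iff {d : ℕ} (w : QVec d) (P : FFlag d) :
    LexNeg w P ↔ w ∈ LNeg (fun i => P.getD i 0) P.length := by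
  induction P with
  | nil => simp [LexNeg, LNeg]
  | cons f P ih =>
    simp only [LexNeg, ih]
    constructor
    · rintro (h | ⟨h, i, hi, h1, h2⟩)
      · exact ⟨0, by simp, fun i' hi' => by omega, h⟩
      · refine ⟨i + 1, by simpa using hi, ?_, by simpa using h2⟩
        intro i' hi'
        cases i' with
        | zero => simpa using h
        | succ i' => simpa using h1 i' (by omega)
    · rintro ⟨i, hi, h1, h2⟩
      cases i with
      | zero => exact Or.inl (by simpa using h2)
      | succ i =>
        refine Or.inr ⟨by simpa using h1 0 (by omega), i, by simpa using hi, ?_, by simpa using h2⟩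
        intro i' hi'
        simpa using h1 (i' + 1) (by omega)

lemma chainCond_flag {d k : ℕ} (hk : 1 ≤ k) {F : FFlag d} (hF : PerfF F) :
    ChainCond d k (flagFun F) := by
  rw [chainCond_iff hk]
  intro i hi
  obtain ⟨v, h1, h2⟩ := hF.2 i (by omega)
  refine ⟨v, ?_, ?_⟩
  · rw [ZZ_congr (b := fun i => F.getD i 0) fun i' hi' => flagFun_sub F (by omega)]; exact h1
  · rw [flagFun_sub F (by omega)]; exact h2

lemma mgen_all {M d : ℕ} (hM : 1 ≤ M) (S : Submodule ℚ (QVec d)) :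
    Submodule.span ℚ {v | v ∈ S ∧ QNormLe M v} = S := by
  apply le_antisymm
  · rw [Submodule.span_le]; exact fun v hv => hv.1
  · intro v hv
    have hc : 0 < 1 + ∑ i, |v i| := by positivity
    have hv' : v = (1 + ∑ i, |v i|) • ((1 + ∑ i, |v i|)⁻¹ • v) := by
      rw [smul_smul, mul_inv_cancel₀ hc.ne', one_smul]
    rw [hv']
    refine Submodule.smul_mem _ _ (Submodule.subset_span ⟨S.smul_mem _ hv, ?_⟩)
    intro i
    have h1 : |v i| ≤ ∑ i, |v i| :=
      Finset.single_le_sum (f := fun i => |v i|) (fun i _ => abs_nonneg _) (Finset.mem_univ i)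
    have h2 : (1:ℚ) ≤ M := by exact_mod_cast hM
    rw [Pi.smul_apply, smul_eq_mul, abs_mul, abs_of_pos (inv_pos.mpr hc)]
    refine le_trans ?_ h2
    rw [inv_mul_le_iff₀ hc]; linarith

lemma legal_flag {M d : ℕ} (hM : 1 ≤ M) {F : FFlag d} (hF : PerfF F) :
    IsMGenPerfectHS M d (colourOf F) := by
  refine ⟨le_rfl, by omega, flagFun F, chainCond_flag le_rfl hF, ?_, rfl⟩
  intro j h1 h2
  refine ⟨{v | v ∈ chainSub d (flagFun F) j ⊓ LinearMap.ker (flagFun F j) ∧ QNormLe M v},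
    fun v hv => hv.2, ?_⟩
  rw [mgen_all hM]
  ext v
  simp [bdComp]

lemma linv_perf_aux {M N d : ℕ} (L : List (Lev d)) : ∀ S : Submodule ℚ (QVec d), LInv M N S L →
    ∀ i < L.length, ∃ v ∈ S, ZZ (fun i => (L.map Lev.A).getD i 0) i v ∧
      (L.map Lev.A).getD i 0 v ≠ 0 := by
  induction L with
  | nil => intro S _ i hi; simp at hi
  | cons l L ih =>
    rintro S ⟨h, hL⟩ i hi
    cases i with
    | zero =>
      obtain ⟨v, h1, h2⟩ := h.hA
      exact ⟨v, h1, fun i' hi' => by omega, by simpa using h2⟩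
    | succ i =>
      obtain ⟨v, h1, h2, h3⟩ := ih _ hL i (by simpa using hi)
      refine ⟨v, h1.1, ?_, by simpa using h3⟩
      intro i' hi'
      cases i' with
      | zero => simpa using h1.2
      | succ i' => simpa using h2 i' (by omega)

lemma linv_perf {M N d : ℕ} (L : List (Lev d)) (S : Submodule ℚ (QVec d)) (h : LInv M N S L)
    (hl : L.length = d) : PerfF (L.map Lev.A) := by
  refine ⟨by simpa using hl, fun i hi => ?_⟩
  obtain ⟨v, -, h⟩ := linv_perf_aux L S h i (by omega)
  exact ⟨v, h⟩

lemma cycle_cond {V : Type} [Fintype V] [DecidableEq V] {d : ℕ} (G : MWG V d) (ρ : ℕ → Conf V d) (χ : ℕ → Colour d) (n₀ n₁ : ℕ)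
    (Fl : ℕ → FFlag d)
    (hcol : ∀ j, n₀ ≤ j → j < n₁ → (ρ j).1 ∈ G.P1 → χ j = colourOf (Fl j) ∧ PerfF (Fl j))
    (j₀ : ℕ) (h0 : n₀ ≤ j₀) (h1 : j₀ < n₁) (h2 : (ρ j₀).1 ∈ G.P1)
    (hno : ¬ CycleWinP2 G ρ χ n₀ n₁) (P : FFlag d)
    (hP : ∀ j, n₀ ≤ j → j < n₁ → (ρ j).1 ∈ G.P1 → P <+: Fl j) :
    ¬ LexNeg (intQ ((ρ n₁).2 - (ρ n₀).2)) P := by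
  intro hneg
  apply hno
  classical
  set a := fun i => (Fl j₀).getD i 0 with ha
  have hperf := (hcol j₀ h0 h1 h2).2
  set good : ℕ → Prop := fun n => n ≤ d ∧
    ∀ j, n₀ ≤ j → j < n₁ → (ρ j).1 ∈ G.P1 → LNeg a n ⊆ χ j with hgood
  have g0 : good 0 := ⟨by omega, fun j _ _ _ v ⟨i, hi, _⟩ => by omega⟩
  obtain ⟨m, hm, hmax⟩ : ∃ m, good m ∧ ∀ n, good n → n ≤ m :=
    ⟨Nat.findGreatest good d, Nat.findGreatest_spec (Nat.zero_le d) g0,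
      fun n hn => Nat.le_findGreatest hn.1 hn⟩
  have hmax' : ∀ B : Colour d, IsPartialPHS d B →
      (∀ j, n₀ ≤ j → j < n₁ → (ρ j).1 ∈ G.P1 → B ⊆ χ j) → B ⊆ LNeg a m := by
    rintro B ⟨k, hk1, hk2, g, hg, rfl⟩ hB
    rw [pphs_eq hk1] at hB ⊢
    rw [chainCond_iff hk1] at hg
    have hs := hB j₀ h0 h1 h2
    rw [(hcol j₀ h0 h1 h2).1, colourOf_eq] at hs
    have e := neg_eq _ _ hg (fun i hi => hperf.2 i (by omega)) hs
    rw [e] at hB ⊢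
    exact neg_mono _ (hmax _ ⟨by omega, hB⟩)
  refine ⟨LNeg a m, ⟨d + 1 - m, by omega, by omega, flagFun (Fl j₀),
    chainCond_flag (by have := hm.1; omega) hperf, (pphs_flag _ hm.1).symm⟩, hm.2, hmax', ?_⟩
  have hlen : ∀ j, n₀ ≤ j → j < n₁ → (ρ j).1 ∈ G.P1 →
      LNeg (fun i => P.getD i 0) P.length = LNeg (fun i => (Fl j).getD i 0) P.length := by
    intro j a1 a2 a3
    obtain ⟨t, ht⟩ := hP j a1 a2 a3
    refine neg_congr fun i hi => ?_
    rw [← ht, List.getD_append _ _ _ _ hi]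
  have hPd : P.length ≤ d := by
    have := (hP j₀ h0 h1 h2).length_le
    have h3 := hperf.1
    omega
  rw [lexNeg_iff, hlen j₀ h0 h1 h2] at hneg
  refine neg_mono a (hmax _ ⟨hPd, ?_⟩) hneg
  intro j a1 a2 a3
  rw [ha, ← hlen j₀ h0 h1 h2, hlen j a1 a2 a3, (hcol j a1 a2 a3).1, colourOf_eq]
  exact neg_mono _ hPd

/-- State of the memory of the strategy: a stack of coloured configurations and the levels. -/
structure GS (V : Type) (d : ℕ) where
  n : ℕ
  cf : ℕ → Conf V d
  fl : ℕ → FFlag d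
  L : List (Lev d)

/-- Invariant without injectivity at the top of the stack. -/
structure SPre {V : Type} [Fintype V] [DecidableEq V] {d : ℕ} (G : MWG V d) (τ : FCStratP1 V d)
    (v₀ : V) (s : GS V d) : Prop where
  inj : ∀ i j, i < j → j < s.n → (s.cf i).1 ≠ (s.cf j).1
  step : ∀ i < s.n, Step G (s.cf i) (s.cf (i+1))
  init : s.cf 0 = (v₀, 0)
  cons : ∀ i < s.n, (s.cf i).1 ∈ G.P1 → s.cf (i+1) =
    ((τ (chist G s.cf (fun j => colourOf (s.fl j)) i) (s.cf i) (colourOf (s.fl i))).2,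
     (s.cf i).2 + (τ (chist G s.cf (fun j => colourOf (s.fl j)) i) (s.cf i) (colourOf (s.fl i))).1)
  perf : ∀ i < s.n, PerfF (s.fl i)
  linv : LInv (Fintype.card V * enorm G) (Fintype.card V) ⊤ s.L
  len : s.L.length = d
  agree : ∀ i < s.n, Agree i s.L (s.fl i)

/-- The full invariant. -/
def SInv {V : Type} [Fintype V] [DecidableEq V] {d : ℕ} (G : MWG V d) (τ : FCStratP1 V d)
    (v₀ : V) (s : GS V d) : Prop :=
  SPre G τ v₀ s ∧ ∀ i < s.n, (s.cf i).1 ≠ (s.cf s.n).1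

lemma chist_congr {V : Type} [Fintype V] [DecidableEq V] {d : ℕ} (G : MWG V d)
    {ρ ρ' : ℕ → Conf V d} {χ χ' : ℕ → Colour d} {n : ℕ} (h : ∀ i < n, ρ i = ρ' i)
    (h' : ∀ i < n, χ i = χ' i) : chist G ρ χ n = chist G ρ' χ' n := by
  unfold chist
  apply List.map_congr_left
  intro i hi
  rw [List.mem_range] at hi
  rw [h i hi, h' i hi]

lemma chist_succ {V : Type} [Fintype V] [DecidableEq V] {d : ℕ} (G : MWG V d)
    (ρ : ℕ → Conf V d) (χ : ℕ → Colour d) (n : ℕ) :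
    chist G ρ χ (n+1) = chist G ρ χ n ++ [(ρ n, colOpt G (ρ n) (χ n))] := by
  simp [chist, List.range_succ]

lemma ext_play {V : Type} [Fintype V] [DecidableEq V] {d : ℕ} (G : MWG V d) (hE : 0 < enorm G)
    (τ : FCStratP1 V d) (hτ : ValidFCP1 G τ) (v₀ : V) (s : GS V d) (h : SPre G τ v₀ s) :
    ∃ ρ χ, IsPlay G v₀ ρ ∧ LegalCols G ρ χ ∧ FCConsistentP1 G τ ρ χ ∧
      (∀ j ≤ s.n, ρ j = s.cf j) ∧ (∀ j < s.n, χ j = colourOf (s.fl j)) := by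
  classical
  have hM : 1 ≤ Fintype.card V * enorm G := Nat.mul_pos (Fintype.card_pos_iff.mpr ⟨v₀⟩) hE
  choose su sv hsv using G.serial
  have hF0 := linv_perf _ _ h.linv h.len
  set F0 := s.L.map Lev.A
  set χ : ℕ → Colour d := fun j => if j < s.n then colourOf (s.fl j) else colourOf F0 with hχ
  let nx : ℕ → CHist V d → Conf V d → Conf V d := fun k hh c =>
    if k < s.n then s.cf (k+1) else
      if c.1 ∈ G.P1 then ((τ hh c (χ k)).2, c.2 + (τ hh c (χ k)).1) else (sv c.1, c.2 + su c.1)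
  let y : ℕ → CHist V d × Conf V d := fun k => Nat.rec ([], s.cf 0)
    (fun k a => (a.1 ++ [(a.2, colOpt G a.2 (χ k))], nx k a.1 a.2)) k
  set ρ : ℕ → Conf V d := fun k => (y k).2 with hρ
  have hy : ∀ k, chist G ρ χ k = (y k).1 := by
    intro k
    induction k with
    | zero => rfl
    | succ k ih => rw [chist_succ, ih]
  have hs : ∀ k, ρ (k+1) = nx k (chist G ρ χ k) (ρ k) := by
    intro k; rw [hy]
  have hcf : ∀ j ≤ s.n, ρ j = s.cf j := by
    intro j hj
    cases j with
    | zero => rfl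
    | succ j =>
      rw [hs]
      show (if j < s.n then _ else _) = _
      rw [if_pos (by omega)]
  have hχ1 : ∀ j < s.n, χ j = colourOf (s.fl j) := fun j hj => by
    rw [hχ]; exact if_pos hj
  have hch : ∀ j ≤ s.n, chist G ρ χ j = chist G s.cf (fun j => colourOf (s.fl j)) j := by
    intro j hj
    exact chist_congr G (fun i hi => hcf i (by omega)) (fun i hi => hχ1 i (by omega))
  refine ⟨ρ, χ, ⟨h.init, ?_⟩, ?_, ?_, hcf, hχ1⟩
  · intro k
    by_cases hk : k < s.n
    · rw [hcf k hk.le, hcf (k+1) hk]; exact h.step k hk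
    · rw [hs]
      show Step G (ρ k) (if k < s.n then _ else _)
      rw [if_neg hk]
      by_cases hP : (ρ k).1 ∈ G.P1
      · rw [if_pos hP]
        simp only [Step, add_sub_cancel_left]
        exact hτ _ _ _ hP
      · rw [if_neg hP]
        simp only [Step, add_sub_cancel_left]
        exact hsv _
  · intro k _
    by_cases hk : k < s.n
    · rw [hχ1 k hk]; exact legal_flag hM (h.perf k hk)
    · have : χ k = colourOf F0 := if_neg hk
      rw [this]; exact legal_flag hM hF0
  · intro k hP
    by_cases hk : k < s.n
    · rw [hcf (k+1) hk, hch k hk.le, hχ1 k hk, hcf k hk.le]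
      rw [hcf k hk.le] at hP
      exact h.cons k hk hP
    · rw [hs]
      show (if k < s.n then _ else _) = _
      rw [if_neg hk, if_pos hP]

lemma vnorm_le_iff {d : ℕ} (u : Fin d → ℤ) (B : ℕ) : vnorm u ≤ B ↔ ∀ i, |u i| ≤ B := by
  unfold vnorm
  simp only [Finset.sup_le_iff, Finset.mem_univ, true_implies]
  refine forall_congr' fun i => ?_
  rw [Int.abs_eq_natAbs]; norm_cast

lemma step_bd {V : Type} [Fintype V] [DecidableEq V] {d : ℕ} (G : MWG V d) {c c' : Conf V d}
    (h : Step G c c') (i : Fin d) : |c'.2 i - c.2 i| ≤ enorm G := by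
  have : vnorm (c'.2 - c.2) ≤ enorm G :=
    Finset.le_sup (f := fun e : V × (Fin d → ℤ) × V => vnorm e.2.1)
      ((Set.Finite.mem_toFinset _).mpr h)
  exact (vnorm_le_iff _ _).mp this i

lemma path_bd {V : Type} [Fintype V] [DecidableEq V] {d : ℕ} (G : MWG V d) (cf : ℕ → Conf V d)
    (p k : ℕ) (h : ∀ i, p ≤ i → i < p + k → Step G (cf i) (cf (i+1))) (i : Fin d) :
    |(cf (p+k)).2 i - (cf p).2 i| ≤ k * enorm G := by
  induction k with
  | zero => simp
  | succ k ih =>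
    have h1 := ih fun i h1 h2 => h i h1 (by omega)
    have h2 := step_bd G (h (p+k) (by omega) (by omega)) i
    have h3 := abs_add_le ((cf (p+k+1)).2 i - (cf (p+k)).2 i) ((cf (p+k)).2 i - (cf p).2 i)
    rw [sub_add_sub_cancel] at h3
    rw [← add_assoc]
    push_cast
    linarith

lemma spre_card {V : Type} [Fintype V] [DecidableEq V] {d : ℕ} {G : MWG V d} {τ : FCStratP1 V d}
    {v₀ : V} {s : GS V d} (h : SPre G τ v₀ s) : s.n ≤ Fintype.card V := by
  have := Fintype.card_le_of_injective (fun i : Fin s.n => (s.cf i).1) (by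
    intro i j hij
    by_contra hne
    rcases lt_or_gt_of_ne (fun h => hne (Fin.ext h) : (i:ℕ) ≠ j) with h1 | h1
    · exact h.inj i j h1 j.2 hij
    · exact h.inj j i h1 i.2 hij.symm)
  simpa using this

lemma spre_bd {V : Type} [Fintype V] [DecidableEq V] {d : ℕ} {G : MWG V d} {τ : FCStratP1 V d}
    {v₀ : V} {s : GS V d} (h : SPre G τ v₀ s) (p : ℕ) (hp : p ≤ s.n) (i : Fin d) :
    |(s.cf s.n).2 i - (s.cf p).2 i| ≤ (Fintype.card V * enorm G : ℕ) := by
  have h1 := path_bd G s.cf p (s.n - p) (fun i h1 h2 => h.step i (by omega)) i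
  rw [show p + (s.n - p) = s.n by omega] at h1
  refine h1.trans ?_
  have := spre_card h
  have h2 : (s.n - p) * enorm G ≤ Fintype.card V * enorm G := Nat.mul_le_mul_right _ (by omega)
  exact_mod_cast h2

lemma intQ_sub {d : ℕ} (a b : Fin d → ℤ) : intQ (a - b) = intQ a - intQ b := by
  ext i; simp [intQ]

lemma intQ_add {d : ℕ} (a b : Fin d → ℤ) : intQ (a + b) = intQ a + intQ b := by
  ext i; simp [intQ]

lemma close_step {V : Type} [Fintype V] [DecidableEq V] {d : ℕ} (G : MWG V d) (hE : 0 < enorm G)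
    (hcyc : EveryCycleHasP1 G) (τ : FCStratP1 V d) (hτ : ValidFCP1 G τ) (v₀ : V)
    (hw : ∀ ρ χ, IsPlay G v₀ ρ → LegalCols G ρ χ → FCConsistentP1 G τ ρ χ →
      ∀ n₀ n₁, FirstRepeat ρ n₀ n₁ → ¬ CycleWinP2 G ρ χ n₀ n₁)
    (s : GS V d) (h : SPre G τ v₀ s) :
    ∃ s', SInv G τ v₀ s' ∧ (s'.cf s'.n).1 = (s.cf s.n).1 ∧
      intQ (s'.cf s'.n).2 + totL s'.L = intQ (s.cf s.n).2 + totL s.L := by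
  classical
  by_cases hex : ∀ i < s.n, (s.cf i).1 ≠ (s.cf s.n).1
  · exact ⟨s, ⟨h, hex⟩, rfl, rfl⟩
  push Not at hex
  obtain ⟨p, hp, hpe⟩ := hex
  have hN : 1 ≤ Fintype.card V := Fintype.card_pos_iff.mpr ⟨v₀⟩
  have hM : 1 ≤ Fintype.card V * enorm G := Nat.mul_pos hN hE
  obtain ⟨ρ, χ, r1, r2, r3, r4, r5⟩ := ext_play G hE τ hτ v₀ s h
  have hrep : FirstRepeat ρ p s.n := by
    refine ⟨hp, by rw [r4 p hp.le, r4 _ le_rfl]; exact hpe, ?_⟩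
    intro i j hij hj
    rw [r4 i (by omega), r4 j (by omega)]
    exact h.inj i j hij hj
  have hno := hw ρ χ r1 r2 r3 p s.n hrep
  obtain ⟨j₁, hj1, hj2⟩ := hcyc (s.n - p) (fun j => ρ (p + j)) (by omega)
    (fun j _ => r1.2 (p + j)) (by
      simp only [add_zero]
      rw [show p + (s.n - p) = s.n by omega]; exact hrep.2.1)
  have hcc := cycle_cond G ρ χ p s.n s.fl
    (fun j _ h2 _ => ⟨r5 j h2, h.perf j h2⟩) (p + j₁) (by omega) (by omega) hj2 hno
  rw [r4 p hp.le, r4 _ le_rfl] at hcc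
  have hsmall : intQ ((s.cf s.n).2 - (s.cf p).2) ∈ SmallW (Fintype.card V * enorm G) d := by
    exact ⟨(s.cf s.n).2 - (s.cf p).2, fun i => spre_bd h p hp.le i, rfl⟩
  obtain ⟨L', l1, l2, l3, l4⟩ := linv_step hM hN p (hp.le.trans (spre_card h)) _ hsmall s.L ⊤
    {x | ∃ j, p ≤ j ∧ j < s.n ∧ (ρ j).1 ∈ G.P1 ∧ x = (j, s.fl j)} h.linv
    (by rw [finrank_top, h.len]; simp) trivial
    (by
      rintro x ⟨j, a1, a2, a3, rfl⟩
      exact ⟨a1, h.agree j a2⟩)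
    (by
      intro P hP
      apply hcc P
      intro j a1 a2 a3
      exact hP (j, s.fl j) ⟨j, a1, a2, a3, rfl⟩)
  refine ⟨⟨p, s.cf, s.fl, L'⟩, ⟨⟨?_, ?_, h.init, ?_, ?_, l1, l2.trans h.len, ?_⟩, ?_⟩, hpe, ?_⟩
  · intro i j h1 h2; exact h.inj i j h1 (lt_trans h2 hp)
  · intro i hi; exact h.step i (lt_trans hi hp)
  · intro i hi; exact h.cons i (lt_trans hi hp)
  · intro i hi; exact h.perf i (lt_trans hi hp)
  · intro i hi; exact l4 i hi _ (h.agree i (lt_trans hi hp))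
  · intro i hi; exact h.inj i p hi hp
  · show intQ (s.cf p).2 + totL L' = _
    rw [l3, intQ_sub]; abel

lemma push_step {V : Type} [Fintype V] [DecidableEq V] {d : ℕ} (G : MWG V d)
    (τ : FCStratP1 V d) (v₀ : V) (s : GS V d) (h : SInv G τ v₀ s) (u : Fin d → ℤ) (v' : V)
    (hedge : ((s.cf s.n).1, u, v') ∈ G.E)
    (hcons : (s.cf s.n).1 ∈ G.P1 → (u, v') =
      τ (chist G s.cf (fun j => colourOf (s.fl j)) s.n) (s.cf s.n) (colourOf (s.L.map Lev.A))) :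
    ∃ s', SPre G τ v₀ s' ∧ s'.cf s'.n = (v', (s.cf s.n).2 + u) ∧ s'.L = s.L := by
  obtain ⟨h, hinj⟩ := h
  set cf' : ℕ → Conf V d := fun j => if j ≤ s.n then s.cf j else (v', (s.cf s.n).2 + u) with hcf'
  set fl' : ℕ → FFlag d := fun j => if j < s.n then s.fl j else s.L.map Lev.A with hfl'
  have e1 : ∀ j ≤ s.n, cf' j = s.cf j := fun j hj => if_pos hj
  have e2 : cf' (s.n + 1) = (v', (s.cf s.n).2 + u) := if_neg (by omega)
  have e3 : ∀ j < s.n, fl' j = s.fl j := fun j hj => if_pos hj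
  have e4 : fl' s.n = s.L.map Lev.A := if_neg (by omega)
  have e5 : ∀ j ≤ s.n, chist G cf' (fun j => colourOf (fl' j)) j =
      chist G s.cf (fun j => colourOf (s.fl j)) j := by
    intro j hj
    exact chist_congr G (fun i hi => e1 i (by omega)) (fun i hi => by rw [e3 i (by omega)])
  refine ⟨⟨s.n + 1, cf', fl', s.L⟩, ⟨?_, ?_, ?_, ?_, ?_, h.linv, h.len, ?_⟩, e2, rfl⟩
  · intro i j h1 h2
    simp only at h2 ⊢
    rw [e1 i (by omega), e1 j (by omega)]
    rcases Nat.lt_succ_iff_lt_or_eq.mp h2 with h3 | rfl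
    · exact h.inj i j h1 h3
    · exact hinj i h1
  · intro i hi
    rcases Nat.lt_succ_iff_lt_or_eq.mp hi with h3 | rfl
    · simp only
      rw [e1 i (by omega), e1 (i+1) (by omega)]; exact h.step i h3
    · simp only
      rw [e1 _ le_rfl, e2]
      simpa [Step] using hedge
  · simp only
    rw [e1 0 (by omega)]; exact h.init
  · intro i hi
    rcases Nat.lt_succ_iff_lt_or_eq.mp hi with h3 | rfl
    · simp only
      rw [e1 i (by omega), e1 (i+1) (by omega), e5 i (by omega), e3 i h3]; exact h.cons i h3
    · simp only
      rw [e1 _ le_rfl, e2, e5 _ le_rfl, e4]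
      intro hP
      rw [← hcons hP]
  · intro i hi
    rcases Nat.lt_succ_iff_lt_or_eq.mp hi with h3 | rfl
    · simp only
      rw [e3 i h3]; exact h.perf i h3
    · simp only
      rw [e4]; exact linv_perf _ _ h.linv h.len
  · intro i hi
    rcases Nat.lt_succ_iff_lt_or_eq.mp hi with h3 | rfl
    · simp only
      rw [e3 i h3]; exact h.agree i h3
    · simp only
      rw [e4]; exact agree_self _ _

/-- Specification of an update of the state. -/
def Nxt {V : Type} [Fintype V] [DecidableEq V] {d : ℕ} (G : MWG V d)
    (τ : FCStratP1 V d) (v₀ : V) (s : GS V d) (u : Fin d → ℤ) (v' : V) (s' : GS V d) : Prop :=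
  SInv G τ v₀ s' ∧ (s'.cf s'.n).1 = v' ∧
    intQ (s'.cf s'.n).2 + totL s'.L = intQ (s.cf s.n).2 + totL s.L + intQ u

open Classical in
/-- Update of the state. -/
noncomputable def upd {V : Type} [Fintype V] [DecidableEq V] {d : ℕ} (G : MWG V d)
    (τ : FCStratP1 V d) (v₀ : V) (s : GS V d) (u : Fin d → ℤ) (v' : V) : GS V d :=
  if h : ∃ s', Nxt G τ v₀ s u v' s' then h.choose else s

/-- Run of the memory. -/
noncomputable def runSt {V : Type} [Fintype V] [DecidableEq V] {d : ℕ} (G : MWG V d)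
    (τ : FCStratP1 V d) (v₀ : V) (s0 : GS V d) (l : List (Conf V d)) : Option (Conf V d × GS V d) :=
  l.foldl (fun acc c => match acc with
    | none => some (c, s0)
    | some (c0, s) => some (c, upd G τ v₀ s (c.2 - c0.2) c.1)) none

lemma game_part {V : Type} [Fintype V] [DecidableEq V] {d : ℕ} (G : MWG V d) (hE : 0 < enorm G)
    (hcyc : EveryCycleHasP1 G) (v₀ : V) (hwin : P1WinsFC G v₀) :
    ∃ σ : Strat V d, ValidStrat G (G.P1 : Set V) σ ∧
      ∀ ρ, IsPlay G v₀ ρ → Consistent (G.P1 : Set V) σ ρ →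
        ∀ n i, |((ρ n).2 i : ℚ)| ≤ (Fintype.card V * enorm G : ℕ) +
          BB (Fintype.card V * enorm G) (Fintype.card V) d d := by
  obtain ⟨τ, hτ, hw⟩ := hwin
  have hN : 1 ≤ Fintype.card V := Fintype.card_pos_iff.mpr ⟨v₀⟩
  have hM : 1 ≤ Fintype.card V * enorm G := Nat.mul_pos hN hE
  obtain ⟨L0, i1, i2, i3, -⟩ := linv_init (d := d) hM hN 0 (by omega) d ⊤
    (by rw [Submodule.top_coe, Set.inter_univ]; exact smallW_span hM) (by simp) 0 trivial
    (by simp; positivity)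
  set s0 : GS V d := ⟨0, fun _ => (v₀, 0), fun _ => [], L0⟩ with hs0
  have hs0inv : SInv G τ v₀ s0 := by
    refine ⟨⟨?_, ?_, rfl, ?_, ?_, i1, i2, ?_⟩, ?_⟩
    all_goals intro i
    · intro j h1 h2; exact absurd h2 (Nat.not_lt_zero _)
    all_goals intro h2; exact absurd h2 (Nat.not_lt_zero _)
  set σ : Strat V d := fun h c =>
    let s := ((runSt G τ v₀ s0 (h ++ [c])).getD (c, s0)).2
    τ (chist G s.cf (fun j => colourOf (s.fl j)) s.n) (c.1, (s.cf s.n).2) (colourOf (s.L.map Lev.A))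
    with hσ
  refine ⟨σ, fun h c _ hc => ?_, ?_⟩
  · simp only [hσ]
    have key : ∀ hh x H, (c.1, (τ hh (c.1, x) H).1, (τ hh (c.1, x) H).2) ∈ G.E :=
      fun hh x H => hτ hh (c.1, x) H hc
    exact key _ _ _
  intro ρ hρ hcon
  have hhist : ∀ n, hist ρ (n+1) = hist ρ n ++ [ρ n] := by
    intro n; simp [hist, List.range_succ]
  have main : ∀ n, ∃ s, runSt G τ v₀ s0 (hist ρ n ++ [ρ n]) = some (ρ n, s) ∧ SInv G τ v₀ s ∧
      (s.cf s.n).1 = (ρ n).1 ∧ intQ (s.cf s.n).2 + totL s.L = intQ (ρ n).2 := by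
    intro n
    induction n with
    | zero =>
      refine ⟨s0, by simp [hist, runSt], hs0inv, by rw [hρ.1], ?_⟩
      rw [hρ.1, hs0]; simp [i3]
    | succ n ih =>
      obtain ⟨s, r1, r2, r3, r4⟩ := ih
      have hst := hρ.2 n
      have hex : ∃ s', Nxt G τ v₀ s ((ρ (n+1)).2 - (ρ n).2) (ρ (n+1)).1 s' := by
        obtain ⟨s1, a1, a2, a3⟩ := push_step G τ v₀ s r2 ((ρ (n+1)).2 - (ρ n).2) (ρ (n+1)).1
          (by rw [r3]; exact hst) (by
            intro hP
            rw [r3] at hP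
            have := hcon n hP
            have hσn : σ (hist ρ n) (ρ n) = τ (chist G s.cf (fun j => colourOf (s.fl j)) s.n)
                (s.cf s.n) (colourOf (s.L.map Lev.A)) := by
              simp only [hσ, r1, Option.getD_some]
              rw [← r3]
            rw [hσn] at this
            rw [this]
            simp)
        obtain ⟨s2, b1, b2, b3⟩ := close_step G hE hcyc τ hτ v₀ hw s1 a1
        refine ⟨s2, b1, by rw [b2, a2], ?_⟩
        rw [b3, a2, a3, intQ_add]; abel
      refine ⟨upd G τ v₀ s ((ρ (n+1)).2 - (ρ n).2) (ρ (n+1)).1, ?_, ?_⟩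
      · rw [runSt, hhist, List.foldl_append]
        rw [runSt] at r1
        rw [r1]; rfl
      · have hspec : Nxt G τ v₀ s ((ρ (n+1)).2 - (ρ n).2) (ρ (n+1)).1
            (upd G τ v₀ s ((ρ (n+1)).2 - (ρ n).2) (ρ (n+1)).1) := by
          rw [upd, dif_pos hex]; exact hex.choose_spec
        obtain ⟨c1, c2, c3⟩ := hspec
        refine ⟨c1, c2, ?_⟩
        rw [c3, r4, intQ_sub]; abel
  intro n i
  obtain ⟨s, -, r2, -, r4⟩ := main n
  have h1 := (linv_bound hM hN _ _ r2.1.linv).2 i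
  rw [r2.1.len] at h1
  have h2 := spre_bd r2.1 0 (by omega) i
  rw [r2.1.init] at h2
  simp only [Pi.zero_apply, sub_zero] at h2
  have h3 := congrFun r4 i
  simp only [Pi.add_apply, intQ] at h3
  rw [← h3]
  refine (abs_add_le _ _).trans ?_
  have h4 : |(((s.cf s.n).2 i : ℤ) : ℚ)| ≤ (Fintype.card V * enorm G : ℕ) := by
    exact_mod_cast h2
  linarith

lemma LL_le {M d : ℕ} : LL M d ≤ 2 ^ (1 + 3 * d + 2 * d ^ 2) * (M:ℚ) ^ (2 * d) := by
  have h1 : (d : ℚ) ≤ 2 ^ d := by exact_mod_cast (Nat.lt_two_pow_self (n := d)).le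
  have h2 : (d.factorial : ℚ) ≤ 2 ^ (d ^ 2) := by
    have : d.factorial ≤ d ^ d := Nat.factorial_le_pow d
    have h3 : d ^ d ≤ (2 ^ d) ^ d := Nat.pow_le_pow_left (Nat.lt_two_pow_self (n := d)).le d
    rw [← pow_mul, ← sq] at h3
    exact_mod_cast this.trans h3
  have h3 : KK M d ≤ 2 ^ (d ^ 2) * (M:ℚ) ^ d := by
    unfold KK
    gcongr
  have h0 : 0 ≤ KK M d := by unfold KK; positivity
  unfold LL
  calc 2 * (d:ℚ) * (d * 2 ^ d * KK M d ^ 2)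
      ≤ 2 * 2 ^ d * (2 ^ d * 2 ^ d * (2 ^ (d ^ 2) * (M:ℚ) ^ d) ^ 2) := by gcongr
    _ = _ := by
      rw [pow_add, pow_add]
      simp only [mul_pow, ← pow_mul]
      ring

lemma CC_le {M N d : ℕ} (hM : 1 ≤ M) (hNM : N ≤ M) (k : ℕ) :
    CC M N d k ≤ (2 ^ (6 + 7 * d + 4 * d ^ 2) * (M:ℚ) ^ (4 * d + 2)) ^ k * M ^ 2 := by
  have hMq : (1:ℚ) ≤ M := by exact_mod_cast hM
  have hNq : (N:ℚ) ≤ M := by exact_mod_cast hNM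
  have hLL0 : 0 ≤ LL M d := by unfold LL KK; positivity
  have h1 : (d : ℚ) ≤ 2 ^ d := by exact_mod_cast (Nat.lt_two_pow_self (n := d)).le
  have hX : 11 * d * LL M d ^ 2 * M ^ 2 + 1 ≤
      2 ^ (6 + 7 * d + 4 * d ^ 2) * (M:ℚ) ^ (4 * d + 2) := by
    set Z : ℚ := 2 ^ (2 + 7 * d + 4 * d ^ 2) * (M:ℚ) ^ (4 * d + 2) with hZ
    have hZ1 : 1 ≤ Z :=
      one_le_mul_of_one_le_of_one_le (one_le_pow₀ (by norm_num)) (one_le_pow₀ hMq)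
    have e1 : 11 * d * LL M d ^ 2 * M ^ 2 ≤ 11 * Z := by
      calc 11 * d * LL M d ^ 2 * M ^ 2
          ≤ 11 * 2 ^ d * (2 ^ (1 + 3 * d + 2 * d ^ 2) * (M:ℚ) ^ (2 * d)) ^ 2 * M ^ 2 := by
            gcongr
            exact LL_le
        _ = 11 * Z := by rw [hZ]; ring
    have e2 : 2 ^ (6 + 7 * d + 4 * d ^ 2) * (M:ℚ) ^ (4 * d + 2) = 16 * Z := by
      rw [hZ]; ring
    rw [e2]; linarith
  induction k with
  | zero =>
    simp only [CC, BB, pow_zero, one_mul, zero_add, sq]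
    gcongr
  | succ k ih =>
    have hb := BB_nonneg M N d k
    have e0 : 0 ≤ CC M N d k := by unfold CC; positivity
    have e1 : CC M N d (k+1) ≤ (11 * d * LL M d ^ 2 * M ^ 2 + 1) * CC M N d k := by
      have e2 : CC M N d (k+1) = 11 * d * LL M d ^ 2 * M ^ 2 * CC M N d k + N * M := by
        simp only [CC, BB]
      rw [e2, add_mul, one_mul]
      have : (N:ℚ) * M ≤ CC M N d k := by unfold CC; linarith
      linarith
    refine e1.trans ?_
    refine (mul_le_mul hX ih e0 (by positivity)).trans (le_of_eq ?_)
    rw [pow_succ]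
    ring

lemma final_bd {M N d : ℕ} (hM : 1 ≤ M) (hNM : N ≤ M) (hN : 1 ≤ N) :
    (M:ℚ) + BB M N d d ≤ (4 * M) ^ (2 * (d + 2) ^ 3) := by
  have hMq : (1:ℚ) ≤ M := by exact_mod_cast hM
  have hNq : (1:ℚ) ≤ N := by exact_mod_cast hN
  have h1 : (M:ℚ) + BB M N d d ≤ CC M N d d := by
    unfold CC; nlinarith
  refine h1.trans ((CC_le hM hNM d).trans ?_)
  have e : (2 ^ (6 + 7 * d + 4 * d ^ 2) * (M:ℚ) ^ (4 * d + 2)) ^ d * M ^ 2 =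
      2 ^ (6 * d + 7 * d ^ 2 + 4 * d ^ 3) * (M:ℚ) ^ (4 * d ^ 2 + 2 * d + 2) := by
    rw [mul_pow, ← pow_mul, ← pow_mul, mul_assoc, ← pow_add]
    congr 2 <;> ring
  have e' : (4 * (M:ℚ)) ^ (2 * (d + 2) ^ 3) =
      2 ^ (4 * (d + 2) ^ 3) * (M:ℚ) ^ (2 * (d + 2) ^ 3) := by
    rw [mul_pow, show (4:ℚ) = 2 ^ 2 by norm_num, ← pow_mul]
    congr 2; ring
  rw [e, e']
  have hexp : (d + 2) ^ 3 = d ^ 3 + 6 * d ^ 2 + 12 * d + 8 := by ring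
  apply mul_le_mul
  · exact pow_le_pow_right₀ (by norm_num) (by rw [hexp]; omega)
  · exact pow_le_pow_right₀ hMq (by rw [hexp]; omega)
  · positivity
  · positivity

/-- Lemma 7: if Player 1 has a winning strategy in the
first-cycle bounding game from `v₀`, then Player 1 has a winning strategy in
the bounding game from `v₀` which ensures that every consistent play `ρ`
satisfies `‖w(ρ|ₙ)‖ ≤ (4|V|·‖E‖)^(2(d+2)³)` for all `n`. -/
theorem p1_first_cycle_to_bounding_small_hypercube
    (V : Type) [Fintype V] [DecidableEq V] (d : ℕ) (G : MWG V d)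
    (hE : 0 < enorm G) (hcyc : EveryCycleHasP1 G) (v₀ : V)
    (hwin : P1WinsFC G v₀) :
    ∃ σ : Strat V d, ValidStrat G (G.P1 : Set V) σ ∧
      ∀ ρ, IsPlay G v₀ ρ → Consistent (G.P1 : Set V) σ ρ →
        ∀ n, vnorm ((ρ n).2) ≤ (4 * Fintype.card V * enorm G) ^ (2 * (d + 2)^3) := by
  obtain ⟨σ, h1, h2⟩ := game_part G hE hcyc v₀ hwin
  refine ⟨σ, h1, fun ρ hρ hc n => ?_⟩
  have hN : 1 ≤ Fintype.card V := Fintype.card_pos_iff.mpr ⟨v₀⟩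
  have hM : 1 ≤ Fintype.card V * enorm G := Nat.mul_pos hN hE
  have hNM : Fintype.card V ≤ Fintype.card V * enorm G := Nat.le_mul_of_pos_right _ hE
  rw [vnorm_le_iff]
  intro i
  have h3 := (h2 ρ hρ hc n i).trans (final_bd (d := d) hM hNM hN)
  rw [mul_assoc]
  exact_mod_cast h3
end

section
/- Suppose 𝓗 = H_d ∪ ⋯ ∪ H_k is a partially-perfect half-space of ℚ^d and a₁, a₂, … is an infinite sequence of vectors such that: the set {a₁, a₂, …} is finite; for each n there exists a partially-perfect half-space of ℚ^d that contains both 𝓗 and aₙ; and aₙ ∈ 𝓗 for infinitely many n. Then there exist k' ∈ {k, …, d} and N > 0 such that for each n ≥ N the partial sum a_N + ⋯ + aₙ belongs to the topological closure of H_{k'}, and the set of distances of a_N + ⋯ + aₙ from the boundary of H_{k'} (over all n ≥ N) is unbounded. In particular, the set of norms ‖a₁ + ⋯ + aₙ‖ is unbounded. -/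
theorem aux_mem_chainAux (d : ℕ) (f : ℕ → (QVec d →ₗ[ℚ] ℚ)) (v : QVec d) (n : ℕ) (hn : n ≤ d) :
    v ∈ chainAux d f n ↔ ∀ i, d - n < i → i ≤ d → f i v = 0 := by
  induction n with
  | zero =>
    simp only [chainAux, Submodule.mem_top, true_iff]
    intro i h1 h2
    omega
  | succ n ih =>
    simp only [chainAux, Submodule.mem_inf, LinearMap.mem_ker]
    rw [ih (by omega)]
    constructor
    · rintro ⟨h1, h2⟩ i hi hid
      by_cases h : i = d - n
      · rw [h]; exact h2
      · exact h1 i (by omega) hid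
    · intro h
      exact ⟨fun i hi hid => h i (by omega) hid, h _ (by omega) (by omega)⟩

theorem aux_mem_chainSub (d : ℕ) (f : ℕ → (QVec d →ₗ[ℚ] ℚ)) (v : QVec d) (j : ℕ) (hj : j ≤ d) :
    v ∈ chainSub d f j ↔ ∀ i, j < i → i ≤ d → f i v = 0 := by
  unfold chainSub
  rw [aux_mem_chainAux d f v _ (by omega)]
  have : d - (d - j) = j := by omega
  rw [this]

theorem aux_mem_half (d : ℕ) (f : ℕ → (QVec d →ₗ[ℚ] ℚ)) (v : QVec d) (j : ℕ) (hj : j ≤ d) :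
    v ∈ halfComp d f j ↔ (∀ i, j < i → i ≤ d → f i v = 0) ∧ f j v < 0 := by
  unfold halfComp
  rw [Set.mem_setOf_eq, aux_mem_chainSub d f v j hj]

theorem aux_mem_pphs (d k : ℕ) (f : ℕ → (QVec d →ₗ[ℚ] ℚ)) (v : QVec d) :
    v ∈ PPHSSet d k f ↔ ∃ j, k ≤ j ∧ j ≤ d ∧ v ∈ halfComp d f j := by
  unfold PPHSSet
  simp only [Set.mem_iUnion, Set.mem_Icc, exists_prop, and_assoc]

theorem aux_not_neg (d : ℕ) (A : Set (QVec d)) (hA : IsPartialPHS d A) (v : QVec d)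
    (h1 : v ∈ A) (h2 : -v ∈ A) : False := by
  obtain ⟨k, -, -, f, -, rfl⟩ := hA
  rw [aux_mem_pphs] at h1 h2
  obtain ⟨i, -, hid, hi⟩ := h1
  obtain ⟨j, -, hjd, hj⟩ := h2
  rw [aux_mem_half d f _ _ hid] at hi
  rw [aux_mem_half d f _ _ hjd] at hj
  simp only [map_neg] at hj
  rcases lt_trichotomy i j with h | h | h
  · have := hi.1 j h hjd
    have := hj.2
    linarith
  · subst h
    linarith [hi.2, hj.2]
  · have := hj.1 i h hid
    linarith [hi.2]

theorem aux_le (d k : ℕ) (f : ℕ → (QVec d →ₗ[ℚ] ℚ)) (v : QVec d) (k' : ℕ) (hk : k ≤ k')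
    (hk' : k' ≤ d) (hneg : -v ∉ PPHSSet d k f)
    (hv : ∀ j, k' < j → j ≤ d → v ∉ halfComp d f j) :
    (∀ i, k' < i → i ≤ d → f i v = 0) ∧ f k' v ≤ 0 := by
  have key : ∀ i, k ≤ i → i ≤ d → (∀ l, i < l → l ≤ d → f l v = 0) → f i v ≤ 0 := by
    intro i hki hid hl
    by_contra hc
    apply hneg
    rw [aux_mem_pphs]
    refine ⟨i, hki, hid, ?_⟩
    rw [aux_mem_half d f _ _ hid]
    refine ⟨fun l h1 h2 => by simp [hl l h1 h2], ?_⟩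
    simp only [map_neg]
    linarith
  have h0 : ∀ n i, d - i = n → k' < i → i ≤ d → f i v = 0 := by
    intro n
    induction n using Nat.strong_induction_on with
    | _ n ih =>
      intro i hn hi hid
      have hl : ∀ l, i < l → l ≤ d → f l v = 0 := fun l h1 h2 =>
        ih (d - l) (by omega) l rfl (by omega) h2
      have h1 := key i (by omega) hid hl
      by_contra hne
      exact hv i hi hid ((aux_mem_half d f v i hid).2 ⟨hl, lt_of_le_of_ne h1 hne⟩)
  exact ⟨fun i h1 h2 => h0 _ i rfl h1 h2, key k' hk hk' (fun l h1 h2 => h0 _ l rfl h1 h2)⟩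

theorem aux_bound (d : ℕ) (g : QVec d →ₗ[ℚ] ℚ) :
    ∃ L : ℚ, 0 < L ∧ ∀ (x : QVec d) (c : ℚ), 0 ≤ c → (∀ i, |x i| ≤ c) → |g x| ≤ L * c := by
  refine ⟨(∑ i, |g (Pi.single i 1)|) + 1, by positivity, ?_⟩
  intro x c hc hx
  have h : g x = ∑ i, x i * g (Pi.single i 1) := by
    conv_lhs => rw [← Finset.univ_sum_single x]
    rw [map_sum]
    refine Finset.sum_congr rfl fun i _ => ?_
    have : (Pi.single i (x i) : QVec d) = x i • Pi.single i (1 : ℚ) := by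
      rw [← Pi.single_smul]; simp
    rw [this, map_smul, smul_eq_mul]
  rw [h]
  calc |∑ i, x i * g (Pi.single i 1)| ≤ ∑ i, |x i * g (Pi.single i 1)| :=
        Finset.abs_sum_le_sum_abs _ _
    _ ≤ ∑ i, |g (Pi.single i 1)| * c := by
        refine Finset.sum_le_sum fun i _ => ?_
        rw [abs_mul, mul_comm]
        exact mul_le_mul_of_nonneg_left (hx i) (abs_nonneg _)
    _ = (∑ i, |g (Pi.single i 1)|) * c := by rw [Finset.sum_mul]
    _ ≤ _ := by nlinarith

theorem aux_bound_real (d : ℕ) (g : QVec d →ₗ[ℚ] ℚ) :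
    ∃ L : ℝ, 0 < L ∧ ∀ (x : QVec d), |((g x : ℚ) : ℝ)| ≤ L * ‖x‖ := by
  obtain ⟨L, hL, h⟩ := aux_bound d g
  refine ⟨L, by exact_mod_cast hL, fun x => ?_⟩
  rcases isEmpty_or_nonempty (Fin d) with he | he
  · have := h x 0 le_rfl (fun i => (IsEmpty.false i).elim)
    have h2 : |((g x : ℚ) : ℝ)| ≤ 0 := by
      have : |g x| ≤ 0 := by simpa using this
      exact_mod_cast this
    exact h2.trans (by positivity)
  · obtain ⟨i, hi⟩ := Finite.exists_max (fun i => |x i|)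
    have h1 := h x |x i| (abs_nonneg _) hi
    have h2 : |((g x : ℚ) : ℝ)| ≤ L * |((x i : ℚ) : ℝ)| := by exact_mod_cast h1
    refine h2.trans (mul_le_mul_of_nonneg_left ?_ (by exact_mod_cast hL.le))
    have h3 := norm_le_pi_norm x i
    rwa [← Rat.norm_cast_real, Real.norm_eq_abs] at h3

theorem aux_closure (d : ℕ) (S : Submodule ℚ (QVec d)) (g : QVec d →ₗ[ℚ] ℚ)
    (hg : ∃ v ∈ S, g v ≠ 0) (x : QVec d) (hx : x ∈ S) (hgx : g x ≤ 0) :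
    x ∈ closure {v | v ∈ S ∧ g v < 0} := by
  obtain ⟨v, hv, hgv⟩ : ∃ v ∈ S, g v < 0 := by
    obtain ⟨v, hv, hne⟩ := hg
    rcases lt_or_gt_of_ne hne with h | h
    · exact ⟨v, hv, h⟩
    · exact ⟨-v, S.neg_mem hv, by simpa using h⟩
  rw [Metric.mem_closure_iff]
  intro ε hε
  have hp : 0 < ‖v‖ + 1 := by positivity
  obtain ⟨t, ht0, ht⟩ := exists_rat_btwn (show (0 : ℝ) < ε / (‖v‖ + 1) by positivity)
  have ht0' : 0 < t := by exact_mod_cast ht0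
  refine ⟨x + t • v, ⟨S.add_mem hx (S.smul_mem t hv), ?_⟩, ?_⟩
  · simp only [map_add, map_smul, smul_eq_mul]
    nlinarith
  · rw [dist_eq_norm]
    have : x - (x + t • v) = -(t • v) := by abel
    rw [this, norm_neg, norm_smul, ← Rat.norm_cast_real, Real.norm_eq_abs, abs_of_pos ht0]
    rw [lt_div_iff₀ hp] at ht
    nlinarith

theorem aux_unbdd (u : ℕ → ℚ) (N : ℕ) (hle : ∀ n, N ≤ n → u n ≤ 0) (hfin : (Set.range u).Finite)
    (hinf : {n | u n < 0}.Infinite) (C : ℚ) :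
    ∃ n, N ≤ n ∧ ∑ m ∈ Finset.Icc N n, u m < C := by
  obtain ⟨e, he, hu⟩ : ∃ e : ℚ, 0 < e ∧ ∀ n, u n < 0 → u n ≤ -e := by
    have hf : (Set.range u ∩ Set.Iio 0).Finite := hfin.inter_of_left _
    have hne : (Set.range u ∩ Set.Iio 0).Nonempty := by
      obtain ⟨n, hn⟩ := hinf.nonempty
      exact ⟨u n, ⟨n, rfl⟩, hn⟩
    obtain ⟨b, hb, hmax⟩ := Set.exists_max_image _ id hf hne
    exact ⟨-b, by simpa using hb.2, fun n hn => by simpa using hmax (u n) ⟨⟨n, rfl⟩, hn⟩⟩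
  have key : ∀ m : ℕ, ∃ n, N ≤ n ∧ ∑ i ∈ Finset.Icc N n, u i ≤ -(m * e) := by
    intro m
    induction m with
    | zero => exact ⟨N, le_rfl, by simpa using hle N le_rfl⟩
    | succ m ih =>
      obtain ⟨n, hn, hs⟩ := ih
      obtain ⟨p, hp, hnp⟩ := hinf.exists_gt n
      refine ⟨p, by omega, ?_⟩
      have hsub : insert p (Finset.Icc N n) ⊆ Finset.Icc N p := by
        intro i hi
        simp only [Finset.mem_insert, Finset.mem_Icc] at hi ⊢
        omega
      have h1 : ∑ i ∈ Finset.Icc N p, u i ≤ ∑ i ∈ insert p (Finset.Icc N n), u i := by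
        have := Finset.sum_le_sum_of_subset_of_nonneg (f := fun i => - u i) hsub
          (fun i hi _ => by
            have := hle i (Finset.mem_Icc.1 hi).1
            linarith)
        simp only [Finset.sum_neg_distrib] at this
        linarith
      rw [Finset.sum_insert (by simp only [Finset.mem_Icc]; omega)] at h1
      have := hu p hp
      push_cast
      linarith
  obtain ⟨m, hm⟩ := exists_nat_gt (-C / e)
  obtain ⟨n, hn, hs⟩ := key m
  refine ⟨n, hn, ?_⟩
  rw [div_lt_iff₀ he] at hm
  linarith

/-- Claim 8: suppose `𝓗 = H_d ∪ ⋯ ∪ H_k` is a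
partially-perfect half-space of `ℚ^d` and `a₀, a₁, …` is an infinite sequence
of vectors taking finitely many values, such that for each `n` some
partially-perfect half-space contains both `𝓗` and `aₙ`, and `aₙ ∈ 𝓗` for
infinitely many `n`.  Then there are `k' ∈ {k, …, d}` and `N > 0` such that
every partial sum `a_N + ⋯ + aₙ` (for `n ≥ N`) belongs to the topological
closure of `H_{k'}` and the distances of these partial sums from the boundary
of `H_{k'}` are unbounded; in particular the norms `‖a₀ + ⋯ + a_{n-1}‖` are
unbounded. -/
theorem pphs_unbounded_sums
    (d k : ℕ) (hk1 : 1 ≤ k) (hkd : k ≤ d + 1)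
    (f : ℕ → (QVec d →ₗ[ℚ] ℚ)) (hchain : ChainCond d k f)
    (a : ℕ → QVec d)
    (hfin : (Set.range a).Finite)
    (hcont : ∀ n, ∃ A : Set (QVec d), IsPartialPHS d A ∧ PPHSSet d k f ⊆ A ∧ a n ∈ A)
    (hinf : {n | a n ∈ PPHSSet d k f}.Infinite) :
    (∃ k', k ≤ k' ∧ k' ≤ d ∧ ∃ N, 0 < N ∧
      (∀ n, N ≤ n → (∑ m ∈ Finset.Icc N n, a m) ∈ closure (halfComp d f k')) ∧
      (∀ C : ℝ, ∃ n, N ≤ n ∧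
        C < Metric.infDist (∑ m ∈ Finset.Icc N n, a m) (bdComp d f k'))) ∧
    (∀ C : ℚ, ∃ n i, C < |(∑ m ∈ Finset.range n, a m) i|) := by
  classical
  have hneg : ∀ n, -a n ∉ PPHSSet d k f := by
    intro n hn
    obtain ⟨A, hA, hsub, hm⟩ := hcont n
    exact aux_not_neg d A hA (a n) hm (hsub hn)
  obtain ⟨k', ⟨hkk', hk'd, hk'inf⟩, hmax⟩ : ∃ k', (k ≤ k' ∧ k' ≤ d ∧
      {n | a n ∈ halfComp d f k'}.Infinite) ∧
      ∀ j, k' < j → j ≤ d → {n | a n ∈ halfComp d f j}.Finite := by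
    have hex : {j | k ≤ j ∧ j ≤ d ∧ {n | a n ∈ halfComp d f j}.Infinite}.Nonempty := by
      by_contra hc
      apply hinf
      have hu : {n | a n ∈ PPHSSet d k f} =
          ⋃ j ∈ Set.Icc k d, {n | a n ∈ halfComp d f j} := by
        ext n
        simp [PPHSSet]
      rw [hu]
      refine Set.Finite.biUnion (Set.finite_Icc k d) fun j hj => ?_
      by_contra hni
      exact hc ⟨j, hj.1, hj.2, hni⟩
    have hf : {j | k ≤ j ∧ j ≤ d ∧ {n | a n ∈ halfComp d f j}.Infinite}.Finite :=
      (Set.finite_Icc k d).subset fun j hj => ⟨hj.1, hj.2.1⟩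
    obtain ⟨b, hb, hm⟩ := Set.exists_max_image _ id hf hex
    refine ⟨b, hb, fun j hj hjd => ?_⟩
    by_contra hni
    have := hm j ⟨by have := hb.1; omega, hjd, hni⟩
    simp only [id] at this
    omega
  obtain ⟨N, hN0, hN⟩ : ∃ N, 0 < N ∧
      ∀ n, N ≤ n → ∀ j, k' < j → j ≤ d → a n ∉ halfComp d f j := by
    have hfu : (⋃ j ∈ Set.Ioc k' d, {n | a n ∈ halfComp d f j}).Finite :=
      Set.Finite.biUnion (Set.finite_Ioc k' d) fun j hj => hmax j hj.1 hj.2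
    obtain ⟨B, hB⟩ := hfu.bddAbove
    refine ⟨B + 1, by omega, fun n hn j h1 h2 hm => ?_⟩
    have : n ≤ B := hB (Set.mem_biUnion (show j ∈ Set.Ioc k' d from ⟨h1, h2⟩) hm)
    omega
  have hle : ∀ n, N ≤ n → (∀ i, k' < i → i ≤ d → f i (a n) = 0) ∧ f k' (a n) ≤ 0 :=
    fun n hn => aux_le d k f (a n) k' hkk' hk'd (hneg n) (hN n hn)
  have hunb : ∀ C : ℚ, ∃ n, N ≤ n ∧ f k' (∑ m ∈ Finset.Icc N n, a m) < C := by
    intro C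
    have := aux_unbdd (fun n => f k' (a n)) N (fun n hn => (hle n hn).2)
      (by
        have := hfin.image (f k')
        rwa [← Set.range_comp] at this)
      (hk'inf.mono fun n hn => hn.2) C
    simpa only [map_sum] using this
  refine ⟨⟨k', hkk', hk'd, N, hN0, ?_, ?_⟩, ?_⟩
  · intro n hn
    refine aux_closure d (chainSub d f k') (f k') (hchain k' hkk' hk'd) _ ?_ ?_
    · refine Submodule.sum_mem _ fun m hm => ?_
      exact (aux_mem_chainSub d f _ _ hk'd).2 (hle m (Finset.mem_Icc.1 hm).1).1
    · rw [map_sum]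
      exact Finset.sum_nonpos fun m hm => (hle m (Finset.mem_Icc.1 hm).1).2
  · intro C
    obtain ⟨L, hL, hb⟩ := aux_bound_real d (f k')
    obtain ⟨q, hq⟩ := exists_rat_gt (L * (C + 1))
    obtain ⟨n, hn, hs⟩ := hunb (-q)
    refine ⟨n, hn, ?_⟩
    have hne : (bdComp d f k').Nonempty := ⟨0, Submodule.zero_mem _, map_zero _⟩
    have : C + 1 ≤ Metric.infDist (∑ m ∈ Finset.Icc N n, a m) (bdComp d f k') := by
      rw [Metric.le_infDist hne]
      intro y hy
      have h1 := hb (∑ m ∈ Finset.Icc N n, a m - y)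
      rw [map_sub, hy.2, sub_zero, ← dist_eq_norm] at h1
      have h2 : ((f k' (∑ m ∈ Finset.Icc N n, a m) : ℚ) : ℝ) < -q := by exact_mod_cast hs
      have h3 := neg_abs_le ((f k' (∑ m ∈ Finset.Icc N n, a m) : ℚ) : ℝ)
      have h4 : L * (C + 1) ≤ L * dist (∑ m ∈ Finset.Icc N n, a m) y := by linarith
      exact le_of_mul_le_mul_left h4 hL
    linarith
  · intro C
    by_contra hc
    push Not at hc
    obtain ⟨L, hL, hb⟩ := aux_bound d (f k')
    have hb' : ∀ n, |f k' (∑ m ∈ Finset.range n, a m)| ≤ L * max C 0 := fun n =>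
      hb _ _ (le_max_right _ _) fun i => (hc n i).trans (le_max_left _ _)
    obtain ⟨n, hn, hs⟩ := hunb (-(2 * (L * max C 0)))
    have hsum : ∑ m ∈ Finset.range N, a m + ∑ m ∈ Finset.Icc N n, a m =
        ∑ m ∈ Finset.range (n + 1), a m := by
      have : Finset.Icc N n = Finset.Ico N (n + 1) := by
        ext i
        simp only [Finset.mem_Icc, Finset.mem_Ico]
        omega
      rw [this, Finset.sum_range_add_sum_Ico _ (by omega)]
    have h1 := congrArg (f k') hsum
    rw [map_add] at h1
    have h2 := abs_le.1 (hb' N)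
    have h3 := abs_le.1 (hb' (n + 1))
    linarith [h2.1, h2.2, h3.1, h3.2]
end

section
/- (Small Solutions Lemma) Suppose A is a d × n matrix with entries from {−M,…,M} and mutually distinct columns. If the system A x = 0 has a solution x with all entries positive rationals, then it has a solution with all entries positive integers bounded by (2(M+1))^{(r+2)²}, where r is the rank of A. -/
theorem ssl_rows {m : ℕ} {ι : Type*} [Fintype ι] (B : Matrix (Fin m) ι ℚ) :
    ∃ f : Fin B.rank → Fin m, LinearIndependent ℚ (fun k => B (f k)) ∧
      Submodule.span ℚ (Set.range (fun k => B (f k))) = Submodule.span ℚ (Set.range B.row) := by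
  obtain ⟨g, hg, hs, hl⟩ := Submodule.exists_fun_fin_finrank_span_eq ℚ (Set.range B.row)
  choose f hf using hg
  have hr := Matrix.rank_eq_finrank_span_row B
  refine ⟨fun k => f (Fin.cast hr k), ?_, ?_⟩
  · have : (fun k => B (f (Fin.cast hr k))) = fun k => (_ : _ → ι → ℚ) (Fin.cast hr k) :=
      funext fun k => hf _
    rw [this]
    exact hl.comp _ (Fin.cast_injective hr)
  · refine Eq.trans ?_ hs
    congr 1
    ext v
    constructor
    · rintro ⟨k, rfl⟩
      exact ⟨Fin.cast hr k, (hf _).symm⟩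
    · rintro ⟨k, rfl⟩
      exact ⟨Fin.cast hr.symm k, hf _⟩

theorem ssl_card (d n M : ℕ) (A : Matrix (Fin d) (Fin n) ℤ)
    (hent : ∀ i j, |A i j| ≤ (M : ℤ))
    (hcols : Function.Injective (fun j : Fin n => fun i => A i j)) :
    n ≤ (2 * M + 1) ^ (A.map ((↑) : ℤ → ℚ)).rank := by
  obtain ⟨f, -, hs⟩ := ssl_rows (A.map ((↑) : ℤ → ℚ))
  let F : Fin n → (Fin (A.map ((↑) : ℤ → ℚ)).rank → Finset.Icc (-(M:ℤ)) M) :=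
    fun j k => ⟨A (f k) j, by simpa [abs_le] using hent (f k) j⟩
  have hF : Function.Injective F := by
    intro a b hab
    apply hcols
    funext i
    have h1 : Submodule.span ℚ (Set.range (A.map ((↑) : ℤ → ℚ)).row) ≤
        LinearMap.ker (LinearMap.proj (R := ℚ) (φ := fun _ : Fin n => ℚ) a - LinearMap.proj b) := by
      rw [← hs, Submodule.span_le]
      rintro _ ⟨k, rfl⟩
      have := congrArg Subtype.val (congrFun hab k)
      simp only [F] at this
      simp [this]
    have h2 := h1 (Submodule.subset_span ⟨i, rfl⟩)
    simp [sub_eq_zero] at h2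
    exact h2
  have := Fintype.card_le_of_injective F hF
  simp at this
  convert this using 2
  omega

theorem ssl_min {d n : ℕ} (B : Matrix (Fin d) (Fin n) ℚ) (j : Fin n) :
    ∀ (k : ℕ) (x : Fin n → ℚ), (Finset.univ.filter (fun i => x i ≠ 0)).card = k →
      (∀ i, 0 ≤ x i) → 0 < x j → B.mulVec x = 0 →
      ∃ z : Fin n → ℚ, (∀ i, 0 ≤ z i) ∧ 0 < z j ∧ B.mulVec z = 0 ∧
        ∀ w : Fin n → ℚ, (∀ i, z i = 0 → w i = 0) → w j = 0 → B.mulVec w = 0 → w = 0 := by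
  intro k
  induction k using Nat.strong_induction_on with
  | _ k ih =>
  intro x hk hx hj hBx
  by_cases H : ∀ w : Fin n → ℚ, (∀ i, x i = 0 → w i = 0) → w j = 0 → B.mulVec w = 0 → w = 0
  · exact ⟨x, hx, hj, hBx, H⟩
  push Not at H
  have H' : ∃ w : Fin n → ℚ, (∀ i, x i = 0 → w i = 0) ∧ w j = 0 ∧ B.mulVec w = 0 ∧
      ∃ i, 0 < w i := by
    obtain ⟨w, h1, h2, h3, h4⟩ := H
    obtain ⟨i, hi⟩ := Function.ne_iff.mp h4
    rcases lt_or_gt_of_ne hi with h | h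
    · refine ⟨-w, ?_, by simp [h2], by simp [Matrix.mulVec_neg, h3], i, by simpa using h⟩
      intro i hi; simp [h1 i hi]
    · exact ⟨w, h1, h2, h3, i, h⟩
  obtain ⟨w, h1, h2, h3, i0, hi0⟩ := H'
  obtain ⟨p, hp, hmin⟩ := Finset.exists_min_image (Finset.univ.filter (fun i => 0 < w i))
    (fun i => x i / w i) ⟨i0, by simpa using hi0⟩
  simp only [Finset.mem_filter, Finset.mem_univ, true_and] at hp hmin
  have hxp : x p ≠ 0 := fun h => by
    have := h1 p h
    linarith
  refine ih _ ?_ (x - (x p / w p) • w) rfl ?_ ?_ ?_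
  · rw [← hk]
    apply Finset.card_lt_card
    rw [Finset.ssubset_iff_of_subset]
    · refine ⟨p, by simpa using hxp, ?_⟩
      simp [div_mul_cancel₀ _ hp.ne']
    · intro i
      simp only [Finset.mem_filter, Finset.mem_univ, true_and]
      intro h h0
      apply h
      simp [h0, h1 i h0]
  · intro i
    simp only [Pi.sub_apply, Pi.smul_apply, smul_eq_mul, sub_nonneg]
    rcases lt_or_ge 0 (w i) with h | h
    · have := hmin i h
      rwa [le_div_iff₀ h] at this
    · exact le_trans (mul_nonpos_of_nonneg_of_nonpos (div_nonneg (hx p) hp.le) h) (hx i)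
  · simp [h2, hj]
  · simp [Matrix.mulVec_sub, Matrix.mulVec_smul, hBx, h3]

theorem ssl_elem (d n M : ℕ) (A : Matrix (Fin d) (Fin n) ℤ)
    (hent : ∀ i j, |A i j| ≤ (M : ℤ))
    (x : Fin n → ℚ) (hxpos : ∀ j, 0 < x j)
    (hx : (A.map ((↑) : ℤ → ℚ)).mulVec x = 0) (j : Fin n) :
    ∃ z : Fin n → ℤ, (∀ i, 0 ≤ z i) ∧ 0 < z j ∧ A.mulVec z = 0 ∧
      ∀ i, z i ≤ ((A.map ((↑) : ℤ → ℚ)).rank.factorial : ℤ) *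
        ((M : ℤ) + 1) ^ (A.map ((↑) : ℤ → ℚ)).rank := by
  classical
  obtain ⟨u, hu, huj, hAu, hmin⟩ := ssl_min (A.map ((↑) : ℤ → ℚ)) j _ x rfl
    (fun i => (hxpos i).le) (hxpos j) hx
  let S := {i : Fin n // i ≠ j ∧ u i ≠ 0}
  let B : Matrix (Fin d) S ℚ := (A.map ((↑) : ℤ → ℚ)).submatrix id Subtype.val
  have hext : ∀ (g : Fin n → ℚ), (∀ i, u i = 0 → g i = 0) →
      ∑ i, g i = g j + ∑ s : S, g s := by
    intro g hg
    rw [← Finset.add_sum_erase _ _ (Finset.mem_univ j)]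
    congr 1
    have h1 : ∑ s : S, g s = ∑ i ∈ Finset.univ.filter (fun i => i ≠ j ∧ u i ≠ 0), g i :=
      (Finset.sum_subtype _ (by simp) g).symm
    rw [h1]
    symm
    apply Finset.sum_subset
    · intro i; simp +contextual
    · intro i hi hi'
      apply hg
      by_contra h
      simp at hi hi'
      exact h (hi' hi)
  have hBinj : Function.Injective B.mulVec := by
    rw [← Matrix.coe_mulVecLin, ← LinearMap.ker_eq_bot, LinearMap.ker_eq_bot']
    intro v hv
    have h0 := hmin (fun i => if h : i ≠ j ∧ u i ≠ 0 then v ⟨i, h⟩ else 0) ?_ ?_ ?_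
    · funext s
      have := congrFun h0 s.1
      simpa [s.2.1, s.2.2] using this
    · intro i hi; simp [hi]
    · simp
    · funext i
      have h := congrFun hv i
      simp only [Matrix.mulVec, dotProduct, Matrix.coe_mulVecLin, B, Matrix.submatrix_apply, id] at h ⊢
      rw [hext]
      · simp only [Pi.zero_apply] at h ⊢
        refine Eq.trans ?_ h
        simp only [ne_eq, not_true_eq_false, false_and, dite_false, mul_zero, zero_add]
        apply Finset.sum_congr rfl
        intro s _
        simp [s.2.1, s.2.2]
      · intro i hi; simp [hi]
  have hrank : B.rank = Fintype.card S := by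
    rw [← Matrix.rank_transpose]
    exact LinearIndependent.rank_matrix (Matrix.mulVec_injective_iff.mp hBinj)
  have hle : Fintype.card S ≤ (A.map ((↑) : ℤ → ℚ)).rank := by
    rw [← hrank]; exact Matrix.rank_submatrix_le _ _ _
  obtain ⟨f, hf, -⟩ := ssl_rows B
  let e : S ≃ Fin B.rank := Fintype.equivFinOfCardEq hrank.symm
  let C : Matrix S S ℤ := fun s t => A (f (e s)) t
  let Cq : Matrix S S ℚ := C.map ((↑) : ℤ → ℚ)
  have hCu : IsUnit Cq := by
    rw [← Matrix.linearIndependent_rows_iff_isUnit]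
    exact hf.comp _ e.injective
  have hCinj : Function.Injective Cq.mulVec := Matrix.mulVec_injective_iff_isUnit.mpr hCu
  have hdetq : Cq.det = (C.det : ℚ) := ((Int.castRingHom ℚ).map_det C).symm
  have hdet : C.det ≠ 0 := by
    intro h
    have := (Matrix.isUnit_iff_isUnit_det _).mp hCu
    rw [hdetq, h] at this
    simp at this
  let b : S → ℤ := fun s => - A (f (e s)) j
  have hcr : ∀ s : S, ((C.cramer b s : ℤ) : ℚ) * u j = C.det * u s := by
    have h1 : Cq.mulVec (fun s => ((C.cramer b s : ℤ) : ℚ) * u j) =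
        Cq.mulVec (fun s : S => C.det * u s) := by
      funext s
      have h2 := congrFun (Matrix.mulVec_cramer C b) s
      have h3 := congrFun hAu (f (e s))
      simp only [Matrix.mulVec, dotProduct, Pi.zero_apply, Matrix.map_apply, Pi.smul_apply,
        smul_eq_mul, Cq] at h2 h3 ⊢
      rw [hext _ (fun i hi => by simp [hi])] at h3
      have h2' := congrArg ((↑) : ℤ → ℚ) h2
      simp only [Int.cast_sum, Int.cast_mul, b, Int.cast_neg] at h2'
      simp only [← mul_assoc]
      rw [← Finset.sum_mul, h2']
      have h4 : ∑ s_1 : S, (C s s_1 : ℚ) * u s_1 = - (A (f (e s)) j * u j) := by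
        simp only [C]; linarith
      have h5 : ∑ t : S, (C s t : ℚ) * C.det * u t = C.det * ∑ t : S, (C s t : ℚ) * u t := by
        rw [Finset.mul_sum]; exact Finset.sum_congr rfl fun _ _ => by ring
      rw [h5, h4]; ring
    exact fun s => congrFun (hCinj h1) s
  have hbd : ∀ D : Matrix S S ℤ, (∀ s t, |D s t| ≤ M) →
      |D.det| ≤ ((A.map ((↑) : ℤ → ℚ)).rank.factorial : ℤ) *
        ((M : ℤ) + 1) ^ (A.map ((↑) : ℤ → ℚ)).rank := by
    intro D hD
    have h := Matrix.det_le (abv := AbsoluteValue.abs) (A := D) (x := (M : ℤ) + 1)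
      (fun s t => (hD s t).trans (by simp))
    simp only [AbsoluteValue.abs_apply, nsmul_eq_mul] at h
    refine h.trans ?_
    have h6 := Nat.factorial_le hle
    have h7 : ((M:ℤ)+1) ^ Fintype.card S ≤ ((M:ℤ)+1) ^ (A.map ((↑) : ℤ → ℚ)).rank :=
      pow_le_pow_right₀ (by simp) hle
    gcongr
  let z : Fin n → ℤ := fun i => if i = j then |C.det| else
    if h : i ≠ j ∧ u i ≠ 0 then |C.cramer b ⟨i, h⟩| else 0
  have hz : ∀ i, (z i : ℚ) = |(C.det : ℚ)| / u j * u i := by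
    intro i
    simp only [z]
    split_ifs with h h'
    · subst h; field_simp; simp
    · have := congrArg abs (hcr ⟨i, h'⟩)
      rw [abs_mul, abs_mul, abs_of_pos huj, abs_of_nonneg (hu i)] at this
      field_simp
      rw [Int.cast_abs]
      linarith
    · have : u i = 0 := by tauto
      simp [this]
  refine ⟨z, ?_, ?_, ?_, ?_⟩
  · intro i
    have : (0:ℚ) ≤ z i := by
      rw [hz]; have := hu i; positivity
    exact_mod_cast this
  · simpa [z] using hdet
  · have h1 : (A.map ((↑) : ℤ → ℚ)).mulVec (fun i => (z i : ℚ)) = 0 := by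
      have : (fun i => (z i : ℚ)) = (|(C.det : ℚ)| / u j) • u := funext hz
      rw [this, Matrix.mulVec_smul, hAu, smul_zero]
    funext i
    have h2 := congrFun h1 i
    simp only [Matrix.mulVec, dotProduct, Matrix.map_apply, Pi.zero_apply] at h2 ⊢
    exact_mod_cast h2
  · intro i
    simp only [z]
    split_ifs with h h'
    · exact hbd C fun s t => hent _ _
    · rw [Matrix.cramer_apply]
      apply hbd
      intro s t
      rw [Matrix.updateCol_apply]
      split_ifs
      · simpa [b] using hent _ _
      · exact hent _ _
    · positivity

theorem ssl_arith (M r : ℕ) :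
    (2 * M + 1) ^ r * (r.factorial * (M + 1) ^ r) ≤ (2 * (M + 1)) ^ ((r + 2) ^ 2) := by
  have h1 : r.factorial ≤ (2 * (M + 1)) ^ (r * r) := by
    calc r.factorial ≤ r ^ r := Nat.factorial_le_pow r
      _ ≤ (2 ^ r) ^ r := Nat.pow_le_pow_left Nat.lt_two_pow_self.le r
      _ = 2 ^ (r * r) := by rw [← pow_mul]
      _ ≤ _ := Nat.pow_le_pow_left (by omega) _
  have h2 : (2 * M + 1) ^ r ≤ (2 * (M + 1)) ^ r := Nat.pow_le_pow_left (by omega) _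
  have h3 : (M + 1) ^ r ≤ (2 * (M + 1)) ^ r := Nat.pow_le_pow_left (by omega) _
  calc _ ≤ (2 * (M + 1)) ^ r * ((2 * (M + 1)) ^ (r * r) * (2 * (M + 1)) ^ r) := by gcongr
    _ = (2 * (M + 1)) ^ (r + (r * r + r)) := by rw [pow_add, pow_add]
    _ ≤ _ := Nat.pow_le_pow_right (by omega) (by nlinarith)

/-- Small Solutions Lemma, Lemma 14: if `A` is a `d × n`
integer matrix with entries in `{-M,…,M}` and mutually distinct columns, and
`A x = 0` has a solution in positive rationals, then it has a solution in
positive integers bounded by `(2(M+1))^((r+2)²)`, where `r` is the rank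
of `A` (over `ℚ`). -/
theorem small_solutions_lemma
    (d n M : ℕ) (A : Matrix (Fin d) (Fin n) ℤ)
    (hent : ∀ i j, |A i j| ≤ (M : ℤ))
    (hcols : Function.Injective (fun j : Fin n => fun i => A i j))
    (x : Fin n → ℚ) (hxpos : ∀ j, 0 < x j)
    (hx : (A.map ((↑) : ℤ → ℚ)).mulVec x = 0) :
    ∃ y : Fin n → ℤ,
      (∀ j, 0 < y j) ∧
      (∀ j, y j ≤ (2 * ((M : ℤ) + 1)) ^ (((A.map ((↑) : ℤ → ℚ)).rank + 2) ^ 2)) ∧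
      A.mulVec y = 0 := by

  choose z h0 h1 h2 h3 using ssl_elem d n M A hent x hxpos hx
  refine ⟨∑ k, z k, ?_, ?_, ?_⟩
  · intro j
    rw [Finset.sum_apply]
    exact Finset.sum_pos' (fun k _ => h0 k j) ⟨j, Finset.mem_univ _, h1 j⟩
  · intro j
    rw [Finset.sum_apply]
    have h := Finset.sum_le_card_nsmul Finset.univ (fun k => z k j) _ (fun k _ => h3 k j)
    refine h.trans ?_
    have hc := ssl_card d n M A hent hcols
    have ha := (Nat.mul_le_mul_right _ hc).trans (ssl_arith M (A.map ((↑) : ℤ → ℚ)).rank)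
    simp only [Finset.card_univ, Fintype.card_fin, nsmul_eq_mul]
    exact_mod_cast ha
  · rw [Matrix.mulVec_sum]
    exact Finset.sum_eq_zero fun k _ => h2 k
end

section
/- (von zur Gathen–Sieveking) Let A, b, C, d be m×n-, m×1-, p×n-, p×1-matrices respectively with integer entries. Let r be the rank of A, and s the rank of the (m+p)×n matrix obtained by stacking A over C. Let M be an upper bound on the absolute values of those (s−1)×(s−1)- or s×s-subdeterminants of the (m+p)×(n+1) matrix (A b // C d) that are formed with at least r rows from (A, b). If the system A x = b, C x ≥ d has a common integer solution, then it has one with all coefficients bounded in absolute value by (n+1)·M. -/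
section Cone
variable {V ι : Type*} [AddCommGroup V] [Module ℚ V] [FiniteDimensional ℚ V] [Finite ι]

def GSTight (f : ι → V →ₗ[ℚ] ℚ) (w : V) : Submodule ℚ V where
  carrier := {u | ∀ i, f i w = 0 → f i u = 0}
  zero_mem' := by intro i _; simp
  add_mem' := by
    intro a b ha hb i hi
    simp [ha i hi, hb i hi]
  smul_mem' := by
    intro c a ha i hi
    simp [ha i hi]

def GSConf (f : ι → V →ₗ[ℚ] ℚ) (u w : V) : Prop :=
  ∀ i, ∃ c : ℚ, 0 ≤ c ∧ f i u = c * f i w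

theorem GSConf.trans {f : ι → V →ₗ[ℚ] ℚ} {u v w : V} (h1 : GSConf f u v) (h2 : GSConf f v w) :
    GSConf f u w := by
  intro i
  obtain ⟨c, hc, h⟩ := h1 i
  obtain ⟨c', hc', h'⟩ := h2 i
  exact ⟨c * c', mul_nonneg hc hc', by rw [h, h', mul_assoc]⟩

theorem GSConf.refl (f : ι → V →ₗ[ℚ] ℚ) (w : V) : GSConf f w w :=
  fun _ => ⟨1, zero_le_one, by simp⟩

theorem gs_step (f : ι → V →ₗ[ℚ] ℚ) (hp : ∀ u, (∀ i, f i u = 0) → u = 0)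
    (w u : V) (hu : u ∈ GSTight f w) (hu0 : u ≠ 0) :
    ∃ l : ℚ, l ≠ 0 ∧ GSConf f (w - l • u) w ∧ GSTight f (w - l • u) < GSTight f w ∧
      (GSConf f u w → 0 < l) := by
  have hex : ∃ i, f i u ≠ 0 := by
    by_contra h
    push Not at h
    exact hu0 (hp u h)
  obtain ⟨i0, hi0⟩ := hex
  haveI : Nonempty ι := ⟨i0⟩
  obtain ⟨i, hi⟩ := Finite.exists_max (fun i => |f i u / f i w|)
  have hw : ∀ j, f j u ≠ 0 → f j w ≠ 0 := fun j hj h => hj (hu j h)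
  have hpos : 0 < |f i u / f i w| := by
    refine lt_of_lt_of_le ?_ (hi i0)
    exact abs_pos.mpr (div_ne_zero hi0 (hw i0 hi0))
  have hr : f i u / f i w ≠ 0 := abs_pos.mp hpos
  have hiu : f i u ≠ 0 := fun h => hr (by simp [h])
  have hiw : f i w ≠ 0 := hw i hiu
  have hconf : GSConf f (w - (f i u / f i w)⁻¹ • u) w := by
    intro j
    refine ⟨1 - (f i u / f i w)⁻¹ * (f j u / f j w), ?_, ?_⟩
    · have h1 : |(f i u / f i w)⁻¹ * (f j u / f j w)| ≤ 1 := by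
        rw [abs_mul, abs_inv, inv_mul_le_iff₀ hpos, mul_one]
        exact hi j
      linarith [le_abs_self ((f i u / f i w)⁻¹ * (f j u / f j w))]
    · by_cases hj : f j w = 0
      · simp [hj, hu j hj]
      · simp only [map_sub, map_smul, smul_eq_mul]
        field_simp
  refine ⟨(f i u / f i w)⁻¹, inv_ne_zero hr, hconf, ?_, ?_⟩
  · rw [SetLike.lt_iff_le_and_exists]
    refine ⟨?_, w, fun j hj => hj, ?_⟩
    · intro v hv j hj
      apply hv
      obtain ⟨c, _, h⟩ := hconf j
      rw [h, hj, mul_zero]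
    · intro h
      apply hiw
      apply h
      simp only [map_sub, map_smul, smul_eq_mul]
      field_simp
      simp
  · intro h
    obtain ⟨c, hc, h⟩ := h i
    rw [inv_pos]
    refine lt_of_le_of_ne ?_ hr.symm
    rw [h, mul_div_assoc, div_self hiw, mul_one]
    exact hc

theorem gs_extreme (f : ι → V →ₗ[ℚ] ℚ) (hp : ∀ u, (∀ i, f i u = 0) → u = 0) (k : ℕ) :
    ∀ w : V, w ≠ 0 → Module.finrank ℚ (GSTight f w) ≤ k →
    ∃ g, g ≠ 0 ∧ GSConf f g w ∧ GSTight f g ≤ Submodule.span ℚ {g} := by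
  induction k with
  | zero =>
    intro w hw hk
    refine ⟨w, hw, GSConf.refl f w, ?_⟩
    have : GSTight f w = ⊥ := Submodule.finrank_eq_zero.mp (by omega)
    rw [this]; exact bot_le
  | succ k ih =>
    intro w hw hk
    by_cases h : GSTight f w ≤ Submodule.span ℚ {w}
    · exact ⟨w, hw, GSConf.refl f w, h⟩
    · obtain ⟨u, hu, hus⟩ := SetLike.not_le_iff_exists.mp h
      have hu0 : u ≠ 0 := by rintro rfl; exact hus (zero_mem _)
      obtain ⟨l, hl, hc, hlt, -⟩ := gs_step f hp w u hu hu0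
      have h1 := Submodule.finrank_lt_finrank_of_lt hlt
      have hne : w - l • u ≠ 0 := by
        intro h
        apply hus
        rw [Submodule.mem_span_singleton]
        refine ⟨l⁻¹, ?_⟩
        rw [sub_eq_zero.mp h, smul_smul, inv_mul_cancel₀ hl, one_smul]
      obtain ⟨g, hg, hgc, hgt⟩ := ih _ hne (by omega)
      exact ⟨g, hg, hgc.trans hc, hgt⟩

theorem gs_decomp (f : ι → V →ₗ[ℚ] ℚ) (hp : ∀ u, (∀ i, f i u = 0) → u = 0) (k : ℕ) :
    ∀ w : V, Module.finrank ℚ (GSTight f w) ≤ k →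
    ∃ g : Fin k → V, w = ∑ i, g i ∧
      ∀ i, GSConf f (g i) w ∧ GSTight f (g i) ≤ Submodule.span ℚ {g i} := by
  induction k with
  | zero =>
    intro w hk
    have h : GSTight f w = ⊥ := Submodule.finrank_eq_zero.mp (by omega)
    have hw : w ∈ GSTight f w := fun j hj => hj
    rw [h, Submodule.mem_bot] at hw
    exact ⟨fun _ => 0, by simp [hw], fun i => i.elim0⟩
  | succ k ih =>
    intro w hk
    by_cases hw : w = 0
    · refine ⟨fun _ => 0, by simp [hw], fun i => ⟨fun j => ⟨0, le_rfl, by simp⟩, ?_⟩⟩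
      intro u hu
      have : u = 0 := hp u (fun i => hu i (by simp))
      simp [this]
    · obtain ⟨g, hg, hgc, hgt⟩ := gs_extreme f hp _ w hw le_rfl
      have hgm : g ∈ GSTight f w := by
        intro j hj
        obtain ⟨c, _, h⟩ := hgc j
        rw [h, hj, mul_zero]
      obtain ⟨l, hl, hc, hlt, hpos⟩ := gs_step f hp w g hgm hg
      have hl' := hpos hgc
      have h1 := Submodule.finrank_lt_finrank_of_lt hlt
      obtain ⟨g', hs, hg'⟩ := ih (w - l • g) (by omega)
      refine ⟨Fin.cons (l • g) g', ?_, ?_⟩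
      · rw [Fin.sum_univ_succ]
        simp only [Fin.cons_zero, Fin.cons_succ]
        rw [← hs]; abel
      · intro i
        refine Fin.cases ?_ (fun i => ?_) i
        · simp only [Fin.cons_zero]
          constructor
          · intro j
            obtain ⟨c, hc0, h⟩ := hgc j
            exact ⟨l * c, mul_nonneg hl'.le hc0, by simp [h, mul_assoc]⟩
          · intro u hu
            have : u ∈ GSTight f g := fun j hj => hu j (by simp [hj])
            have := hgt this
            rw [Submodule.mem_span_singleton] at this ⊢
            obtain ⟨a, rfl⟩ := this
            exact ⟨a * l⁻¹, by rw [smul_smul, mul_assoc, inv_mul_cancel₀ hl, mul_one]⟩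
        · simp only [Fin.cons_succ]
          exact ⟨(hg' i).1.trans hc, (hg' i).2⟩

end Cone

theorem gs_finrank_ncard {ι V : Type*} [Finite ι] [AddCommGroup V] [Module ℚ V]
    (v : ι → V) (b : Set ι) (h : LinearIndepOn ℚ v b) :
    Module.finrank ℚ (Submodule.span ℚ (v '' b)) = b.ncard := by
  classical
  have := Fintype.ofFinite b
  have h1 := finrank_span_eq_card (R := ℚ) (b := fun x : b => v x) h
  rw [← Set.image_eq_range] at h1
  rw [h1, ← Nat.card_eq_fintype_card]
  rfl

theorem gs_rank_inj {α : Type*} [Finite α] {t : ℕ} (N : Matrix α (Fin t) ℚ)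
    (h : ∀ u, N.mulVec u = 0 → u = 0) : N.rank = t := by
  have hinj : Function.Injective N.mulVecLin := by
    rw [injective_iff_map_eq_zero]
    intro u hu
    exact h u hu
  rw [Matrix.rank, LinearMap.finrank_range_of_inj hinj]
  simp

theorem gs_rows {α β : Type*} [Finite α] [Finite β] {t r : ℕ} (N : Matrix (α ⊕ β) (Fin t) ℚ)
    (S : Set (α ⊕ β)) (hS : ∀ i, Sum.inl i ∈ S)
    (hker : ∀ u, (∀ i ∈ S, (N.mulVec u) i = 0) → u = 0)
    (hr : r ≤ (N.submatrix Sum.inl id : Matrix α (Fin t) ℚ).rank) :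
    ∃ ri : Fin t → α ⊕ β, Function.Injective ri ∧ (∀ j, ri j ∈ S) ∧
      r ≤ (Finset.univ.filter fun j => (ri j).isLeft = true).card ∧
      (N.submatrix ri id).det ≠ 0 := by
  classical
  obtain ⟨b0, hb0, -, hsp0, hli0⟩ := exists_linearIndepOn_extension (K := ℚ) (v := N.row)
    (s := ∅) (t := Set.range (Sum.inl : α → α ⊕ β)) (linearIndepOn_empty _ _) (Set.empty_subset _)
  obtain ⟨b, hb, hb0b, hsp, hli⟩ := exists_linearIndepOn_extension (K := ℚ) (v := N.row)
    (s := b0) (t := S) hli0 (hb0.trans (by rintro _ ⟨i, rfl⟩; exact hS i))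
  have hbt : b.ncard = t := by
    have h1 : (N.submatrix (Subtype.val : S → α ⊕ β) id).rank = t := by
      apply gs_rank_inj
      intro u hu
      apply hker
      intro i hi
      exact congrFun hu ⟨i, hi⟩
    rw [Matrix.rank_eq_finrank_span_row] at h1
    have h2 : Set.range (N.submatrix (Subtype.val : S → α ⊕ β) id).row = N.row '' S := by
      rw [Set.image_eq_range]; rfl
    have h3 : Submodule.span ℚ (N.row '' S) = Submodule.span ℚ (N.row '' b) :=
      le_antisymm (Submodule.span_le.mpr hsp) (Submodule.span_mono (Set.image_mono hb))
    rw [h2, h3, gs_finrank_ncard _ _ hli] at h1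
    exact h1
  have hb0r : r ≤ b0.ncard := by
    refine hr.trans ?_
    rw [Matrix.rank_eq_finrank_span_row, ← gs_finrank_ncard _ _ hli0]
    apply Submodule.finrank_mono
    rw [Submodule.span_le]
    rintro _ ⟨i, rfl⟩
    exact hsp0 ⟨Sum.inl i, ⟨i, rfl⟩, rfl⟩
  have e : Fin t ≃ b := (Finite.equivFinOfCardEq (by rw [← hbt]; rfl)).symm
  refine ⟨fun j => e j, fun x y h => e.injective (Subtype.ext h), fun j => hb (e j).2, ?_, ?_⟩
  · refine hb0r.trans ?_
    have : b0 ⊆ ((Finset.univ.filter fun j => ((e j : α ⊕ β)).isLeft = true).image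
        (fun j => (e j : α ⊕ β)) : Finset (α ⊕ β)) := by
      intro x hx
      simp only [Finset.coe_image, Set.mem_image, Finset.coe_filter, Set.mem_setOf_eq,
        Finset.mem_univ, true_and]
      refine ⟨e.symm ⟨x, hb0b hx⟩, ?_, by simp⟩
      obtain ⟨i, rfl⟩ := hb0 hx
      simp
    have h2 := Set.ncard_le_ncard this (Finset.finite_toSet _)
    rw [Set.ncard_coe_finset] at h2
    exact h2.trans Finset.card_image_le
  · have h3 : LinearIndependent ℚ (N.submatrix (fun j => (e j : α ⊕ β)) id).row :=
      LinearIndependent.comp (v := fun x : b => N.row x) hli e e.injective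
    rw [Matrix.linearIndependent_rows_iff_isUnit, Matrix.isUnit_iff_isUnit_det] at h3
    exact h3.ne_zero

theorem gs_ext (m n p r s : ℕ) (M : ℤ) (G : Matrix (Fin m ⊕ Fin p) (Fin n ⊕ Fin 1) ℤ)
    (GQ : Matrix (Fin m ⊕ Fin p) (Fin n ⊕ Fin 1) ℚ) (hGQ : GQ = G.map ((↑) : ℤ → ℚ))
    (hr : r = (GQ.submatrix Sum.inl Sum.inl).rank)
    (hs : s = (GQ.submatrix id Sum.inl).rank)
    (hM : ∀ t : ℕ, (t = s - 1 ∨ t = s) →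
      ∀ (ri : Fin t → Fin m ⊕ Fin p) (ci : Fin t → Fin n ⊕ Fin 1),
        Function.Injective ri → Function.Injective ci →
        r ≤ (Finset.univ.filter fun j => (ri j).isLeft = true).card →
        |(G.submatrix ri ci).det| ≤ M)
    (I : Set (Fin n)) (hIs : I.ncard = s)
    (hI : ∀ j, (GQ.submatrix id Sum.inl).col j ∈
      Submodule.span ℚ ((GQ.submatrix id Sum.inl).col '' I))
    (g : Fin n ⊕ Fin 1 → ℚ) (hg0 : g ≠ 0) (hgA : ∀ i, (GQ.mulVec g) (Sum.inl i) = 0)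
    (hext : ∀ u, (∀ i, (GQ.mulVec g) i = 0 → (GQ.mulVec u) i = 0) →
      (∀ j, j ∉ I → g (Sum.inl j) = 0 → u (Sum.inl j) = 0) →
      (g (Sum.inr 0) = 0 → u (Sum.inr 0) = 0) → ∃ a : ℚ, a • g = u) :
    ∃ z : Fin n ⊕ Fin 1 → ℤ, ∃ μ : ℚ, 0 < μ ∧ (∀ k, g k = μ * z k) ∧ ∀ k, |z k| ≤ M := by
  classical
  have hc : ∃ c, g c ≠ 0 ∧ (g (Sum.inr 0) ≠ 0 → c = Sum.inr 0) := by
    by_cases h : g (Sum.inr 0) = 0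
    · obtain ⟨c, hc⟩ := Function.ne_iff.mp hg0
      exact ⟨c, hc, fun h' => absurd h h'⟩
    · exact ⟨_, h, fun _ => rfl⟩
  obtain ⟨c, hc, hc'⟩ := hc
  set J : Finset (Fin n) := Finset.univ.filter
    (fun j => (j ∈ I ∨ g (Sum.inl j) ≠ 0) ∧ Sum.inl j ≠ c) with hJ
  obtain ⟨t, ht⟩ : ∃ t, t = J.card := ⟨_, rfl⟩
  have e : Fin t ≃ J := (Finset.equivFinOfCardEq ht.symm).symm
  set ci : Fin t → Fin n ⊕ Fin 1 := fun i => Sum.inl (e i : Fin n) with hci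
  have hinj : Function.Injective ci := fun x y h =>
    e.injective (Subtype.ext (Sum.inl_injective h))
  have hcJ : ∀ i, ci i ≠ c := by
    intro i
    exact (Finset.mem_filter.mp (e i).2).2.2
  have hrange : ∀ j ∈ J, ∃ i, ci i = Sum.inl j := by
    intro j hj
    exact ⟨e.symm ⟨j, hj⟩, by simp [hci]⟩
  have hoff : ∀ k, k ≠ c → k ∉ Set.range ci → g k = 0 := by
    intro k hk hkr
    by_contra hgk
    rcases k with j | j
    · apply hkr
      apply hrange
      simp [hJ, hgk, hk]
    · obtain rfl : j = 0 := Subsingleton.elim _ _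
      exact hk (hc' hgk).symm
  have hstar : ∀ i, GQ.mulVec g i = GQ i c * g c + ∑ j, GQ i (ci j) * g (ci j) := by
    intro i
    have h1 : ∑ j, GQ i (ci j) * g (ci j) = ∑ k, if k = c then 0 else GQ i k * g k := by
      apply Fintype.sum_of_injective ci hinj
      · intro k hk
        split_ifs with h
        · rfl
        · rw [hoff k h hk, mul_zero]
      · intro j
        rw [if_neg (hcJ j)]
    rw [h1]
    have h2 : GQ i c * g c = ∑ k, if k = c then GQ i k * g k else 0 := by simp
    rw [h2, ← Finset.sum_add_distrib]
    rw [Matrix.mulVec, dotProduct]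
    apply Finset.sum_congr rfl
    intro k _
    split_ifs <;> simp
  set N : Matrix (Fin m ⊕ Fin p) (Fin t) ℚ := GQ.submatrix id ci with hN
  have hker : ∀ u, (∀ i ∈ {i | GQ.mulVec g i = 0}, (N.mulVec u) i = 0) → u = 0 := by
    intro u hu
    have hū : ∀ i, GQ.mulVec (Function.extend ci u 0) i = N.mulVec u i := by
      intro i
      symm
      apply Fintype.sum_of_injective ci hinj
      · intro k hk
        rw [Function.extend_apply' _ _ _ hk]
        simp
      · intro j
        rw [hinj.extend_apply]
        rfl
    obtain ⟨a, ha⟩ := hext (Function.extend ci u 0) (fun i hi => by rw [hū]; exact hu i hi)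
      (by
        intro j hj hgj
        rw [Function.extend_apply']
        · rfl
        · rintro ⟨i, hi⟩
          have h1 := (e i).2
          have h2 : (e i : Fin n) = j := Sum.inl_injective hi
          rw [h2, hJ, Finset.mem_filter] at h1
          rcases h1.2.1 with h | h
          · exact hj h
          · exact h hgj)
      (by
        intro _
        rw [Function.extend_apply']
        · rfl
        · rintro ⟨i, hi⟩
          cases hi)
    have h0 : a = 0 := by
      have h1 := congrFun ha c
      rw [Function.extend_apply' _ _ _ (by rintro ⟨i, hi⟩; exact hcJ i hi)] at h1
      simpa [hc] using h1
    funext i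
    have h1 := congrFun ha (ci i)
    rw [hinj.extend_apply, h0] at h1
    simpa using h1.symm
  have hts : t ≤ s := by
    have h1 : N.rank = t := gs_rank_inj N (fun u hu => hker u (fun i _ => congrFun hu i))
    rw [← h1, hs, Matrix.rank_eq_finrank_span_cols, Matrix.rank_eq_finrank_span_cols]
    apply Submodule.finrank_mono
    apply Submodule.span_mono
    rintro _ ⟨i, rfl⟩
    exact ⟨e i, rfl⟩
  have hst : s ≤ t + 1 := by
    rw [← hIs, ht]
    rcases c with c0 | c0
    · have : I ⊆ (insert c0 J : Finset (Fin n)) := by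
        intro i hi
        by_cases h : i = c0
        · simp [h]
        · simp [hJ, hi, h]
      have h2 := Set.ncard_le_ncard this (Finset.finite_toSet _)
      rw [Set.ncard_coe_finset] at h2
      exact h2.trans (Finset.card_insert_le _ _)
    · have : I ⊆ (J : Finset (Fin n)) := by
        intro i hi
        simp [hJ, hi]
      have h2 := Set.ncard_le_ncard this (Finset.finite_toSet _)
      rw [Set.ncard_coe_finset] at h2
      omega
  have hrk : r ≤ (N.submatrix Sum.inl id : Matrix (Fin m) (Fin t) ℚ).rank := by
    rw [hr, Matrix.rank_eq_finrank_span_cols, Matrix.rank_eq_finrank_span_cols]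
    apply Submodule.finrank_mono
    rw [Submodule.span_le]
    rintro _ ⟨j, rfl⟩
    have h1 := Submodule.mem_map_of_mem
      (f := LinearMap.funLeft ℚ ℚ (Sum.inl : Fin m → Fin m ⊕ Fin p)) (hI j)
    rw [Submodule.map_span] at h1
    refine Submodule.span_le.mpr ?_ h1
    rintro _ ⟨_, ⟨i, hi, rfl⟩, rfl⟩
    by_cases h : Sum.inl i = c
    · have hsum : ∑ k, (-(g c)⁻¹ * g (ci k)) •
          (N.submatrix Sum.inl id : Matrix (Fin m) (Fin t) ℚ).col k =
          LinearMap.funLeft ℚ ℚ (Sum.inl : Fin m → Fin m ⊕ Fin p)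
            ((GQ.submatrix id Sum.inl).col i) := by
        funext a
        have h3 := hstar (Sum.inl a)
        rw [hgA] at h3
        have h4 : ∑ j, GQ (Sum.inl a) (ci j) * g (ci j) = - (GQ (Sum.inl a) c * g c) := by linarith
        have h5 : ∑ k, -(g c)⁻¹ * g (ci k) * GQ (Sum.inl a) (ci k) =
            -(g c)⁻¹ * ∑ j, GQ (Sum.inl a) (ci j) * g (ci j) := by
          rw [Finset.mul_sum]
          apply Finset.sum_congr rfl
          intro k _
          ring
        simp only [Finset.sum_apply, Pi.smul_apply, smul_eq_mul, LinearMap.funLeft_apply,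
          Matrix.col_apply, Matrix.submatrix_apply, hN, id, h]
        rw [h5, h4]
        field_simp
      rw [← hsum]
      apply Submodule.sum_mem
      intro k _
      exact Submodule.smul_mem _ _ (Submodule.subset_span ⟨k, rfl⟩)
    · obtain ⟨k, hk⟩ := hrange i (by simp [hJ, hi, h])
      apply Submodule.subset_span
      refine ⟨k, ?_⟩
      funext a
      simp [hN, hk, LinearMap.funLeft_apply]
  obtain ⟨ri, hri, hriS, hril, hdet⟩ := gs_rows N {i | GQ.mulVec g i = 0} hgA hker hrk
  have hbd := hM t (by omega) ri
  set Ni := G.submatrix ri ci with hNi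
  have hNN : N.submatrix ri id = Ni.map ((↑) : ℤ → ℚ) := by
    rw [hN, hGQ]; rfl
  have hDelta : ((Ni.det : ℤ) : ℚ) = (N.submatrix ri id).det := by
    rw [hNN]; exact Int.cast_det _
  set cr : Fin t → ℤ := Ni.cramer (fun j => G (ri j) c) with hcr
  have hcrQ : ∀ i, ((cr i : ℤ) : ℚ) = (N.submatrix ri id).cramer (fun j => GQ (ri j) c) i := by
    intro i
    rw [hcr, Matrix.cramer_apply, Matrix.cramer_apply, Int.cast_det, hNN]
    congr 1
    ext a b
    by_cases hb : b = i
    · subst hb; simp [hGQ]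
    · simp [Matrix.updateCol_ne hb]
  have hcrb : ∀ i, |cr i| ≤ M := by
    intro i
    have h1 := hbd (Function.update ci i c) hri (by
      intro x y hxy
      by_cases hx : x = i <;> by_cases hy : y = i
      · rw [hx, hy]
      · subst hx
        rw [Function.update_self, Function.update_of_ne hy] at hxy
        exact absurd hxy.symm (hcJ y)
      · subst hy
        rw [Function.update_self, Function.update_of_ne hx] at hxy
        exact absurd hxy (hcJ x)
      · rw [Function.update_of_ne hx, Function.update_of_ne hy] at hxy
        exact hinj hxy) hril
    rw [hcr, Matrix.cramer_apply]
    convert h1 using 3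
    ext a b
    by_cases hb : b = i
    · subst hb; simp
    · simp [Matrix.updateCol_ne hb, Function.update_of_ne hb, hNi]
  have hDb : |Ni.det| ≤ M := hbd ci hri hinj hril
  have hD0 : ((Ni.det : ℤ) : ℚ) ≠ 0 := by rw [hDelta]; exact hdet
  have hkey : ∀ i, (Ni.det : ℚ) * g (ci i) = - g c * cr i := by
    intro i
    have h1 : (N.submatrix ri id).mulVec (fun j => g (ci j)) =
        (- g c) • (fun j => GQ (ri j) c) := by
      funext j
      have h2 := hstar (ri j)
      rw [show GQ.mulVec g (ri j) = 0 from hriS j] at h2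
      simp only [Matrix.mulVec, dotProduct, Matrix.submatrix_apply, hN, id, Pi.smul_apply,
        smul_eq_mul]
      linarith
    have h2 := congrArg (fun v => (N.submatrix ri id).cramer v i) h1
    simp only [map_smul, Pi.smul_apply, smul_eq_mul, ← hcrQ] at h2
    rw [Matrix.cramer_eq_adjugate_mulVec, Matrix.mulVec_mulVec, Matrix.adjugate_mul,
      Matrix.smul_mulVec, Matrix.one_mulVec] at h2
    rw [hDelta]
    exact h2
  have hz : ∃ z : Fin n ⊕ Fin 1 → ℤ, (∀ k, g k = (g c / Ni.det) * z k) ∧ ∀ k, |z k| ≤ M := by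
    refine ⟨fun k => if k = c then Ni.det else Function.extend ci (fun i => - cr i) 0 k, ?_, ?_⟩
    · intro k
      by_cases hk : k = c
      · simp only [hk, if_true]
        field_simp
      · simp only [hk, if_false]
        by_cases hkr : k ∈ Set.range ci
        · obtain ⟨i, rfl⟩ := hkr
          rw [hinj.extend_apply]
          have := hkey i
          rw [Int.cast_neg, div_mul_eq_mul_div, eq_div_iff hD0]
          linarith
        · rw [hoff k hk hkr, Function.extend_apply' _ _ _ hkr]
          simp
    · intro k
      by_cases hk : k = c
      · simp only [hk, if_true]
        exact hDb
      · simp only [hk, if_false]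
        by_cases hkr : k ∈ Set.range ci
        · obtain ⟨i, rfl⟩ := hkr
          rw [hinj.extend_apply, abs_neg]
          exact hcrb i
        · rw [Function.extend_apply' _ _ _ hkr]
          simpa using (abs_nonneg _).trans hDb
  obtain ⟨z, hz1, hz2⟩ := hz
  rcases lt_or_gt_of_ne (div_ne_zero hc hD0) with h | h
  · refine ⟨fun k => - z k, -(g c / Ni.det), by linarith, ?_, ?_⟩
    · intro k
      rw [hz1 k]; push_cast; ring
    · intro k
      rw [abs_neg]; exact hz2 k
  · exact ⟨z, _, h, hz1, hz2⟩

/-- von zur Gathen–Sieveking, Theorem 15: let `A, b, C, d`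
be integer matrices of respective sizes `m×n`, `m×1`, `p×n`, `p×1`, let `r` be
the rank of `A` and `s` the rank of `A` stacked over `C` (over `ℚ`), and let
`M` bound the absolute values of those `(s-1)×(s-1)`- and `s×s`-subdeterminants
of the `(m+p)×(n+1)` matrix `(A b // C d)` formed with at least `r` rows from
`(A, b)`.  If `A x = b`, `C x ≥ d` have a common integer solution, then they
have one with coefficients bounded by `(n+1)·M`. -/
theorem von_zur_gathen_sieveking
    (m n p : ℕ) (A : Matrix (Fin m) (Fin n) ℤ) (b : Fin m → ℤ)
    (C : Matrix (Fin p) (Fin n) ℤ) (dvec : Fin p → ℤ)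
    (r s : ℕ) (M : ℤ)
    (hr : r = (A.map ((↑) : ℤ → ℚ)).rank)
    (hs : s = ((Matrix.fromRows A C).map ((↑) : ℤ → ℚ)).rank)
    (hM : ∀ t : ℕ, (t = s - 1 ∨ t = s) →
      ∀ (ri : Fin t → Fin m ⊕ Fin p) (ci : Fin t → Fin n ⊕ Fin 1),
        Function.Injective ri → Function.Injective ci →
        r ≤ (Finset.univ.filter fun j => (ri j).isLeft = true).card →
        |((Matrix.fromBlocks A (Matrix.of fun i (_ : Fin 1) => b i)
            C (Matrix.of fun i (_ : Fin 1) => dvec i)).submatrix ri ci).det| ≤ M)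
    (hsol : ∃ x : Fin n → ℤ, A.mulVec x = b ∧ ∀ i, dvec i ≤ C.mulVec x i) :
    ∃ x : Fin n → ℤ, A.mulVec x = b ∧ (∀ i, dvec i ≤ C.mulVec x i) ∧
      ∀ j, |x j| ≤ ((n : ℤ) + 1) * M := by
  classical
  obtain ⟨x, hxA, hxC⟩ := hsol
  set G := Matrix.fromBlocks A (Matrix.of fun i (_ : Fin 1) => b i)
            C (Matrix.of fun i (_ : Fin 1) => dvec i) with hG
  obtain ⟨GQ, hGQ⟩ : ∃ GQ, GQ = G.map ((↑) : ℤ → ℚ) := ⟨_, rfl⟩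
  have hr' : r = (GQ.submatrix Sum.inl Sum.inl).rank := by
    rw [hr, hGQ]; rfl
  have hDD : (Matrix.fromRows A C).map ((↑) : ℤ → ℚ) = GQ.submatrix id Sum.inl := by
    rw [hGQ, hG]
    ext i j
    rcases i with i | i <;> simp
  rw [hDD] at hs
  set D := GQ.submatrix id (Sum.inl : Fin n → Fin n ⊕ Fin 1) with hD
  obtain ⟨I, -, -, hsp, hli⟩ := exists_linearIndepOn_extension (K := ℚ) (v := D.col)
    (s := ∅) (t := Set.univ) (linearIndepOn_empty _ _) (Set.empty_subset _)
  have hI : ∀ j, D.col j ∈ Submodule.span ℚ (D.col '' I) := fun j => hsp ⟨j, trivial, rfl⟩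
  have hIs : I.ncard = s := by
    rw [hs, Matrix.rank_eq_finrank_span_cols, ← gs_finrank_ncard _ _ hli]
    apply le_antisymm
    · exact Submodule.finrank_mono (Submodule.span_mono (Set.image_subset_range _ _))
    · apply Submodule.finrank_mono
      rw [Submodule.span_le]
      rintro _ ⟨j, rfl⟩
      exact hI j
  -- homogeneous evaluation
  have hGA : ∀ (y : Fin n → ℤ) i, GQ.mulVec (Sum.elim (fun j => (y j : ℚ)) (fun _ => -1)) (Sum.inl i)
      = ((A.mulVec y i - b i : ℤ) : ℚ) := by
    intro y i
    simp [hGQ, hG, Matrix.mulVec, dotProduct, Fintype.sum_sum_type, sub_eq_add_neg]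
  have hGC : ∀ (y : Fin n → ℤ) i, GQ.mulVec (Sum.elim (fun j => (y j : ℚ)) (fun _ => -1)) (Sum.inr i)
      = ((C.mulVec y i - dvec i : ℤ) : ℚ) := by
    intro y i
    simp [hGQ, hG, Matrix.mulVec, dotProduct, Fintype.sum_sum_type, sub_eq_add_neg]
  set w : Fin n ⊕ Fin 1 → ℚ := Sum.elim (fun j => (x j : ℚ)) (fun _ => -1) with hw
  let f : ((Fin m ⊕ Fin p) ⊕ ({j : Fin n // j ∉ I} ⊕ Fin 1)) → (Fin n ⊕ Fin 1 → ℚ) →ₗ[ℚ] ℚ :=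
    Sum.elim (fun i => (LinearMap.proj i).comp GQ.mulVecLin)
      (Sum.elim (fun j => LinearMap.proj (Sum.inl j.1)) (fun _ => LinearMap.proj (Sum.inr 0)))
  have hf1 : ∀ i u, f (Sum.inl i) u = GQ.mulVec u i := fun i u => rfl
  have hf2 : ∀ j u, f (Sum.inr (Sum.inl j)) u = u (Sum.inl j.1) := fun i u => rfl
  have hf3 : ∀ j u, f (Sum.inr (Sum.inr j)) u = u (Sum.inr 0) := fun i u => rfl
  have hp : ∀ u, (∀ i, f i u = 0) → u = 0 := by
    intro u hu
    have hlast : u (Sum.inr 0) = 0 := hu (Sum.inr (Sum.inr 0))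
    have hout : ∀ j, j ∉ I → u (Sum.inl j) = 0 := fun j hj => hu (Sum.inr (Sum.inl ⟨j, hj⟩))
    have hin : ∀ j, j ∈ I → u (Sum.inl j) = 0 := by
      have := Fintype.linearIndependent_iff.mp hli (fun i => u (Sum.inl i.1)) (by
        funext i
        have h1 : GQ.mulVec u i = 0 := hu (Sum.inl i)
        simp only [Matrix.mulVec, dotProduct, Fintype.sum_sum_type, Fin.sum_univ_one,
          hlast, mul_zero, add_zero] at h1
        rw [Finset.sum_apply]
        simp only [Pi.smul_apply, smul_eq_mul, Pi.zero_apply]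
        rw [← h1]
        apply Fintype.sum_of_injective (Subtype.val : I → Fin n) Subtype.val_injective
        · intro j hj
          rw [hout j (by simpa using hj), mul_zero]
        · intro j
          rw [mul_comm]; rfl)
      exact fun j hj => this ⟨j, hj⟩
    funext k
    rcases k with j | j
    · by_cases hj : j ∈ I
      · exact hin j hj
      · exact hout j hj
    · obtain rfl : j = 0 := Subsingleton.elim _ _
      exact hlast
  obtain ⟨g, hgsum, hg⟩ := gs_decomp f hp (n + 1) w (by
    refine (Submodule.finrank_le _).trans ?_
    simp)
  have hwA : ∀ i, GQ.mulVec w (Sum.inl i) = 0 := by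
    intro i; rw [hw, hGA, hxA]; simp
  have hwC : ∀ i, 0 ≤ GQ.mulVec w (Sum.inr i) := by
    intro i; rw [hw, hGC]; exact_mod_cast sub_nonneg.mpr (hxC i)
  have hgA : ∀ k i, GQ.mulVec (g k) (Sum.inl i) = 0 := by
    intro k i
    obtain ⟨c, _, h⟩ := (hg k).1 (Sum.inl (Sum.inl i))
    rw [hf1, hf1, hwA, mul_zero] at h
    exact h
  have hgC : ∀ k i, 0 ≤ GQ.mulVec (g k) (Sum.inr i) := by
    intro k i
    obtain ⟨c, hc, h⟩ := (hg k).1 (Sum.inl (Sum.inr i))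
    rw [hf1, hf1] at h
    rw [h]
    exact mul_nonneg hc (hwC i)
  have hgl : ∀ k, g k (Sum.inr 0) ≤ 0 := by
    intro k
    obtain ⟨c, hc, h⟩ := (hg k).1 (Sum.inr (Sum.inr 0))
    rw [hf3, hf3] at h
    rw [h, hw]
    simpa using hc
  have hex : ∀ k, g k ≠ 0 → ∃ z : Fin n ⊕ Fin 1 → ℤ, ∃ μ : ℚ, 0 < μ ∧
      (∀ j, g k j = μ * z j) ∧ ∀ j, |z j| ≤ M := by
    intro k hk
    refine gs_ext m n p r s M G GQ hGQ hr' hs hM I hIs hI (g k) hk (hgA k) ?_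
    intro u h1 h2 h3
    rw [← Submodule.mem_span_singleton]
    apply (hg k).2
    intro i hi
    rcases i with i | i | i
    · exact h1 i hi
    · exact h2 i.1 i.2 hi
    · exact h3 hi
  have hk0 : ∃ k, g k (Sum.inr 0) ≠ 0 := by
    by_contra h
    push Not at h
    have h1 := congrFun hgsum (Sum.inr 0)
    rw [Finset.sum_apply, Finset.sum_eq_zero (fun k _ => h k)] at h1
    simp [hw] at h1
  obtain ⟨k0, hk0⟩ := hk0
  have hM0 : 0 ≤ M := by
    obtain ⟨z, _, _, _, h⟩ := hex k0 (fun h => hk0 (by rw [h]; rfl))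
    exact (abs_nonneg _).trans (h (Sum.inr 0))
  have hex' : ∀ k, ∃ z : Fin n ⊕ Fin 1 → ℤ, ∃ μ : ℚ, 0 < μ ∧
      (∀ j, g k j = μ * z j) ∧ ∀ j, |z j| ≤ M := by
    intro k
    by_cases h : g k = 0
    · exact ⟨0, 1, one_pos, by simp [h], by simpa using hM0⟩
    · exact hex k h
  choose z μ hμ hgz hzM using hex'
  have hzl : ∀ k, z k (Sum.inr 0) ≤ 0 := by
    intro k
    have h1 := hgl k
    rw [hgz] at h1
    have := nonpos_of_mul_nonpos_right h1 (hμ k)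
    exact_mod_cast this
  let φ : Fin (n + 1) → ℤ := fun k => if z k (Sum.inr 0) = 0 then ⌊μ k⌋ else 0
  let ν : Fin (n + 1) → ℚ := fun k => μ k - φ k
  have hν0 : ∀ k, 0 ≤ ν k := by
    intro k
    simp only [ν, φ]
    split_ifs
    · exact sub_nonneg.mpr (Int.floor_le _)
    · simpa using (hμ k).le
  let y : Fin n → ℤ := fun j => x j - ∑ k, φ k * z k (Sum.inl j)
  have hy : Sum.elim (fun j => (y j : ℚ)) (fun _ => -1) = ∑ k, (ν k / μ k) • g k := by
    have hterm : ∀ k l, ν k / μ k * g k l = g k l - φ k * z k l := by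
      intro k l
      have := (hμ k).ne'
      rw [hgz]; simp only [ν]; field_simp
    funext l
    rw [Finset.sum_apply]
    simp only [Pi.smul_apply, smul_eq_mul, hterm]
    rw [Finset.sum_sub_distrib, ← Finset.sum_apply, ← hgsum]
    rcases l with j | j
    · simp [hw, y]
    · obtain rfl : j = 0 := Subsingleton.elim _ _
      rw [Finset.sum_eq_zero]
      · simp [hw]
      · intro k _
        simp only [φ]
        split_ifs with h
        · simp [h]
        · simp
  have hyG : ∀ i, GQ.mulVec (Sum.elim (fun j => (y j : ℚ)) (fun _ => -1)) i
      = ∑ k, (ν k / μ k) * GQ.mulVec (g k) i := by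
    intro i
    rw [hy, Matrix.mulVec_sum, Finset.sum_apply]
    simp [Matrix.mulVec_smul]
  have hsumν : ∑ k, ν k ≤ n + 1 := by
    have hl := congrFun hgsum (Sum.inr 0)
    rw [Finset.sum_apply] at hl
    have h1 : ∑ k, g k (Sum.inr 0) = -1 := by rw [← hl, hw]; rfl
    have h2 : ∀ k, ν k ≤ (if z k (Sum.inr 0) = 0 then 1 else 0) - g k (Sum.inr 0) := by
      intro k
      rw [hgz]
      simp only [ν, φ]
      split_ifs with h
      · rw [h]
        have := Int.lt_floor_add_one (μ k)
        push_cast; linarith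
      · have h3 : z k (Sum.inr 0) ≤ -1 := by have := hzl k; omega
        have h4 : (z k (Sum.inr 0) : ℚ) ≤ -1 := by exact_mod_cast h3
        have := hμ k
        push_cast; nlinarith
    have h3 : ∑ k, (if z k (Sum.inr 0) = 0 then (1 : ℚ) else 0) ≤ n := by
      rw [Fintype.sum_eq_add_sum_compl k0, if_neg]
      · refine (add_le_add_right (Finset.sum_le_card_nsmul _ _ 1 ?_) _).trans ?_
        · intro k _; split_ifs <;> norm_num
        · simp [Finset.card_compl]
      · intro h
        exact hk0 (by rw [hgz, h]; simp)
    have h4 := Finset.sum_le_sum (fun k (_ : k ∈ Finset.univ) => h2 k)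
    rw [Finset.sum_sub_distrib (fun k => if z k (Sum.inr 0) = 0 then (1 : ℚ) else 0), h1] at h4
    linarith
  refine ⟨y, ?_, ?_, ?_⟩
  · funext i
    have h1 := hyG (Sum.inl i)
    rw [hGA, Finset.sum_eq_zero (fun k _ => by rw [hgA, mul_zero])] at h1
    have h2 : A.mulVec y i - b i = 0 := by exact_mod_cast h1
    linarith
  · intro i
    have h1 := hyG (Sum.inr i)
    have h3 : 0 ≤ ∑ k, (ν k / μ k) * GQ.mulVec (g k) (Sum.inr i) :=
      Finset.sum_nonneg (fun k _ => mul_nonneg (div_nonneg (hν0 k) (hμ k).le) (hgC k i))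
    rw [← h1, hGC] at h3
    have h2 : 0 ≤ C.mulVec y i - dvec i := by exact_mod_cast h3
    linarith
  · intro j
    have h1 : (y j : ℚ) = ∑ k, ν k * z k (Sum.inl j) := by
      have := congrFun hy (Sum.inl j)
      rw [Finset.sum_apply] at this
      simp only [Sum.elim_inl, Pi.smul_apply, smul_eq_mul] at this
      rw [this]
      apply Finset.sum_congr rfl
      intro k _
      have := (hμ k).ne'
      rw [hgz]; field_simp
    have hMq : (0 : ℚ) ≤ M := by exact_mod_cast hM0
    have h2 : |(y j : ℚ)| ≤ (n + 1) * M := by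
      rw [h1]
      calc |∑ k, ν k * z k (Sum.inl j)| ≤ ∑ k, |ν k * z k (Sum.inl j)| :=
            Finset.abs_sum_le_sum_abs _ _
        _ ≤ ∑ k, ν k * M := by
            apply Finset.sum_le_sum
            intro k _
            rw [abs_mul, abs_of_nonneg (hν0 k)]
            apply mul_le_mul_of_nonneg_left _ (hν0 k)
            exact_mod_cast hzM k (Sum.inl j)
        _ = (∑ k, ν k) * M := by rw [Finset.sum_mul]
        _ ≤ _ := mul_le_mul_of_nonneg_right hsumν hMq
    exact_mod_cast h2
end

section
/- (Weyl) Any d-dimensional cone generated by a finite set A ⊆ ℚ^d is the intersection of a finite number of closed half-spaces of ℚ^d, where the boundary hyperplane of each of these half-spaces contains d−1 linearly independent vectors from A. -/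
/-- The cone generated by the finite set `A ⊆ ℚ^d`: all non-negative rational
combinations of elements of `A`. -/
def coneOf (d : ℕ) (A : Finset (Fin d → ℚ)) : Set (Fin d → ℚ) :=
  {x | ∃ c : (Fin d → ℚ) → ℚ, (∀ v, 0 ≤ c v) ∧ x = ∑ v ∈ A, c v • v}

open Module in
lemma weyl_insert (d : ℕ) (A : Finset (Fin d → ℚ)) (a : Fin d → ℚ) (ha : a ∉ A) (x : Fin d → ℚ) :
    x ∈ coneOf d (insert a A) ↔ ∃ t : ℚ, 0 ≤ t ∧ x - t • a ∈ coneOf d A := by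
  constructor
  · rintro ⟨c, hc, rfl⟩
    refine ⟨c a, hc a, c, hc, ?_⟩
    rw [Finset.sum_insert ha]; simp
  · rintro ⟨t, ht, c, hc, h⟩
    refine ⟨Function.update c a t, ?_, ?_⟩
    · intro v
      by_cases hv : v = a
      · subst hv; simpa using ht
      · simpa [Function.update_of_ne hv] using hc v
    · rw [Finset.sum_insert ha]
      have : ∑ v ∈ A, Function.update c a t v • v = ∑ v ∈ A, c v • v := by
        refine Finset.sum_congr rfl fun v hv => ?_
        have hne : v ≠ a := by
          rintro rfl; exact ha hv
        rw [Function.update_of_ne hne]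
      rw [this, ← h]; simp

open Module in
lemma weyl_poly (d : ℕ) (A : Finset (Fin d → ℚ)) :
    ∃ F : Finset (Dual ℚ (Fin d → ℚ)), ∀ x, x ∈ coneOf d A ↔ ∀ n ∈ F, 0 ≤ n x := by
  classical
  induction A using Finset.induction_on with
  | empty =>
    refine ⟨(Finset.univ.image fun i => (LinearMap.proj i : Dual ℚ (Fin d → ℚ))) ∪
      (Finset.univ.image fun i => -(LinearMap.proj i : Dual ℚ (Fin d → ℚ))), fun x => ?_⟩
    constructor
    · rintro ⟨c, hc, rfl⟩
      simp
    · intro h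
      refine ⟨0, by simp, ?_⟩
      ext i
      have h1 := h (LinearMap.proj i) (by simp)
      have h2 := h (-LinearMap.proj i) (by simp)
      simp at h1 h2 ⊢
      linarith
  | insert a A ha ih =>
    obtain ⟨F, hF⟩ := ih
    refine ⟨(F.filter fun n => 0 ≤ n a) ∪
      (((F.filter fun n => 0 < n a) ×ˢ (F.filter fun n => n a < 0)).image
        fun p => (p.1 a) • p.2 - (p.2 a) • p.1), fun x => ?_⟩
    rw [weyl_insert d A a ha]
    simp only [hF]
    constructor
    · rintro ⟨t, ht, h⟩ n hn
      simp only [Finset.mem_union, Finset.mem_filter, Finset.mem_image, Finset.mem_product,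
        Prod.exists] at hn
      rcases hn with ⟨hn, h0⟩ | ⟨n, m, ⟨⟨hn, hn0⟩, hm, hm0⟩, rfl⟩
      · have := h n hn
        simp at this
        nlinarith [mul_nonneg ht h0]
      · have h1 := h n hn
        have h2 := h m hm
        simp at h1 h2 ⊢
        nlinarith [mul_nonneg hn0.le (sub_nonneg.2 h2), mul_nonneg (neg_nonneg.2 hm0.le) (sub_nonneg.2 h1)]
    · intro h
      have hpos : ∀ n ∈ F, 0 ≤ n a → 0 ≤ n x := fun n hn h0 => h n (by
        simp only [Finset.mem_union, Finset.mem_filter]; exact Or.inl ⟨hn, h0⟩)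
      have hmix : ∀ n ∈ F, ∀ m ∈ F, 0 < n a → m a < 0 → 0 ≤ n a * m x - m a * n x := by
        intro n hn m hm h1 h2
        have := h ((n a) • m - (m a) • n) (by
          simp only [Finset.mem_union, Finset.mem_filter, Finset.mem_image, Finset.mem_product,
            Prod.exists]
          exact Or.inr ⟨n, m, ⟨⟨hn, h1⟩, hm, h2⟩, rfl⟩)
        simpa using this
      -- lower bound
      let L : Finset ℚ := insert 0 ((F.filter fun n => n a < 0).image fun m => m x / m a)
      have hL : L.Nonempty := Finset.insert_nonempty _ _
      refine ⟨L.max' hL, Finset.le_max' _ _ (Finset.mem_insert_self _ _), fun n hn => ?_⟩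
      have hmem := Finset.max'_mem L hL
      simp only [map_sub, map_smul, smul_eq_mul]
      rcases lt_trichotomy (n a) 0 with h0 | h0 | h0
      · have : n x / n a ≤ L.max' hL := by
          apply Finset.le_max' L
          exact Finset.mem_insert_of_mem
            (Finset.mem_image.2 ⟨n, Finset.mem_filter.2 ⟨hn, h0⟩, rfl⟩)
        rw [div_le_iff_of_neg h0] at this
        linarith
      · rw [h0]; simpa using hpos n hn h0.ge
      · rcases Finset.mem_insert.1 hmem with h1 | h1
        · rw [h1]; simpa using hpos n hn h0.le
        · obtain ⟨m, hm, hme⟩ := Finset.mem_image.1 h1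
          obtain ⟨hm, hm0⟩ := Finset.mem_filter.1 hm
          rw [← hme]
          have := hmix n hn m hm h0 hm0
          have e : n x - m x / m a * n a = (n a * m x - m a * n x) / (- m a) := by
            have hne := hm0.ne
            field_simp; ring
          rw [e]; exact div_nonneg this (by linarith)

lemma weyl_gen_mem (d : ℕ) (A : Finset (Fin d → ℚ)) (a : Fin d → ℚ) (ha : a ∈ A) :
    a ∈ coneOf d A := by
  classical
  refine ⟨fun v => if v = a then 1 else 0, fun v => by dsimp only; split_ifs <;> norm_num, ?_⟩
  simp [ha]

open Module in
lemma weyl_sep (d : ℕ) (A : Finset (Fin d → ℚ))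
    (hspan : Submodule.span ℚ (A : Set (Fin d → ℚ)) = ⊤) (b : Fin d → ℚ) (hb : b ∉ coneOf d A)
    (k : ℕ) (hk : k ≤ d - 1) :
    ∃ c : Dual ℚ (Fin d → ℚ), (∀ a ∈ A, 0 ≤ c a) ∧ c b < 0 ∧
      k ≤ finrank ℚ (Submodule.span ℚ {a | a ∈ A ∧ c a = 0}) := by
  classical
  induction k with
  | zero =>
    obtain ⟨F, hF⟩ := weyl_poly d A
    rw [hF] at hb
    push Not at hb
    obtain ⟨n, hn, hnb⟩ := hb
    exact ⟨n, fun a ha => (hF a).1 (weyl_gen_mem d A a ha) n hn, hnb, Nat.zero_le _⟩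
  | succ k ih =>
    obtain ⟨c, hc, hcb, hck⟩ := ih (by omega)
    set W := Submodule.span ℚ {a | a ∈ A ∧ c a = 0} with hW
    by_cases hlt : k + 1 ≤ finrank ℚ W
    · exact ⟨c, hc, hcb, hlt⟩
    have hW' : W ⊔ Submodule.span ℚ {b} < ⊤ := by
      rw [lt_top_iff_ne_top]
      intro h
      have h1 := Submodule.finrank_add_le_finrank_add_finrank W (Submodule.span ℚ {b})
      have h2 := finrank_span_le_card (R := ℚ) ({b} : Set (Fin d → ℚ))
      rw [h, finrank_top, finrank_fin_fun] at h1
      simp at h2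
      omega
    obtain ⟨u, hu0, hu⟩ := Submodule.exists_le_ker_of_lt_top _ hW'
    have hub : u b = 0 := hu (Submodule.mem_sup_right (Submodule.mem_span_singleton_self b))
    have huW : ∀ w ∈ W, u w = 0 := fun w hw => hu (Submodule.mem_sup_left hw)
    -- some sign of u is negative somewhere
    obtain ⟨u, hub, huW, a, ha, hua⟩ : ∃ u : Dual ℚ (Fin d → ℚ), u b = 0 ∧ (∀ w ∈ W, u w = 0) ∧
        ∃ a ∈ A, u a < 0 := by
      have : ∃ a ∈ A, u a ≠ 0 := by
        by_contra hcon
        push Not at hcon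
        exact hu0 (LinearMap.ext_on hspan (fun a ha => by simpa using hcon a ha))
      obtain ⟨a, ha, hne⟩ := this
      rcases lt_or_gt_of_ne hne with h | h
      · exact ⟨u, hub, huW, a, ha, h⟩
      · exact ⟨-u, by simp [hub], fun w hw => by simp [huW w hw], a, ha, by simpa using h⟩
    obtain ⟨a₀, ha₀, hmin⟩ := Finset.exists_min_image (A.filter fun a => u a < 0)
      (fun a => c a / (- u a)) ⟨a, Finset.mem_filter.2 ⟨ha, hua⟩⟩
    obtain ⟨ha₀, hu₀⟩ := Finset.mem_filter.1 ha₀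
    set t := c a₀ / (- u a₀) with ht
    have ht0 : 0 ≤ t := div_nonneg (hc _ ha₀) (by linarith)
    have hnew : c a₀ + t * u a₀ = 0 := by
      have hne := hu₀.ne
      rw [ht]; field_simp; ring
    refine ⟨c + t • u, ?_, by simpa [hub] using hcb, ?_⟩
    · intro x hx
      simp only [LinearMap.add_apply, LinearMap.smul_apply, smul_eq_mul]
      rcases lt_or_ge (u x) 0 with h | h
      · have := hmin x (Finset.mem_filter.2 ⟨hx, h⟩)
        rw [le_div_iff₀ (by linarith)] at this
        linarith
      · exact add_nonneg (hc x hx) (mul_nonneg ht0 h)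
    · have hlt' : W < Submodule.span ℚ {a | a ∈ A ∧ (c + t • u) a = 0} := by
        refine lt_of_le_of_ne (Submodule.span_mono ?_) ?_
        · rintro x ⟨hx, hx0⟩
          refine ⟨hx, ?_⟩
          have := huW x (Submodule.subset_span ⟨hx, hx0⟩)
          simp [hx0, this]
        · intro h
          have : a₀ ∈ W := by
            rw [h]; exact Submodule.subset_span ⟨ha₀, by simpa using hnew⟩
          exact hu₀.ne (huW _ this)
      have := Submodule.finrank_lt_finrank_of_lt hlt'
      omega

open Module in
lemma weyl_prop (d : ℕ) (A : Finset (Fin d → ℚ))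
    (hspan : Submodule.span ℚ (A : Set (Fin d → ℚ)) = ⊤) (b : Fin d → ℚ)
    (S : Set (Fin d → ℚ)) (hS : d - 1 ≤ finrank ℚ (Submodule.span ℚ S))
    (φ ψ : Dual ℚ (Fin d → ℚ)) (hφA : ∀ a ∈ A, 0 ≤ φ a) (hψA : ∀ a ∈ A, 0 ≤ ψ a)
    (hφS : ∀ s ∈ S, φ s = 0) (hψS : ∀ s ∈ S, ψ s = 0) (hφb : φ b < 0) (hψ : ψ ≠ 0) : ψ b < 0 := by
  by_contra hcon
  push Not at hcon
  have hle : Submodule.span ℚ S ≤ LinearMap.ker φ := Submodule.span_le.2 hφS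
  have hlt : Submodule.span ℚ S < Submodule.span ℚ (insert b S) := by
    refine lt_of_le_of_ne (Submodule.span_mono (Set.subset_insert _ _)) fun h => ?_
    have : b ∈ Submodule.span ℚ S := h ▸ Submodule.subset_span (Set.mem_insert _ _)
    exact hφb.ne (hle this)
  have htop : Submodule.span ℚ (insert b S) = ⊤ := by
    apply Submodule.eq_top_of_finrank_eq
    have h1 := Submodule.finrank_lt_finrank_of_lt hlt
    have h2 := Submodule.finrank_le (Submodule.span ℚ (insert b S))
    rw [finrank_fin_fun] at *
    omega
  have key : (ψ b) • φ = (φ b) • ψ := by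
    refine LinearMap.ext_on htop ?_
    rintro x (rfl | hx)
    · simp [mul_comm]
    · simp [hφS x hx, hψS x hx]
  refine hψ (LinearMap.ext_on hspan fun a ha => ?_)
  have h := congrArg (fun f => f a) key
  simp at h
  have h1 := mul_nonneg hcon (hφA a ha)
  have h2 := hψA a ha
  simp only [LinearMap.zero_apply]
  nlinarith

open Module in
lemma weyl_dual (d : ℕ) (A : Finset (Fin d → ℚ))
    (hspan : Submodule.span ℚ (A : Set (Fin d → ℚ)) = ⊤) :
    ∃ F : Finset (Dual ℚ (Fin d → ℚ)), (∀ n ∈ F, n ≠ 0) ∧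
      (∀ x, x ∈ coneOf d A ↔ ∀ n ∈ F, 0 ≤ n x) ∧
      ∀ n ∈ F, ∃ g : Fin (d - 1) → (Fin d → ℚ),
        (∀ j, g j ∈ A ∧ n (g j) = 0) ∧ LinearIndependent ℚ g := by
  classical
  let P : Finset (Fin d → ℚ) → Dual ℚ (Fin d → ℚ) → Prop := fun S φ =>
    φ ≠ 0 ∧ (∀ a ∈ A, 0 ≤ φ a) ∧ (∀ s ∈ S, φ s = 0) ∧
      d - 1 ≤ finrank ℚ (Submodule.span ℚ (S : Set (Fin d → ℚ)))
  let T := A.powerset.filter fun S => ∃ φ, P S φ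
  have hT : ∀ S : T, ∃ φ, P S φ := fun S => (Finset.mem_filter.1 S.2).2
  choose f hf using hT
  refine ⟨Finset.univ.image f, ?_, ?_, ?_⟩
  · intro n hn
    obtain ⟨S, -, rfl⟩ := Finset.mem_image.1 hn
    exact (hf S).1
  · intro x
    constructor
    · rintro ⟨c, hc, rfl⟩ n hn
      obtain ⟨S, -, rfl⟩ := Finset.mem_image.1 hn
      rw [map_sum]
      refine Finset.sum_nonneg fun v hv => ?_
      rw [map_smul]
      exact mul_nonneg (hc v) ((hf S).2.1 v hv)
    · intro h
      by_contra hx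
      obtain ⟨c, hc, hcx, hck⟩ := weyl_sep d A hspan x hx (d - 1) le_rfl
      have hST : A.filter (fun a => c a = 0) ∈ T := by
        refine Finset.mem_filter.2 ⟨Finset.mem_powerset.2 (Finset.filter_subset _ _), c, ?_, hc, ?_, ?_⟩
        · rintro rfl; simp at hcx
        · intro s hs; exact (Finset.mem_filter.1 hs).2
        · rw [Finset.coe_filter]; exact hck
      obtain ⟨h1, h2, h3, h4⟩ := hf ⟨_, hST⟩
      have := weyl_prop d A hspan x _ h4 c (f ⟨_, hST⟩) hc h2
        (fun s hs => (Finset.mem_filter.1 (Finset.mem_coe.1 hs)).2) h3 hcx h1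
      exact absurd (h _ (Finset.mem_image.2 ⟨⟨_, hST⟩, Finset.mem_univ _, rfl⟩)) (not_le.2 this)
  · intro n hn
    obtain ⟨S, -, rfl⟩ := Finset.mem_image.1 hn
    obtain ⟨h1, h2, h3, h4⟩ := hf S
    obtain ⟨g, hg, -, hli⟩ := Submodule.exists_fun_fin_finrank_span_eq ℚ ((S : Finset (Fin d → ℚ)) : Set (Fin d → ℚ))
    have hSA := Finset.mem_powerset.1 (Finset.mem_filter.1 S.2).1
    exact ⟨fun j => g (Fin.castLE h4 j), fun j => ⟨hSA (hg _), h3 _ (hg _)⟩,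
      hli.comp _ (Fin.castLE_injective h4)⟩

/-- Weyl, Theorem 12: any `d`-dimensional cone generated by
a finite set `A ⊆ ℚ^d` is the intersection of a finite number of closed
half-spaces, where the boundary of each half-space contains `d-1` linearly
independent vectors from `A`. -/
theorem weyl_theorem
    (d : ℕ) (A : Finset (Fin d → ℚ))
    (hspan : Submodule.span ℚ (A : Set (Fin d → ℚ)) = ⊤) :
    ∃ F : Finset (Fin d → ℚ), (∀ nv ∈ F, nv ≠ 0) ∧
      coneOf d A = {x | ∀ nv ∈ F, 0 ≤ ∑ i, nv i * x i} ∧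
      ∀ nv ∈ F, ∃ g : Fin (d - 1) → (Fin d → ℚ),
        (∀ j, g j ∈ A ∧ ∑ i, nv i * g j i = 0) ∧ LinearIndependent ℚ g := by
  classical
  obtain ⟨F, h0, hF, hg⟩ := weyl_dual d A hspan
  let e := dotProductEquiv ℚ (Fin d)
  have he : ∀ n x, ∑ i, (e.symm n) i * x i = n x := by
    intro n x
    have : e (e.symm n) x = n x := by rw [e.apply_symm_apply]
    rw [← this]; rfl
  refine ⟨F.image e.symm, ?_, ?_, ?_⟩
  · intro nv hnv
    obtain ⟨n, hn, rfl⟩ := Finset.mem_image.1 hnv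
    simpa using h0 n hn
  · ext x
    simp only [hF x, Set.mem_ofPred_eq, Finset.forall_mem_image, he]
  · intro nv hnv
    obtain ⟨n, hn, rfl⟩ := Finset.mem_image.1 hnv
    simpa only [he] using hg n hn
end
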